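/- For every T > 1 there exists a constant C₁(T) > 0 such that every point x₀ ∈ ℝⁿ with u(x₀) ≤ T and v(x₀) ≤ T satisfies dist(x₀, {u = v}) ≤ C₁(T); in particular, every point of the set {u ≤ T, v ≤ T} lies within bounded distance of the interface {u = v}. -/

import Mathlib

/-!
The proof measures the solution by averages `P t f` against the heat kernel at time `t`, around an
arbitrary centre (solutions are translated by `tr`, and `P` is always centred at the origin). The basic
quantities are the height `S = P_t (u² + v²)`, the interaction energy `K = P_t (u² v²)`, the energy
`E = P_t (|∇u|² + |∇v|² + u² v²)` and the parabolic frequency `N = 2 t E / S`.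

*Monotonicity.* One has `S' = 2 (E + K)`, and a Pohozaev identity gives `N' ≥ 2 K / S`. Since `u + v`
has linear growth, `N ≤ 1` at every centre and every time (`Sol.NN_le_one`). Hence the height grows
at most linearly up to a factor, and the normalized interaction `t K / S` at a scale is bounded by the
increment of `N` between that scale and its double (`Sol.kk_le`), which makes it summable over
dyadic scales.

*Small scales.* At the critical scale `t S(t) ~ 1` the height is comparable to the square of the value
at the centre. This yields the universal gradient bound `|∇u|² + |∇v|² ≤ C (u² + v²)²`
(`Sol.gr2_add_le`).

*Nondegeneracy.* Where `u` carries most of the height, the equation `Δv = v u²` makes `v` strongly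
subharmonic, so a component carrying a tiny fraction of the height at a large scale would have to grow
faster than `N ≤ 1` permits. Therefore each component carries a fixed fraction of the height at all
large scales (`Sol.nd_large`).

*Balanced centres.* Consequently the mean of the signed height `F = (u² - v²) / √(u² + v²)` changes sign
as the centre moves in a ball of radius `O(√t)`, and it vanishes at some centre (`Sol.balanced`). There
the sharp Gaussian Poincaré inequality for `F` gives `1 - N ≤ C t K / S + 1 / (t S)` (`Sol.gap_le`), which
is summable over dyadic scales. Integrating `(log S)'` along a sequence of balanced centres yields
`S(t) ≥ c t` with `c > 0`, uniformly in the centre (`Sol.lin_lower`).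

*Conclusion.* Suppose `u, v ≤ T` at the centre and `u ≥ v` on a very large ball around it (`Sol.core`).
The mean of `u - v` has derivative `P_t (u v (v - u))`, which is nonpositive up to a tiny error, so it
stays below `T + 1`. The mean `y = P_t v` satisfies `y' = P_t (v u²) ≥ y³ - 1/2`, and a cubic differential
inequality on an interval of fixed length forces `y ≤ 1`. So `P_t (u + v)`, and with it `S(t)`, is bounded
by a constant depending on `T`, which contradicts `S(t) ≥ c t` for `t` large. Hence `u - v` cannot
have a fixed sign on that ball, and the interface meets it.
-/

open MeasureTheory Metric Set
open scoped RealInnerProductSpace ENNReal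

/-- Euclidean space `ℝⁿ`. -/
abbrev Euc (n : ℕ) := EuclideanSpace ℝ (Fin n)

/-- The Laplacian `Δu` of a function `u : ℝⁿ → ℝ`. -/
noncomputable def lap {n : ℕ} (u : Euc n → ℝ) (x : Euc n) : ℝ :=
  ∑ i : Fin n,
    fderiv ℝ (fun y => fderiv ℝ u y (EuclideanSpace.single i 1)) x (EuclideanSpace.single i 1)

/-- The divergence `div Y = Σ_α ∂Y^α/∂x_α` of a vector field `Y`. -/
noncomputable def vdiv {n : ℕ} (Y : Euc n → Euc n) (x : Euc n) : ℝ :=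
  ∑ i : Fin n, fderiv ℝ Y x (EuclideanSpace.single i 1) i

/-- `DY(p,q)(x) = Σ_{α,β} (∂Y^α/∂x_β)(x) p_α q_β`. -/
noncomputable def DYbil {n : ℕ} (Y : Euc n → Euc n) (p q x : Euc n) : ℝ :=
  ∑ α : Fin n, ∑ β : Fin n,
    fderiv ℝ Y x (EuclideanSpace.single β 1) α * p α * q β

/-- The rescaled function `u_κ(x) = R⁻¹ u(x₀ + R x)` (with `κ = R⁴`). -/
noncomputable def resc {n : ℕ} (u : Euc n → ℝ) (x₀ : Euc n) (R : ℝ) (x : Euc n) : ℝ :=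
  R⁻¹ * u (x₀ + R • x)

open Filter Topology

/-! ### Gaussian weights and Gaussian-integrable functions -/

/-- The `i`-th partial derivative, in the form in which it occurs in `lap`. -/
noncomputable def pd {n : ℕ} (i : Fin n) (f : Euc n → ℝ) (x : Euc n) : ℝ :=
  fderiv ℝ f x (EuclideanSpace.single i 1)

/-- The heat kernel `(4πt)^{-n/2} exp(-|y|²/(4t))`. -/
noncomputable def G {n : ℕ} (t : ℝ) (y : Euc n) : ℝ :=
  (4 * Real.pi * t) ^ (-(n / 2 : ℝ)) * Real.exp (-(‖y‖ ^ 2 / (4 * t)))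

/-- The Gaussian average of `f` centred at the origin, at time `t`. -/
noncomputable def P {n : ℕ} (t : ℝ) (f : Euc n → ℝ) : ℝ := ∫ y, f y * G t y

/-- Continuous functions that are integrable against every centred Gaussian weight. -/
def GI {n : ℕ} (f : Euc n → ℝ) : Prop :=
  Continuous f ∧ ∀ a > 0, Integrable (fun y => f y * Real.exp (-(a * ‖y‖ ^ 2)))

section basics
variable {n : ℕ}

lemma lap_eq (u : Euc n → ℝ) (x : Euc n) : lap u x = ∑ i, pd i (pd i u) x := rfl

lemma G_pos {t : ℝ} (ht : 0 < t) (y : Euc n) : 0 < G t y := by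
  unfold G
  positivity

lemma G_cont (t : ℝ) : Continuous (G (n := n) t) := by
  unfold G
  fun_prop

lemma integrable_exp {a : ℝ} (ha : 0 < a) :
    Integrable (fun y : Euc n => Real.exp (-(a * ‖y‖ ^ 2))) := by
  have h := (GaussianFourier.integrable_cexp_neg_mul_sq_norm_add (V := Euc n)
    (b := (a : ℂ)) (by simpa using ha) 0 0).re
  refine h.congr (Eventually.of_forall fun y => ?_)
  simp only [zero_mul, add_zero]
  have : (-(a : ℂ) * (‖y‖ : ℂ) ^ 2) = ((-(a * ‖y‖ ^ 2) : ℝ) : ℂ) := by push_cast; ring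
  rw [this, ← Complex.ofReal_exp]
  rfl

lemma integral_G {t : ℝ} (ht : 0 < t) : ∫ y : Euc n, G t y = 1 := by
  unfold G
  rw [integral_const_mul]
  have h := GaussianFourier.integral_rexp_neg_mul_sq_norm (V := Euc n) (b := 1 / (4 * t))
    (by positivity)
  have e : (fun y : Euc n => Real.exp (-(‖y‖ ^ 2 / (4 * t))))
      = fun y => Real.exp (-(1 / (4 * t)) * ‖y‖ ^ 2) := by
    funext y; congr 1; field_simp
  rw [e, h, finrank_euclideanSpace_fin]
  have : Real.pi / (1 / (4 * t)) = 4 * Real.pi * t := by field_simp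
  rw [this, ← Real.rpow_add (by positivity)]
  simp

lemma G_eq {t : ℝ} (ht : 0 < t) (y : Euc n) :
    G t y = (4 * Real.pi * t) ^ (-(n / 2 : ℝ)) * Real.exp (-(1 / (4 * t) * ‖y‖ ^ 2)) := by
  unfold G
  congr 2
  field_simp

namespace GI
variable {f g : Euc n → ℝ}

lemma integrable (hf : GI f) {t : ℝ} (ht : 0 < t) : Integrable (fun y => f y * G t y) := by
  have h := (hf.2 (1 / (4 * t)) (by positivity)).const_mul ((4 * Real.pi * t) ^ (-(n / 2 : ℝ)))
  refine h.congr (Eventually.of_forall fun y => ?_)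
  simp only [G_eq ht]
  ring

lemma mono (hg : GI g) (hf : Continuous f) (h : ∀ y, |f y| ≤ |g y|) : GI f := by
  refine ⟨hf, fun a ha => ?_⟩
  refine (hg.2 a ha).mono (by fun_prop) (Eventually.of_forall fun y => ?_)
  rw [norm_mul, norm_mul]
  exact mul_le_mul_of_nonneg_right (by simpa using h y) (norm_nonneg _)

lemma add (hf : GI f) (hg : GI g) : GI (fun y => f y + g y) :=
  ⟨hf.1.add hg.1, fun a ha => ((hf.2 a ha).add (hg.2 a ha)).congr
    (Eventually.of_forall fun y => by simp only [Pi.add_apply]; ring)⟩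

lemma sub (hf : GI f) (hg : GI g) : GI (fun y => f y - g y) :=
  ⟨hf.1.sub hg.1, fun a ha => ((hf.2 a ha).sub (hg.2 a ha)).congr
    (Eventually.of_forall fun y => by simp only [Pi.sub_apply]; ring)⟩

lemma const_mul (hf : GI f) (c : ℝ) : GI (fun y => c * f y) :=
  ⟨continuous_const.mul hf.1, fun a ha => by simpa [mul_assoc] using (hf.2 a ha).const_mul c⟩

lemma neg (hf : GI f) : GI (fun y => - f y) := by
  simpa using hf.const_mul (-1)

lemma abs (hf : GI f) : GI (fun y => |f y|) := by
  refine hf.mono hf.1.abs (fun y => by simp)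

lemma const (c : ℝ) : GI (fun _ : Euc n => c) :=
  ⟨continuous_const, fun _ ha => (integrable_exp ha).const_mul c⟩

lemma sum {ι : Type*} (s : Finset ι) {F : ι → Euc n → ℝ} (h : ∀ i ∈ s, GI (F i)) :
    GI (fun y => ∑ i ∈ s, F i y) := by
  classical
  induction s using Finset.induction_on with
  | empty => simpa using const (n := n) 0
  | insert a s ha ih =>
    simp only [Finset.sum_insert ha]
    exact (h a (by simp)).add (ih fun i hi => h i (by simp [hi]))

lemma congr (hf : GI f) (h : ∀ y, f y = g y) : GI g := by
  have : f = g := funext h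
  rwa [← this]

/-- Multiplying by a function of polynomial growth preserves Gaussian integrability. -/
lemma mul_poly (hf : GI f) {q : Euc n → ℝ} (hq : Continuous q) {C : ℝ} {k : ℕ}
    (h : ∀ y, |q y| ≤ C * (1 + ‖y‖) ^ k) : GI (fun y => f y * q y) := by
  refine ⟨hf.1.mul hq, fun a ha => ?_⟩
  -- `(1+r)^k exp(-a r²/2)` is bounded
  have hb : ∃ M, ∀ r : ℝ, 0 ≤ r → (1 + r) ^ k * Real.exp (-(a / 2 * r ^ 2)) ≤ M := by
    refine ⟨(k.factorial : ℝ) * Real.exp (1 + 1 / (2 * a)), fun r hr => ?_⟩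
    have h1 : (1 + r) ^ k ≤ k.factorial * Real.exp (1 + r) := by
      have := Real.pow_div_factorial_le_exp (1 + r) (by linarith) k
      rwa [div_le_iff₀ (by positivity), mul_comm] at this
    calc (1 + r) ^ k * Real.exp (-(a / 2 * r ^ 2))
        ≤ (k.factorial * Real.exp (1 + r)) * Real.exp (-(a / 2 * r ^ 2)) := by gcongr
      _ = k.factorial * Real.exp (1 + r - a / 2 * r ^ 2) := by
          rw [mul_assoc, ← Real.exp_add]; ring_nf
      _ ≤ _ := by
          gcongr
          have : 0 ≤ (a * r - 1) ^ 2 / (2 * a) := by positivity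
          have e : (a * r - 1) ^ 2 / (2 * a) = a / 2 * r ^ 2 - r + 1 / (2 * a) := by
            field_simp; ring
          linarith
  obtain ⟨M, hM⟩ := hb
  have hC : 0 ≤ C := by
    have := (abs_nonneg _).trans (h 0)
    simpa using this
  refine ((hf.2 (a / 2) (by positivity)).const_mul (C * M)).mono
    (by have := hf.1; fun_prop) (Eventually.of_forall fun y => ?_)
  have e : Real.exp (-(a * ‖y‖ ^ 2))
      = Real.exp (-(a / 2 * ‖y‖ ^ 2)) * Real.exp (-(a / 2 * ‖y‖ ^ 2)) := by
    rw [← Real.exp_add]; ring_nf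
  have hMn : 0 ≤ M := le_trans (by positivity) (hM 0 le_rfl)
  rw [e]
  simp only [norm_mul, Real.norm_eq_abs, abs_of_nonneg hC, abs_of_nonneg hMn, Real.abs_exp]
  have := hM ‖y‖ (norm_nonneg _)
  calc |f y| * |q y| * (Real.exp (-(a / 2 * ‖y‖ ^ 2)) * Real.exp (-(a / 2 * ‖y‖ ^ 2)))
      ≤ |f y| * (C * (1 + ‖y‖) ^ k)
        * (Real.exp (-(a / 2 * ‖y‖ ^ 2)) * Real.exp (-(a / 2 * ‖y‖ ^ 2))) := by
        gcongr; exact h y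
    _ = |f y| * C * ((1 + ‖y‖) ^ k * Real.exp (-(a / 2 * ‖y‖ ^ 2)))
        * Real.exp (-(a / 2 * ‖y‖ ^ 2)) := by ring
    _ ≤ |f y| * C * M * Real.exp (-(a / 2 * ‖y‖ ^ 2)) := by gcongr
    _ = _ := by ring

lemma of_growth {q : Euc n → ℝ} (hq : Continuous q) {C : ℝ} {k : ℕ}
    (h : ∀ y, |q y| ≤ C * (1 + ‖y‖) ^ k) : GI q := by
  simpa using (const (n := n) 1).mul_poly hq h

lemma mul_coord (hf : GI f) (i : Fin n) : GI (fun y => f y * y i) := by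
  refine hf.mul_poly (C := 1) (k := 1) (by fun_prop) fun y => ?_
  have := PiLp.norm_apply_le y i
  simp only [Real.norm_eq_abs] at this
  linarith

lemma mul_normsq (hf : GI f) : GI (fun y => f y * ‖y‖ ^ 2) := by
  refine hf.mul_poly (C := 1) (k := 2) (by fun_prop) fun y => ?_
  rw [abs_of_nonneg (by positivity), one_mul]
  gcongr
  linarith

/-- Products of functions with Gaussian-integrable squares. -/
lemma mul_of_sq (hf : Continuous f) (hg : Continuous g) (hf2 : GI (fun y => f y ^ 2))
    (hg2 : GI (fun y => g y ^ 2)) : GI (fun y => f y * g y) := by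
  refine (hf2.add hg2).mono (hf.mul hg) fun y => ?_
  rw [abs_mul, abs_of_nonneg (by positivity : 0 ≤ f y ^ 2 + g y ^ 2)]
  nlinarith [sq_nonneg (|f y| - |g y|), sq_abs (f y), sq_abs (g y)]

lemma of_sq (hf : Continuous f) (hf2 : GI (fun y => f y ^ 2)) : GI f := by
  simpa using mul_of_sq hf (continuous_const (y := (1 : ℝ))) hf2 (by simpa using const (n := n) 1)

/-- Translation invariance. -/
lemma tr (hf : GI f) (x : Euc n) : GI (fun y => f (x + y)) := by
  refine ⟨hf.1.comp (by fun_prop), fun a ha => ?_⟩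
  have h := ((hf.2 (a / 2) (by positivity)).const_mul (Real.exp (a * ‖x‖ ^ 2))).comp_add_left x
  refine h.mono (by have := hf.1; fun_prop) (Eventually.of_forall fun y => ?_)
  simp only [norm_mul, Real.norm_eq_abs, Real.abs_exp]
  rw [mul_comm (Real.exp _), mul_assoc, ← Real.exp_add]
  gcongr
  have h1 : ‖x + y‖ ≤ ‖x‖ + ‖y‖ := norm_add_le _ _
  nlinarith [norm_nonneg (x + y), norm_nonneg x, norm_nonneg y, sq_nonneg (‖x‖ - ‖y‖),
    mul_le_mul h1 h1 (norm_nonneg _) (by positivity)]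

end GI

lemma P_add {f g : Euc n → ℝ} (hf : GI f) (hg : GI g) {t : ℝ} (ht : 0 < t) :
    P t (fun y => f y + g y) = P t f + P t g := by
  unfold P
  rw [← integral_add (hf.integrable ht) (hg.integrable ht)]
  simp [add_mul]

lemma P_sub {f g : Euc n → ℝ} (hf : GI f) (hg : GI g) {t : ℝ} (ht : 0 < t) :
    P t (fun y => f y - g y) = P t f - P t g := by
  unfold P
  rw [← integral_sub (hf.integrable ht) (hg.integrable ht)]
  simp [sub_mul]

lemma P_const_mul (t c : ℝ) (f : Euc n → ℝ) : P t (fun y => c * f y) = c * P t f := by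
  unfold P
  rw [← integral_const_mul]
  simp [mul_assoc]

lemma P_const {t : ℝ} (ht : 0 < t) (c : ℝ) : P t (fun _ : Euc n => c) = c := by
  unfold P
  rw [integral_const_mul, integral_G ht, mul_one]

lemma P_mono {f g : Euc n → ℝ} (hf : GI f) (hg : GI g) {t : ℝ} (ht : 0 < t)
    (h : ∀ y, f y ≤ g y) : P t f ≤ P t g := by
  unfold P
  exact integral_mono (hf.integrable ht) (hg.integrable ht) fun y =>
    mul_le_mul_of_nonneg_right (h y) (G_pos ht y).le

lemma P_nonneg {f : Euc n → ℝ} {t : ℝ} (ht : 0 < t) (h : ∀ y, 0 ≤ f y) : 0 ≤ P t f :=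
  integral_nonneg fun y => mul_nonneg (h y) (G_pos ht y).le

lemma P_pos {f : Euc n → ℝ} (hf : GI f) {t : ℝ} (ht : 0 < t) (h : ∀ y, 0 < f y) : 0 < P t f := by
  unfold P
  refine (integral_pos_iff_support_of_nonneg (fun y => (mul_pos (h y) (G_pos ht y)).le)
    (hf.integrable ht)).2 ?_
  have : Function.support (fun y => f y * G t y) = univ := by
    ext y
    simpa using And.intro (h y).ne' (G_pos ht y).ne'
  rw [this]
  exact isOpen_univ.measure_pos _ univ_nonempty

/-- Cauchy–Schwarz for Gaussian averages. -/
lemma P_cs {f g : Euc n → ℝ} (hf : Continuous f) (hg : Continuous g) (hf2 : GI (fun y => f y ^ 2))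
    (hg2 : GI (fun y => g y ^ 2)) {t : ℝ} (ht : 0 < t) :
    P t (fun y => f y * g y) ^ 2 ≤ P t (fun y => f y ^ 2) * P t (fun y => g y ^ 2) := by
  have hfg := GI.mul_of_sq hf hg hf2 hg2
  have key : ∀ r : ℝ, 0 ≤ P t (fun y => f y ^ 2) * (r * r)
      + (2 * P t (fun y => f y * g y)) * r + P t (fun y => g y ^ 2) := by
    intro r
    have h0 : 0 ≤ P t (fun y => (r * f y + g y) ^ 2) := P_nonneg ht fun y => sq_nonneg _
    have e : (fun y => (r * f y + g y) ^ 2)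
        = fun y => (r * r * f y ^ 2 + 2 * r * (f y * g y)) + g y ^ 2 := by
      funext y; ring
    rw [e, P_add ((hf2.const_mul _).add (hfg.const_mul _)) hg2 ht,
      P_add (hf2.const_mul _) (hfg.const_mul _) ht, P_const_mul, P_const_mul] at h0
    linarith
  have := discrim_le_zero key
  unfold discrim at this
  nlinarith

/-! ### Time derivative and initial trace of Gaussian averages -/

lemma G_hasDerivAt {t : ℝ} (ht : 0 < t) (y : Euc n) :
    HasDerivAt (fun s => G s y) ((‖y‖ ^ 2 / (4 * t ^ 2) - n / (2 * t)) * G t y) t := by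
  unfold G
  have h1 : HasDerivAt (fun s : ℝ => 4 * Real.pi * s) (4 * Real.pi) t := by
    simpa using (hasDerivAt_id t).const_mul (4 * Real.pi)
  have h2 := h1.rpow_const (p := -(n / 2 : ℝ)) (Or.inl (by positivity))
  have h3 : HasDerivAt (fun s : ℝ => -(‖y‖ ^ 2 / (4 * s))) (‖y‖ ^ 2 / (4 * t ^ 2)) t := by
    have := ((hasDerivAt_inv ht.ne').const_mul (-(‖y‖ ^ 2 / 4)))
    convert! this using 1
    · funext s
      by_cases hs : s = 0
      · simp [hs]
      · field_simp
    · field_simp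
  have h4 := h2.mul h3.exp
  convert! h4 using 1
  have : (4 * Real.pi * t) ^ (-(n / 2 : ℝ) - 1) = (4 * Real.pi * t) ^ (-(n / 2 : ℝ)) / (4 * Real.pi * t) := by
    rw [Real.rpow_sub_one (by positivity)]
  rw [this]
  field_simp
  ring

lemma P_hasDerivAt_weight {f : Euc n → ℝ} (hf : GI f) {t : ℝ} (ht : 0 < t) :
    HasDerivAt (fun s => P s f) (P t (fun y => f y * (‖y‖ ^ 2 / (4 * t ^ 2) - n / (2 * t)))) t := by
  unfold P
  -- for `s ∈ (t/2, 2t)` the differentiated integrand is dominated using the weight at time `2t`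
  let b : Euc n → ℝ := fun y => (|f y| * (‖y‖ ^ 2 / t ^ 2 + n / t))
    * (4 ^ (n / 2 : ℝ) * G (2 * t) y)
  have hGI : GI (fun y => |f y| * (‖y‖ ^ 2 / t ^ 2 + n / t)) := by
    refine ((hf.abs.mul_normsq.const_mul (1 / t ^ 2)).add (hf.abs.const_mul (n / t))).congr
      fun y => ?_
    ring
  have hb : Integrable b := by
    refine ((hGI.integrable (t := 2 * t) (by positivity)).const_mul (4 ^ (n / 2 : ℝ))).congr
      (Eventually.of_forall fun y => ?_)
    simp only [b]; ring
  have hfc := hf.1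
  have hGc := fun s => G_cont (n := n) s
  have key := hasDerivAt_integral_of_dominated_loc_of_deriv_le (μ := volume)
    (F := fun s y => f y * G s y) (x₀ := t) (s := Ioo (t / 2) (2 * t)) (bound := b)
    (F' := fun s y => f y * ((‖y‖ ^ 2 / (4 * s ^ 2) - n / (2 * s)) * G s y))
    (Ioo_mem_nhds (by linarith) (by linarith))
    (Eventually.of_forall fun s => (hfc.mul (hGc s)).aestronglyMeasurable)
    (hf.integrable ht) ?_ ?_ hb ?_
  · refine key.2.congr_deriv (integral_congr_ae (Eventually.of_forall fun y => ?_))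
    simp only []
    ring
  · have := hGc t
    exact Continuous.aestronglyMeasurable (by fun_prop)
  · refine Eventually.of_forall fun y s hs => ?_
    have hs0 : 0 < s := lt_trans (by positivity) hs.1
    simp only [norm_mul, Real.norm_eq_abs, b]
    rw [abs_of_pos (G_pos hs0 y), mul_assoc]
    refine mul_le_mul_of_nonneg_left ?_ (abs_nonneg _)
    have h1 : |‖y‖ ^ 2 / (4 * s ^ 2) - n / (2 * s)| ≤ ‖y‖ ^ 2 / t ^ 2 + n / t := by
      have a1 : ‖y‖ ^ 2 / (4 * s ^ 2) ≤ ‖y‖ ^ 2 / t ^ 2 := by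
        gcongr; nlinarith [hs.1]
      have a2 : (n : ℝ) / (2 * s) ≤ n / t := by
        gcongr; linarith [hs.1]
      have a3 : 0 ≤ ‖y‖ ^ 2 / (4 * s ^ 2) := by positivity
      have a4 : 0 ≤ (n : ℝ) / (2 * s) := by positivity
      rw [abs_le]
      constructor <;> linarith
    have h2 : G s y ≤ 4 ^ (n / 2 : ℝ) * G (2 * t) y := by
      unfold G
      rw [← mul_assoc]
      have e : (4 : ℝ) ^ (n / 2 : ℝ) * (4 * Real.pi * (2 * t)) ^ (-(n / 2 : ℝ))
          = (4 * Real.pi * (t / 2)) ^ (-(n / 2 : ℝ)) := by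
        rw [show 4 * Real.pi * (2 * t) = 4 * (4 * Real.pi * (t / 2)) by ring,
          Real.mul_rpow (by positivity) (by positivity), ← mul_assoc,
          ← Real.rpow_add (by norm_num)]
        simp
      rw [e]
      gcongr ?_ * ?_
      · exact Real.rpow_le_rpow_of_nonpos (by positivity) (by gcongr; exact hs.1.le)
          (by simp; positivity)
      · apply Real.exp_le_exp.2
        have := hs.2
        gcongr
    exact mul_le_mul h1 h2 (G_pos hs0 y).le (by positivity)
  · refine Eventually.of_forall fun y s hs => ?_
    exact (G_hasDerivAt (lt_trans (by positivity) hs.1) y).const_mul (f y)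

end basics

section tools
variable {n : ℕ}

/-- Gaussian averages converge to the value at the centre as `t → 0⁺`. -/
lemma P_tendsto {f : Euc n → ℝ} (hf : GI f) :
    Tendsto (fun t => P t f) (𝓝[>] 0) (𝓝 (f 0)) := by
  let g : Euc n → ℝ := fun y => f y * Real.exp (-(1 * ‖y‖ ^ 2))
  have hg : Integrable g := hf.2 1 one_pos
  have hgc : Continuous g := by have := hf.1; simp only [g]; fun_prop
  have hφ : Tendsto (fun x : Euc n => ‖x‖ ^ Module.finrank ℝ (Euc n) * G 1 x)
      (Bornology.cobounded (Euc n)) (𝓝 0) := by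
    rw [finrank_euclideanSpace_fin]
    have h1 : Tendsto (fun r : ℝ => (4 * Real.pi * 1) ^ (-(n / 2 : ℝ)) * (r ^ n * Real.exp (-r)))
        atTop (𝓝 0) := by
      simpa using (Real.tendsto_pow_mul_exp_neg_atTop_nhds_zero n).const_mul
        ((4 * Real.pi * 1) ^ (-(n / 2 : ℝ)))
    have h2 : Tendsto (fun r : ℝ => r ^ n * ((4 * Real.pi * 1) ^ (-(n / 2 : ℝ))
        * Real.exp (-(r ^ 2 / (4 * 1))))) atTop (𝓝 0) := by
      refine squeeze_zero' (f := _) (g := _) ?_ ?_ h1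
      · filter_upwards [eventually_ge_atTop 0] with r hr
        positivity
      · filter_upwards [eventually_ge_atTop 4] with r hr
        have : Real.exp (-(r ^ 2 / (4 * 1))) ≤ Real.exp (-r) :=
          Real.exp_le_exp.2 (by nlinarith)
        calc _ = (4 * Real.pi * 1) ^ (-(n / 2 : ℝ)) * (r ^ n * Real.exp (-(r ^ 2 / (4 * 1)))) := by
              ring
          _ ≤ _ := by gcongr
    exact h2.comp tendsto_norm_cobounded_atTop
  have key := tendsto_integral_comp_smul_smul_of_integrable' (μ := volume)
    (φ := G (n := n) 1) (x₀ := 0) (fun x => (G_pos one_pos x).le) (integral_G one_pos) hφ hg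
    hgc.continuousAt
  have hg0 : g 0 = f 0 := by simp [g]
  rw [hg0] at key
  -- the time `t` average against `f` is the time `t / (1 - 4t)` average against `g`, renormalised
  have hc : Tendsto (fun t : ℝ => Real.sqrt ((1 - 4 * t) / t)) (𝓝[>] 0) atTop := by
    refine Real.tendsto_sqrt_atTop.comp ?_
    have : Tendsto (fun t : ℝ => t⁻¹ + (-4)) (𝓝[>] 0) atTop :=
      tendsto_atTop_add_const_right _ _ tendsto_inv_nhdsGT_zero
    refine this.congr' ?_
    filter_upwards [self_mem_nhdsWithin] with t ht
    have : t ≠ 0 := ne_of_gt ht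
    field_simp
    ring
  have k2 := key.comp hc
  have hm : Tendsto (fun t : ℝ => (1 - 4 * t) ^ (-(n / 2 : ℝ))) (𝓝[>] 0) (𝓝 1) := by
    have : ContinuousAt (fun t : ℝ => (1 - 4 * t) ^ (-(n / 2 : ℝ))) 0 := by
      refine ContinuousAt.rpow_const (by fun_prop) (Or.inl (by norm_num))
    have h := this.tendsto.mono_left (nhdsWithin_le_nhds (s := Ioi 0))
    simpa using h
  have k3 := hm.mul k2
  rw [one_mul] at k3
  refine k3.congr' ?_
  have h14 : ∀ᶠ t : ℝ in 𝓝[>] 0, t < 1 / 4 :=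
    (eventually_lt_nhds (by norm_num : (0 : ℝ) < 1 / 4)).filter_mono nhdsWithin_le_nhds
  filter_upwards [self_mem_nhdsWithin, h14] with t ht ht4
  have ht : 0 < t := ht
  have hp : 0 < 1 - 4 * t := by linarith
  simp only [Function.comp]
  rw [← integral_const_mul]
  unfold P
  refine integral_congr_ae (Eventually.of_forall fun y => ?_)
  simp only [smul_eq_mul, g, G, finrank_euclideanSpace_fin, zero_sub, smul_neg, norm_neg, norm_smul,
    Real.norm_eq_abs, abs_of_nonneg (Real.sqrt_nonneg _), mul_pow,
    Real.sq_sqrt (div_pos hp ht).le]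
  have e1 : Real.sqrt ((1 - 4 * t) / t) ^ n = (1 - 4 * t) ^ (n / 2 : ℝ) * t ^ (-(n / 2 : ℝ)) := by
    rw [Real.sqrt_eq_rpow, ← Real.rpow_natCast, ← Real.rpow_mul (div_pos hp ht).le,
      Real.div_rpow hp.le ht.le, Real.rpow_neg ht.le]
    rw [show (1 / 2 * (n : ℝ)) = n / 2 by ring]
    field_simp
  rw [e1, Real.mul_rpow (by positivity) ht.le, mul_one]
  have e2 : (1 - 4 * t) ^ (-(n / 2 : ℝ)) * (1 - 4 * t) ^ (n / 2 : ℝ) = 1 := by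
    rw [← Real.rpow_add hp]; simp
  have e3 : Real.exp (-((1 - 4 * t) / t * ‖y‖ ^ 2 / (4 * 1))) * Real.exp (-(1 * ‖y‖ ^ 2))
      = Real.exp (-(‖y‖ ^ 2 / (4 * t))) := by
    rw [← Real.exp_add]; congr 1; field_simp; ring
  calc _ = ((1 - 4 * t) ^ (-(n / 2 : ℝ)) * (1 - 4 * t) ^ (n / 2 : ℝ)) * (t ^ (-(n / 2 : ℝ))
        * ((4 * Real.pi) ^ (-(n / 2 : ℝ)))) * f y
        * (Real.exp (-((1 - 4 * t) / t * ‖y‖ ^ 2 / (4 * 1))) * Real.exp (-(1 * ‖y‖ ^ 2))) := by ring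
    _ = _ := by rw [e2, e3]; ring

/-! ### Partial derivatives and the divergence theorem -/

lemma pd_contDiff {f : Euc n → ℝ} {m : ℕ} (hf : ContDiff ℝ (m + 1 : ℕ) f) (i : Fin n) :
    ContDiff ℝ m (pd i f) := by
  unfold pd
  have : ContDiff ℝ m (fderiv ℝ f) := hf.fderiv_right (by norm_cast)
  exact this.clm_apply contDiff_const

lemma pd_cont {f : Euc n → ℝ} (hf : ContDiff ℝ 1 f) (i : Fin n) : Continuous (pd i f) :=
  (pd_contDiff (m := 0) (by simpa using hf) i).continuous

lemma pd_mul {f g : Euc n → ℝ} {x : Euc n} (hf : DifferentiableAt ℝ f x)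
    (hg : DifferentiableAt ℝ g x) (i : Fin n) :
    pd i (fun y => f y * g y) x = pd i f x * g x + f x * pd i g x := by
  unfold pd
  rw [fderiv_fun_mul hf hg]
  simp
  ring

lemma pd_add {f g : Euc n → ℝ} {x : Euc n} (hf : DifferentiableAt ℝ f x)
    (hg : DifferentiableAt ℝ g x) (i : Fin n) :
    pd i (fun y => f y + g y) x = pd i f x + pd i g x := by
  unfold pd
  rw [fderiv_fun_add hf hg]
  simp

lemma pd_sub {f g : Euc n → ℝ} {x : Euc n} (hf : DifferentiableAt ℝ f x)
    (hg : DifferentiableAt ℝ g x) (i : Fin n) :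
    pd i (fun y => f y - g y) x = pd i f x - pd i g x := by
  unfold pd
  rw [fderiv_fun_sub hf hg]
  simp

lemma pd_const_mul {f : Euc n → ℝ} {x : Euc n} (c : ℝ) (hf : DifferentiableAt ℝ f x) (i : Fin n) :
    pd i (fun y => c * f y) x = c * pd i f x := by
  unfold pd
  rw [fderiv_const_mul hf]
  simp

lemma pd_sum {ι : Type*} (s : Finset ι) {F : ι → Euc n → ℝ} {x : Euc n}
    (h : ∀ j ∈ s, DifferentiableAt ℝ (F j) x) (i : Fin n) :
    pd i (fun y => ∑ j ∈ s, F j y) x = ∑ j ∈ s, pd i (F j) x := by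
  unfold pd
  rw [fderiv_fun_sum h]
  simp

lemma coord_hasFDerivAt (j : Fin n) (x : Euc n) :
    HasFDerivAt (fun y : Euc n => y j) (EuclideanSpace.proj j : Euc n →L[ℝ] ℝ) x :=
  (EuclideanSpace.proj j : Euc n →L[ℝ] ℝ).hasFDerivAt

lemma pd_coord (i j : Fin n) (x : Euc n) :
    pd i (fun y : Euc n => y j) x = if i = j then 1 else 0 := by
  unfold pd
  rw [(coord_hasFDerivAt j x).fderiv]
  simp [eq_comm]

lemma pd_sq {f : Euc n → ℝ} {x : Euc n} (hf : DifferentiableAt ℝ f x) (i : Fin n) :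
    pd i (fun y => f y ^ 2) x = 2 * f x * pd i f x := by
  have : (fun y => f y ^ 2) = fun y => f y * f y := by funext y; ring
  rw [this, pd_mul hf hf]
  ring

lemma pd_comm {f : Euc n → ℝ} (hf : ContDiff ℝ 2 f) (i j : Fin n) (x : Euc n) :
    pd i (pd j f) x = pd j (pd i f) x := by
  have hs : IsSymmSndFDerivAt ℝ f x := hf.contDiffAt.isSymmSndFDerivAt (by simp)
  have hd : DifferentiableAt ℝ (fderiv ℝ f) x :=
    (hf.fderiv_right (m := 1) (by norm_num)).differentiable (by norm_num) x
  have e : ∀ a b : Fin n, pd a (pd b f) x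
      = fderiv ℝ (fderiv ℝ f) x (EuclideanSpace.single a 1) (EuclideanSpace.single b 1) := by
    intro a b
    unfold pd
    rw [fderiv_clm_apply hd (differentiableAt_const _)]
    simp
  rw [e, e]
  exact hs _ _

lemma pd_tr {f : Euc n → ℝ} (x y : Euc n) (i : Fin n) :
    pd i (fun z => f (x + z)) y = pd i f (x + y) := by
  unfold pd
  rw [fderiv_comp_add_left]

/-- The divergence theorem on the whole space for integrable fields with integrable divergence. -/
lemma integral_div_eq_zero {W : Fin n → Euc n → ℝ} (hW : ∀ i, ContDiff ℝ 1 (W i))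
    (hi : ∀ i, Integrable (W i)) (hd : Integrable (fun x => ∑ i, pd i (W i) x)) :
    ∫ x, ∑ i, pd i (W i) x = 0 := by
  let χ : ContDiffBump (0 : Euc n) := ⟨1, 2, one_pos, one_lt_two⟩
  let X : ℕ → Euc n → ℝ := fun k x => χ ((k + 1 : ℝ)⁻¹ • x)
  have hχ : ContDiff ℝ 1 (χ : Euc n → ℝ) := χ.contDiff
  have hX : ∀ k, ContDiff ℝ 1 (X k) := fun k => hχ.comp (by fun_prop)
  have hXs : ∀ k, HasCompactSupport (X k) := fun k =>
    χ.hasCompactSupport.comp_smul (by positivity)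
  have hXpd : ∀ k i x, pd i (X k) x = (k + 1 : ℝ)⁻¹ * pd i χ ((k + 1 : ℝ)⁻¹ • x) := by
    intro k i x
    unfold pd
    simp only [X]
    rw [fderiv_comp_smul]
    simp
  have hM : ∃ M, ∀ i x, |pd i (χ : Euc n → ℝ) x| ≤ M := by
    have : ∀ i, ∃ M, ∀ x, |pd i (χ : Euc n → ℝ) x| ≤ M := by
      intro i
      have hc : HasCompactSupport (pd i (χ : Euc n → ℝ)) := χ.hasCompactSupport.fderiv_apply ℝ _
      obtain ⟨M, hM⟩ := hc.exists_bound_of_continuous (pd_cont hχ i)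
      exact ⟨M, hM⟩
    choose M hM using this
    refine ⟨∑ i, |M i|, fun i x => (hM i x).trans ((le_abs_self _).trans ?_)⟩
    exact Finset.single_le_sum (f := fun i => |M i|) (fun _ _ => abs_nonneg _) (Finset.mem_univ i)
  obtain ⟨M, hM⟩ := hM
  have hXb : ∀ k i x, |pd i (X k) x| ≤ (k + 1 : ℝ)⁻¹ * M := by
    intro k i x
    rw [hXpd, abs_mul, abs_of_pos (by positivity)]
    gcongr
    exact hM _ _
  have hint1 : ∀ k i, Integrable (fun x => pd i (X k) x * W i x) := fun k i =>
    (hi i).bdd_mul (pd_cont (hX k) i).aestronglyMeasurable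
      (Eventually.of_forall fun x => by simpa using hXb k i x)
  have hint2 : ∀ k i, Integrable (fun x => X k x * pd i (W i) x) := fun k i =>
    (((hX k).continuous.mul (pd_cont (hW i) i))).integrable_of_hasCompactSupport
      (hXs k).mul_right
  have hint3 : ∀ k i, Integrable (fun x => X k x * W i x) := fun k i =>
    (((hX k).continuous.mul (hW i).continuous)).integrable_of_hasCompactSupport
      (hXs k).mul_right
  have hibp : ∀ k, ∫ x, X k x * ∑ i, pd i (W i) x = - ∑ i, ∫ x, pd i (X k) x * W i x := by
    intro k
    simp_rw [Finset.mul_sum]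
    rw [integral_finsetSum _ fun i _ => hint2 k i, ← Finset.sum_neg_distrib]
    refine Finset.sum_congr rfl fun i _ => ?_
    exact integral_mul_fderiv_eq_neg_fderiv_mul_of_integrable (hint1 k i) (hint2 k i) (hint3 k i)
      (fun x _ => (hX k).differentiable (by norm_num) x)
      (fun x _ => (hW i).differentiable (by norm_num) x)
  have hk : Tendsto (fun k : ℕ => ((k : ℝ) + 1)⁻¹) atTop (𝓝 0) := by
    simpa using tendsto_one_div_add_atTop_nhds_zero_nat (𝕜 := ℝ)
  have lim1 : Tendsto (fun k => ∫ x, X k x * ∑ i, pd i (W i) x) atTop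
      (𝓝 (∫ x, ∑ i, pd i (W i) x)) := by
    refine tendsto_integral_of_dominated_convergence (fun x => |∑ i, pd i (W i) x|) ?_ hd.abs ?_ ?_
    · intro k
      exact (hX k).continuous.aestronglyMeasurable.mul hd.aestronglyMeasurable
    · intro k
      refine Eventually.of_forall fun x => ?_
      rw [norm_mul, Real.norm_eq_abs, Real.norm_eq_abs, abs_of_nonneg χ.nonneg]
      exact mul_le_of_le_one_left (abs_nonneg _) χ.le_one
    · refine Eventually.of_forall fun x => ?_
      refine tendsto_const_nhds.congr' ?_
      have hx : Tendsto (fun k : ℕ => ((k : ℝ) + 1)⁻¹ • x) atTop (𝓝 0) := by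
        simpa using hk.smul_const x
      have : ∀ᶠ y in 𝓝 (0 : Euc n), χ y = 1 := χ.eventuallyEq_one
      filter_upwards [hx.eventually this] with k hk1
      simp only [X, hk1, one_mul]
  have lim2 : Tendsto (fun k => ∫ x, X k x * ∑ i, pd i (W i) x) atTop (𝓝 0) := by
    simp_rw [hibp]
    have : ∀ i, Tendsto (fun k => ∫ x, pd i (X k) x * W i x) atTop (𝓝 0) := by
      intro i
      have hz : Tendsto (fun k : ℕ => ((k : ℝ) + 1)⁻¹ * (M * ∫ x, |W i x|)) atTop (𝓝 0) := by
        simpa using hk.mul_const (M * ∫ x, |W i x|)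
      refine squeeze_zero_norm (fun k => ?_) hz
      rw [← mul_assoc, ← integral_const_mul]
      refine norm_integral_le_of_norm_le ((hi i).abs.const_mul _) (Eventually.of_forall fun x => ?_)
      rw [norm_mul]
      exact mul_le_mul_of_nonneg_right (hXb k i x) (abs_nonneg _)
    simpa using (tendsto_finsetSum Finset.univ fun i _ => this i).neg
  exact tendsto_nhds_unique lim1 lim2

lemma G_contDiff (t : ℝ) : ContDiff ℝ 1 (G (n := n) t) := by
  unfold G
  have : ContDiff ℝ 1 (fun y : Euc n => ‖y‖ ^ 2) := contDiff_norm_sq ℝ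
  fun_prop

lemma pd_G {t : ℝ} (i : Fin n) (y : Euc n) : pd i (G t) y = -(y i / (2 * t)) * G t y := by
  unfold pd G
  have h0 : HasFDerivAt (fun y : Euc n => ‖y‖ ^ 2) (2 • (innerSL ℝ y)) y := by
    simpa using (hasStrictFDerivAt_norm_sq y).hasFDerivAt
  have h1 : HasFDerivAt (fun y : Euc n => -(‖y‖ ^ 2 / (4 * t)))
      (-((4 * t)⁻¹ • (2 • (innerSL ℝ y)))) y := by
    have := (h0.const_mul (4 * t)⁻¹).neg
    refine this.congr_of_eventuallyEq (Eventually.of_forall fun z => ?_)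
    simp only [Pi.neg_apply]
    ring
  have h2 := (h1.exp).const_mul ((4 * Real.pi * t) ^ (-(n / 2 : ℝ)))
  rw [h2.fderiv]
  simp [EuclideanSpace.inner_single_right]
  ring

/-- Gaussian integration by parts: `∫ (div X) G_t = ∫ (y·X/2t) G_t`. -/
lemma P_div {X : Fin n → Euc n → ℝ} (hX : ∀ i, ContDiff ℝ 1 (X i)) (hi : ∀ i, GI (X i))
    {D : Euc n → ℝ} (hD : ∀ y, ∑ i, pd i (X i) y = D y) (hDi : GI D) {t : ℝ} (ht : 0 < t) :
    P t D = P t (fun y => ∑ i, X i y * y i) / (2 * t) := by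
  have hXy : GI (fun y => ∑ i, X i y * y i) := GI.sum _ fun i _ => (hi i).mul_coord i
  have e : ∀ y, ∑ i, pd i (fun z => X i z * G t z) y
      = D y * G t y - 1 / (2 * t) * ((∑ i, X i y * y i) * G t y) := by
    intro y
    have : ∀ i, pd i (fun z => X i z * G t z) y
        = pd i (X i) y * G t y - 1 / (2 * t) * ((X i y * y i) * G t y) := by
      intro i
      rw [pd_mul ((hX i).differentiable (by norm_num) y)
        ((G_contDiff t).differentiable (by norm_num) y), pd_G]
      field_simp
      ring
    simp_rw [this]
    rw [Finset.sum_sub_distrib, ← Finset.sum_mul, hD, ← Finset.mul_sum, ← Finset.sum_mul]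
  have hInt : Integrable (fun y => ∑ i, pd i (fun z => X i z * G t z) y) := by
    simp_rw [e]
    exact (hDi.integrable ht).sub ((hXy.integrable ht).const_mul _)
  have h0 := integral_div_eq_zero (W := fun i z => X i z * G t z)
    (fun i => (hX i).mul (G_contDiff t)) (fun i => (hi i).integrable ht) hInt
  simp_rw [e] at h0
  rw [integral_sub (hDi.integrable ht) ((hXy.integrable ht).const_mul _), integral_const_mul] at h0
  unfold P
  rw [sub_eq_zero.1 h0]
  ring

/-- The heat equation for Gaussian averages. -/
lemma P_heat {f : Euc n → ℝ} (hf : ContDiff ℝ 2 f) (hfi : GI f) (hpi : ∀ i, GI (pd i f))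
    (hl : GI (lap f)) {t : ℝ} (ht : 0 < t) :
    HasDerivAt (fun s => P s f) (P t (lap f)) t := by
  have h1f : ContDiff ℝ 1 f := hf.of_le (by norm_num)
  have hpc : ∀ i, ContDiff ℝ 1 (pd i f) := fun i => pd_contDiff (m := 1) (by simpa using hf) i
  have hyg : GI (fun y => ∑ i, pd i f y * y i) := GI.sum _ fun i _ => (hpi i).mul_coord i
  have a1 := P_div (X := fun i => pd i f) hpc hpi (D := lap f) (fun y => rfl) hl ht
  have a2 := P_div (X := fun i y => f y * y i) (fun i => h1f.mul (by fun_prop))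
    (fun i => hfi.mul_coord i) (D := fun y => (∑ i, pd i f y * y i) + n * f y) (fun y => by
      have : ∀ i, pd i (fun z => f z * z i) y = pd i f y * y i + f y := by
        intro i
        rw [pd_mul (h1f.differentiable (by norm_num) y) (coord_hasFDerivAt i y).differentiableAt,
          pd_coord]
        simp
      simp_rw [this]
      rw [Finset.sum_add_distrib]
      simp) (hyg.add (hfi.const_mul n)) ht
  rw [P_add hyg (hfi.const_mul n) ht, P_const_mul] at a2
  refine (P_hasDerivAt_weight hfi ht).congr_deriv ?_
  have e1 : (fun y : Euc n => f y * (‖y‖ ^ 2 / (4 * t ^ 2) - n / (2 * t)))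
      = fun y => 1 / (4 * t ^ 2) * (f y * ‖y‖ ^ 2) - n / (2 * t) * f y := by
    funext y; ring
  have e2 : (fun y : Euc n => ∑ i, f y * y i * y i) = fun y => f y * ‖y‖ ^ 2 := by
    funext y
    rw [EuclideanSpace.real_norm_sq_eq, Finset.mul_sum]
    exact Finset.sum_congr rfl fun i _ => by ring
  rw [e2] at a2
  rw [e1, P_sub (hfi.mul_normsq.const_mul _) (hfi.const_mul _) ht, P_const_mul, P_const_mul, a1]
  have a3 : P t (fun y => ∑ i, pd i f y * y i) = P t (fun y => f y * ‖y‖ ^ 2) / (2 * t) - n * P t f := by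
    linarith
  rw [a3]
  field_simp
  ring

end tools

/-! ### The sharp Gaussian Poincaré inequality -/

section poincare

/-- Hardy-type comparison on a half line: with `h(0) = 0` and `γ = exp(-x²/2σ)`,
`σ h'² γ - h² γ = σ (h' - h/x)² γ + σ (h² γ / x)'`. -/
lemma hardy_half {h h' : ℝ → ℝ} {σ : ℝ} (hσ : 0 < σ) (hh : ∀ x, HasDerivAt h (h' x) x)
    (hc : Continuous h') (h0 : h 0 = 0) {b : ℝ} (hb : 0 < b) :
    ∫ x in (0)..b, h x ^ 2 * Real.exp (-(x ^ 2 / (2 * σ)))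
      ≤ σ * ∫ x in (0)..b, h' x ^ 2 * Real.exp (-(x ^ 2 / (2 * σ))) := by
  have hhc : Continuous h := continuous_iff_continuousAt.2 fun x => (hh x).continuousAt
  set γ : ℝ → ℝ := fun x => Real.exp (-(x ^ 2 / (2 * σ))) with hγ
  have hγd : ∀ x, HasDerivAt γ (-(x / σ) * γ x) x := by
    intro x
    have h1 : HasDerivAt (fun x : ℝ => -(x ^ 2 / (2 * σ))) (-(x / σ)) x := by
      have := ((hasDerivAt_pow 2 x).div_const (2 * σ)).neg
      refine this.congr_deriv ?_
      field_simp
      simp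
    refine h1.exp.congr_deriv ?_
    ring
  have hγc : Continuous γ := by simp only [hγ]; fun_prop
  let q : ℝ → ℝ := fun x => σ * (h' x ^ 2 * γ x) - h x ^ 2 * γ x
  have hq : Continuous q := by simp only [q]; fun_prop
  let Q : ℝ → ℝ := fun x => (∫ y in (0)..x, q y) - σ * (h x ^ 2 * γ x / x)
  have hQd : ∀ x ∈ Ioi (0 : ℝ), HasDerivAt Q (σ * ((h' x - h x / x) ^ 2 * γ x)) x := by
    intro x hx
    have hx0 : x ≠ 0 := ne_of_gt hx
    have h1 := hq.integral_hasStrictDerivAt 0 x |>.hasDerivAt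
    have h2 := (((((hh x).pow 2).mul (hγd x)).div (hasDerivAt_id x) hx0).const_mul σ)
    refine (h1.sub h2).congr_deriv ?_
    simp only [q, id, Pi.mul_apply, Pi.pow_apply]
    field_simp
    ring
  have hmono : MonotoneOn Q (Ioi 0) := by
    refine monotoneOn_of_deriv_nonneg (convex_Ioi 0)
      (fun x hx => (hQd x hx).continuousAt.continuousWithinAt) ?_ ?_
    · rw [interior_Ioi]
      exact fun x hx => (hQd x hx).differentiableAt.differentiableWithinAt
    · rw [interior_Ioi]
      intro x hx
      rw [(hQd x hx).deriv]
      have : 0 < γ x := Real.exp_pos _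
      positivity
  have hlim : Tendsto Q (𝓝[>] 0) (𝓝 0) := by
    have h1 : Tendsto (fun x => ∫ y in (0)..x, q y) (𝓝[>] 0) (𝓝 0) := by
      have : ContinuousAt (fun x => ∫ y in (0)..x, q y) 0 :=
        (hq.integral_hasStrictDerivAt 0 0).hasDerivAt.continuousAt
      simpa using this.tendsto.mono_left (nhdsWithin_le_nhds (s := Ioi 0))
    have h2 : Tendsto (fun x => h x / x) (𝓝[>] 0) (𝓝 (h' 0)) := by
      have := (hasDerivAt_iff_tendsto_slope.1 (hh 0)).mono_left
        (nhdsWithin_mono 0 (fun x (hx : 0 < x) => ne_of_gt hx))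
      refine this.congr fun x => ?_
      simp [slope_def_field, h0]
    have h3 : Tendsto (fun x => h x * γ x) (𝓝[>] 0) (𝓝 0) := by
      have : Continuous (fun x => h x * γ x) := by fun_prop
      have := (this.tendsto 0).mono_left (nhdsWithin_le_nhds (s := Ioi 0))
      simpa [h0] using this
    have h4 := h1.sub ((h2.mul h3).const_mul σ)
    simp only [mul_zero, sub_zero] at h4
    refine h4.congr fun x => ?_
    simp only [Q]
    ring
  have hQb : 0 ≤ Q b := by
    refine le_of_tendsto hlim ?_
    filter_upwards [Ioo_mem_nhdsGT hb] with x hx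
    exact hmono hx.1 hb hx.2.le
  have hγb : 0 < γ b := Real.exp_pos _
  have hb2 : 0 ≤ σ * (h b ^ 2 * γ b / b) := by positivity
  have e : ∫ y in (0)..b, q y = σ * (∫ y in (0)..b, h' y ^ 2 * γ y) - ∫ y in (0)..b, h y ^ 2 * γ y := by
    simp only [q]
    rw [intervalIntegral.integral_sub, intervalIntegral.integral_const_mul]
    · exact Continuous.intervalIntegrable (by fun_prop) _ _
    · exact Continuous.intervalIntegrable (by fun_prop) _ _
  simp only [Q] at hQb
  linarith

/-- One-dimensional Gaussian Poincaré inequality with the sharp constant, for functions vanishing at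
the origin instead of having zero mean; the usual form follows because the variance is at most
the second moment about any value. -/
lemma hardy_line {h h' : ℝ → ℝ} {σ : ℝ} (hσ : 0 < σ) (hh : ∀ x, HasDerivAt h (h' x) x)
    (hc : Continuous h') (h0 : h 0 = 0)
    (hi : Integrable (fun x => h x ^ 2 * Real.exp (-(x ^ 2 / (2 * σ)))))
    (hi' : Integrable (fun x => h' x ^ 2 * Real.exp (-(x ^ 2 / (2 * σ))))) :
    ∫ x, h x ^ 2 * Real.exp (-(x ^ 2 / (2 * σ)))
      ≤ σ * ∫ x, h' x ^ 2 * Real.exp (-(x ^ 2 / (2 * σ))) := by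
  have hhc : Continuous h := continuous_iff_continuousAt.2 fun x => (hh x).continuousAt
  have l1 := intervalIntegral_tendsto_integral hi tendsto_neg_atTop_atBot tendsto_id
  have l2 := (intervalIntegral_tendsto_integral hi' tendsto_neg_atTop_atBot tendsto_id).const_mul σ
  refine le_of_tendsto_of_tendsto l1 l2 ?_
  filter_upwards [eventually_gt_atTop 0] with b hb
  simp only [id]
  have r1 := hardy_half hσ hh hc h0 hb
  have hhn : ∀ x, HasDerivAt (fun x => h (-x)) (-h' (-x)) x := fun x => by
    refine ((hh (-x)).scomp x (hasDerivAt_neg x)).congr_deriv ?_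
    simp
  have r2 := hardy_half hσ hhn (by fun_prop) (by simpa using h0) hb
  have e1 := intervalIntegral.integral_comp_neg (a := 0) (b := b)
    (fun x => h x ^ 2 * Real.exp (-(x ^ 2 / (2 * σ))))
  have e2 := intervalIntegral.integral_comp_neg (a := 0) (b := b)
    (fun x => h' x ^ 2 * Real.exp (-(x ^ 2 / (2 * σ))))
  simp only [neg_sq, neg_zero] at e1 e2 r2
  rw [e1, e2] at r2
  have c1 : ∀ a b, IntervalIntegrable (fun x => h x ^ 2 * Real.exp (-(x ^ 2 / (2 * σ)))) volume a b :=
    fun a b => Continuous.intervalIntegrable (by fun_prop) _ _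
  have c2 : ∀ a b, IntervalIntegrable (fun x => h' x ^ 2 * Real.exp (-(x ^ 2 / (2 * σ)))) volume a b :=
    fun a b => Continuous.intervalIntegrable (by fun_prop) _ _
  rw [← intervalIntegral.integral_add_adjacent_intervals (c1 (-b) 0) (c1 0 b),
    ← intervalIntegral.integral_add_adjacent_intervals (c2 (-b) 0) (c2 0 b)]
  linarith

lemma integral_sub_const_sq {γ : Type*} [MeasurableSpace γ] {ρ : Measure γ}
    [IsProbabilityMeasure ρ] {g : γ → ℝ} (hg : Integrable g ρ)
    (hg2 : Integrable (fun z => g z ^ 2) ρ) (c : ℝ) :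
    ∫ z, (g z - c) ^ 2 ∂ρ = ∫ z, g z ^ 2 ∂ρ - 2 * c * ∫ z, g z ∂ρ + c ^ 2 := by
  have e : (fun z => (g z - c) ^ 2) = fun z => g z ^ 2 + (-(2 * c) * g z + c ^ 2) := by
    funext z; ring
  have i1 : Integrable (fun z => -(2 * c) * g z) ρ := hg.const_mul _
  have i2 : Integrable (fun z => -(2 * c) * g z + c ^ 2) ρ := i1.add (integrable_const _)
  rw [e, integral_add hg2 i2, integral_add i1 (integrable_const _), integral_const_mul]
  simp
  ring

lemma sq_integral_le {γ : Type*} [MeasurableSpace γ] {ρ : Measure γ}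
    [IsProbabilityMeasure ρ] {g : γ → ℝ} (hg : Integrable g ρ)
    (hg2 : Integrable (fun z => g z ^ 2) ρ) : (∫ z, g z ∂ρ) ^ 2 ≤ ∫ z, g z ^ 2 ∂ρ := by
  have h0 : 0 ≤ ∫ z, (g z - ∫ w, g w ∂ρ) ^ 2 ∂ρ := integral_nonneg fun z => sq_nonneg _
  rw [integral_sub_const_sq hg hg2] at h0
  nlinarith

open ProbabilityTheory in
lemma integrable_gaussianReal_iff {v : NNReal} (hv : v ≠ 0) {f : ℝ → ℝ} :
    Integrable f (gaussianReal 0 v)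
      ↔ Integrable (fun x => f x * Real.exp (-(x ^ 2 / (2 * (v : ℝ))))) := by
  have hv' : 0 < (v : ℝ) := by positivity
  rw [gaussianReal_of_var_ne_zero _ hv, gaussianPDF_def]
  rw [integrable_withDensity_iff_integrable_smul' (by fun_prop) (by simp)]
  have hc : 0 < (√(2 * Real.pi * v))⁻¹ := by positivity
  have : (fun x => (ENNReal.ofReal (gaussianPDFReal 0 v x)).toReal • f x)
      = fun x => (√(2 * Real.pi * v))⁻¹ * (f x * Real.exp (-(x ^ 2 / (2 * (v : ℝ))))) := by
    funext x
    rw [ENNReal.toReal_ofReal (gaussianPDFReal_nonneg _ _ _), gaussianPDFReal, smul_eq_mul]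
    rw [sub_zero, neg_div]
    ring
  rw [this, integrable_const_mul_iff (IsUnit.mk0 _ hc.ne')]

open ProbabilityTheory in
lemma poincare_real {v : NNReal} (hv : v ≠ 0) {f f' : ℝ → ℝ} (hf : ∀ x, HasDerivAt f (f' x) x)
    (hc : Continuous f') (hi : Integrable (fun x => f x ^ 2) (gaussianReal 0 v))
    (hi' : Integrable (fun x => f' x ^ 2) (gaussianReal 0 v)) :
    ∫ x, f x ^ 2 ∂(gaussianReal 0 v) - (∫ x, f x ∂(gaussianReal 0 v)) ^ 2
      ≤ v * ∫ x, f' x ^ 2 ∂(gaussianReal 0 v) := by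
  have hv' : 0 < (v : ℝ) := by positivity
  have hfc : Continuous f := continuous_iff_continuousAt.2 fun x => (hf x).continuousAt
  set μ := gaussianReal 0 v with hμ
  have hf2 : MemLp f 2 μ := (memLp_two_iff_integrable_sq hfc.aestronglyMeasurable).2 hi
  have hf1 : Integrable f μ := hf2.integrable (by norm_num)
  have hhi : Integrable (fun x => (f x - f 0) ^ 2) μ :=
    ((hf2.sub (memLp_const (f 0))).integrable_sq)
  have hh : ∀ x, HasDerivAt (fun x => f x - f 0) (f' x) x := fun x => (hf x).sub_const _
  have key := hardy_line hv' hh hc (by simp) ((integrable_gaussianReal_iff hv).1 hhi)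
    ((integrable_gaussianReal_iff hv).1 hi')
  have conv : ∀ g : ℝ → ℝ, ∫ x, g x ∂μ
      = (√(2 * Real.pi * v))⁻¹ * ∫ x, g x * Real.exp (-(x ^ 2 / (2 * (v : ℝ)))) := by
    intro g
    rw [hμ, integral_gaussianReal_eq_integral_smul hv, ← integral_const_mul]
    refine integral_congr_ae (Eventually.of_forall fun x => ?_)
    simp only [gaussianPDFReal, smul_eq_mul, sub_zero, neg_div]
    ring
  have k2 : ∫ x, (f x - f 0) ^ 2 ∂μ ≤ v * ∫ x, f' x ^ 2 ∂μ := by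
    rw [conv, conv, mul_left_comm]
    exact mul_le_mul_of_nonneg_left key (by positivity)
  rw [integral_sub_const_sq hf1 hi] at k2
  nlinarith [sq_nonneg (∫ x, f x ∂μ - f 0)]

/-- Subadditivity of the variance on a product (Efron–Stein), with the conditional variances
bounded by integrals of `A` and `B`. -/
lemma var_prod {α β : Type*} [MeasurableSpace α] [MeasurableSpace β] {μ : Measure α}
    {ν : Measure β} [IsProbabilityMeasure μ] [IsProbabilityMeasure ν] {f A B : α × β → ℝ}
    (hf : MemLp f 2 (μ.prod ν)) (hA : Integrable A (μ.prod ν)) (hB : Integrable B (μ.prod ν))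
    (h1 : ∀ᵐ x ∂μ, ∫ y, f (x, y) ^ 2 ∂ν - (∫ y, f (x, y) ∂ν) ^ 2 ≤ ∫ y, A (x, y) ∂ν)
    (h2 : ∀ᵐ y ∂ν, ∫ x, f (x, y) ^ 2 ∂μ - (∫ x, f (x, y) ∂μ) ^ 2 ≤ ∫ x, B (x, y) ∂μ) :
    ∫ z, f z ^ 2 ∂(μ.prod ν) - (∫ z, f z ∂(μ.prod ν)) ^ 2
      ≤ ∫ z, A z ∂(μ.prod ν) + ∫ z, B z ∂(μ.prod ν) := by
  have hf1 : Integrable f (μ.prod ν) := hf.integrable (by norm_num)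
  have hf2 : Integrable (fun z => f z ^ 2) (μ.prod ν) := hf.integrable_sq
  set m : β → ℝ := fun y => ∫ x, f (x, y) ∂μ with hm
  have hmi : Integrable m ν := hf1.integral_prod_right
  have hsec1 : ∀ᵐ y ∂ν, Integrable (fun x => f (x, y)) μ := hf1.prod_left_ae
  have hsec2 : ∀ᵐ y ∂ν, Integrable (fun x => f (x, y) ^ 2) μ := hf2.prod_left_ae
  have hm2 : Integrable (fun y => m y ^ 2) ν := by
    refine (hf2.integral_prod_right).mono (hmi.aestronglyMeasurable.pow 2) ?_
    filter_upwards [hsec1, hsec2] with y a b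
    rw [Real.norm_eq_abs, Real.norm_eq_abs, abs_of_nonneg (sq_nonneg _)]
    exact (sq_integral_le a b).trans (le_abs_self _)
  set r : α → ℝ := fun x => ∫ y, f (x, y) ∂ν with hr
  have hri : Integrable r μ := hf1.integral_prod_left
  have hr2 : Integrable (fun x => r x ^ 2) μ := by
    refine (hf2.integral_prod_left).mono (hri.aestronglyMeasurable.pow 2) ?_
    filter_upwards [hf1.prod_right_ae, hf2.prod_right_ae] with x a b
    rw [Real.norm_eq_abs, Real.norm_eq_abs, abs_of_nonneg (sq_nonneg _)]
    exact (sq_integral_le a b).trans (le_abs_self _)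
  have tot : ∫ z, f z ∂(μ.prod ν) = ∫ x, r x ∂μ := integral_prod _ hf1
  have tot' : ∫ z, f z ∂(μ.prod ν) = ∫ y, m y ∂ν := integral_prod_symm _ hf1
  -- first conditional variance
  have s1 : ∫ z, f z ^ 2 ∂(μ.prod ν) - ∫ x, r x ^ 2 ∂μ ≤ ∫ z, A z ∂(μ.prod ν) := by
    rw [integral_prod _ hf2, integral_prod _ hA,
      ← integral_sub hf2.integral_prod_left hr2]
    exact integral_mono_ae (hf2.integral_prod_left.sub hr2) hA.integral_prod_left h1
  have s2 : ∫ z, f z ^ 2 ∂(μ.prod ν) - ∫ y, m y ^ 2 ∂ν ≤ ∫ z, B z ∂(μ.prod ν) := by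
    rw [integral_prod_symm _ hf2, integral_prod_symm _ hB,
      ← integral_sub hf2.integral_prod_right hm2]
    exact integral_mono_ae (hf2.integral_prod_right.sub hm2) hB.integral_prod_right h2
  -- `Var r ≤ E (f - m)²`, since `r - E r` is the conditional expectation of `f - m`
  set c := ∫ z, f z ∂(μ.prod ν) with hcdef
  have hmL : MemLp m 2 ν := (memLp_two_iff_integrable_sq hmi.aestronglyMeasurable).2 hm2
  have hmP : MemLp (fun z : α × β => m z.2) 2 (μ.prod ν) := hmL.comp_snd μ
  have hfm : MemLp (fun z : α × β => f z - m z.2) 2 (μ.prod ν) := hf.sub hmP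
  have hmP1 : Integrable (fun z : α × β => m z.2) (μ.prod ν) := hmP.integrable (by norm_num)
  have s3 : ∫ x, r x ^ 2 ∂μ - c ^ 2 ≤ ∫ z, f z ^ 2 ∂(μ.prod ν) - ∫ y, m y ^ 2 ∂ν := by
    have a1 : ∫ x, (r x - c) ^ 2 ∂μ = ∫ x, r x ^ 2 ∂μ - c ^ 2 := by
      rw [integral_sub_const_sq hri hr2, ← tot]
      ring
    have a2 : ∫ z, (f z - m z.2) ^ 2 ∂(μ.prod ν) = ∫ z, f z ^ 2 ∂(μ.prod ν) - ∫ y, m y ^ 2 ∂ν := by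
      have i1 : Integrable (fun z : α × β => f z * m z.2) (μ.prod ν) := hf.integrable_mul hmP
      have i2 : Integrable (fun z : α × β => m z.2 ^ 2) (μ.prod ν) := hmP.integrable_sq
      have e : (fun z : α × β => (f z - m z.2) ^ 2)
          = fun z => f z ^ 2 + (-2 * (f z * m z.2) + m z.2 ^ 2) := by
        funext x; ring
      have i3 : Integrable (fun z : α × β => -2 * (f z * m z.2)) (μ.prod ν) := i1.const_mul _
      have i4 : Integrable (fun z : α × β => -2 * (f z * m z.2) + m z.2 ^ 2) (μ.prod ν) := i3.add i2
      have b1 : ∫ z, f z * m z.2 ∂(μ.prod ν) = ∫ y, m y ^ 2 ∂ν := by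
        rw [integral_prod_symm _ i1]
        refine integral_congr_ae (Eventually.of_forall fun y => ?_)
        simp only [integral_mul_const, hm]
        ring
      have b2 : ∫ z : α × β, m z.2 ^ 2 ∂(μ.prod ν) = ∫ y, m y ^ 2 ∂ν := by
        rw [integral_prod_symm _ i2]
        simp
      rw [e, integral_add hf2 i4, integral_add i3 i2, integral_const_mul, b1, b2]
      ring
    rw [← a1, ← a2, integral_prod _ hfm.integrable_sq]
    have hri' : Integrable (fun x => (r x - c) ^ 2) μ := by
      have : MemLp r 2 μ := (memLp_two_iff_integrable_sq hri.aestronglyMeasurable).2 hr2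
      exact (this.sub (memLp_const c)).integrable_sq
    refine integral_mono_ae hri' hfm.integrable_sq.integral_prod_left ?_
    filter_upwards [hf1.prod_right_ae, hfm.integrable_sq.prod_right_ae] with x a b
    have : r x - c = ∫ y, (f (x, y) - m y) ∂ν := by
      rw [integral_sub a hmi, ← tot']
    rw [this]
    exact sq_integral_le (a.sub hmi) b
  linarith

end poincare

section poincare_pi

open ProbabilityTheory in
/-- Tensorization of the one-dimensional inequality, by induction on the number of variables. -/
lemma poincare_pi {v : NNReal} (hv : v ≠ 0) : ∀ (m : ℕ) (f : (Fin m → ℝ) → ℝ)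
    (f' : Fin m → (Fin m → ℝ) → ℝ), Continuous f → (∀ i, Continuous (f' i)) →
    (∀ i x, HasDerivAt (fun s => f (Function.update x i s)) (f' i x) (x i)) →
    Integrable (fun x => f x ^ 2) (Measure.pi fun _ : Fin m => gaussianReal 0 v) →
    (∀ i, Integrable (fun x => f' i x ^ 2) (Measure.pi fun _ : Fin m => gaussianReal 0 v)) →
    ∫ x, f x ^ 2 ∂(Measure.pi fun _ : Fin m => gaussianReal 0 v)
      - (∫ x, f x ∂(Measure.pi fun _ : Fin m => gaussianReal 0 v)) ^ 2
      ≤ v * ∫ x, ∑ i, f' i x ^ 2 ∂(Measure.pi fun _ : Fin m => gaussianReal 0 v) := by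
  intro m
  induction m with
  | zero =>
    intro f f' _ _ _ _ _
    rw [Measure.pi_of_empty _ default]
    simp
  | succ m ih =>
    intro f f' hf hf' hd hi hi'
    set μ := gaussianReal 0 v
    set ν := Measure.pi fun _ : Fin m => μ
    have hmp := (measurePreserving_piFinSuccAbove (fun _ : Fin (m + 1) => μ) 0).symm
    set e := (MeasurableEquiv.piFinSuccAbove (fun _ : Fin (m + 1) => ℝ) 0).symm with he
    have hec : ∀ z, e z = Fin.cons z.1 z.2 := fun z => by
      rw [he]
      simp [MeasurableEquiv.piFinSuccAbove, Fin.insertNthEquiv]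
    have hecont : Continuous e := by
      refine continuous_pi fun i => ?_
      simp only [hec]
      refine Fin.cases ?_ (fun j => ?_) i
      · simpa using continuous_fst
      · simp only [Fin.cons_succ]
        fun_prop
    have hInt : ∀ g : (Fin (m + 1) → ℝ) → ℝ, ∫ x, g x ∂(Measure.pi fun _ : Fin (m + 1) => μ)
        = ∫ z, g (e z) ∂(μ.prod ν) := fun g =>
      (hmp.integral_comp e.measurableEmbedding g).symm
    have hinteg : ∀ g : (Fin (m + 1) → ℝ) → ℝ,
        Integrable g (Measure.pi fun _ : Fin (m + 1) => μ) → Integrable (fun z => g (e z)) (μ.prod ν) :=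
      fun g hg => (hmp.integrable_comp_emb e.measurableEmbedding).2 hg
    rw [hInt, hInt, hInt]
    have j := hinteg _ hi
    have j' := fun i => hinteg _ (hi' i)
    have hL : MemLp (fun z => f (e z)) 2 (μ.prod ν) :=
      (memLp_two_iff_integrable_sq (hf.comp hecont).aestronglyMeasurable).2 j
    have jA : Integrable (fun z => v * ∑ i : Fin m, f' i.succ (e z) ^ 2) (μ.prod ν) :=
      (integrable_finsetSum _ fun i _ => j' _).const_mul _
    have jB : Integrable (fun z => v * f' 0 (e z) ^ 2) (μ.prod ν) := (j' 0).const_mul _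
    have key := var_prod hL jA jB ?_ ?_
    · refine key.trans (le_of_eq ?_)
      rw [← integral_add jA jB, ← integral_const_mul]
      refine integral_congr_ae (Eventually.of_forall fun z => ?_)
      simp only [Fin.sum_univ_succ]
      ring
    · have hj' : ∀ᵐ x ∂μ, ∀ i : Fin m, Integrable (fun y => f' i.succ (e (x, y)) ^ 2) ν :=
        ae_all_iff.2 fun i => (j' i.succ).prod_right_ae
      filter_upwards [j.prod_right_ae, hj'] with x a b
      rw [integral_const_mul]
      refine ih (fun y => f (e (x, y))) (fun i y => f' i.succ (e (x, y))) (by fun_prop)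
        (fun i => by have := hf' i.succ; fun_prop) ?_ a b
      intro i y
      have := hd i.succ (e (x, y))
      simp only [hec, Fin.cons_succ] at this ⊢
      simpa only [Fin.cons_update] using this
    · filter_upwards [j.prod_left_ae, (j' 0).prod_left_ae] with y a b
      rw [integral_const_mul]
      refine poincare_real hv (fun x => ?_) (by have := hf' 0; fun_prop) a b
      have := hd 0 (e (x, y))
      simp only [hec, Fin.cons_zero] at this ⊢
      simpa only [Fin.update_cons_zero] using this

open ProbabilityTheory in
lemma pi_gaussian_eq {v : NNReal} (hv : v ≠ 0) (m : ℕ) :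
    Measure.pi (fun _ : Fin m => gaussianReal 0 v)
      = (volume : Measure (Fin m → ℝ)).withDensity
        (fun x => ENNReal.ofReal (∏ i, gaussianPDFReal 0 v (x i))) := by
  refine (Measure.pi_eq fun s hs => ?_)
  rw [withDensity_apply _ (MeasurableSet.univ_pi hs),
    ← lintegral_indicator (MeasurableSet.univ_pi hs)]
  have e : (univ.pi s).indicator (fun x : Fin m → ℝ => ENNReal.ofReal (∏ i, gaussianPDFReal 0 v (x i)))
      = fun x => ENNReal.ofReal (∏ i, (s i).indicator (gaussianPDFReal 0 v) (x i)) := by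
    funext x
    by_cases hx : x ∈ univ.pi s
    · rw [indicator_of_mem hx]
      congr 1
      refine Finset.prod_congr rfl fun i _ => ?_
      rw [indicator_of_mem (hx i (mem_univ i))]
    · rw [indicator_of_notMem hx]
      simp only [mem_univ_pi, not_forall] at hx
      obtain ⟨i, hi⟩ := hx
      rw [Finset.prod_eq_zero (Finset.mem_univ i) (indicator_of_notMem hi _)]
      simp
  have hInt : ∀ i, Integrable ((s i).indicator (gaussianPDFReal 0 v)) :=
    fun i => (integrable_gaussianPDFReal 0 v).indicator (hs i)
  have hnn : ∀ i x, 0 ≤ (s i).indicator (gaussianPDFReal 0 v) x :=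
    fun i x => indicator_nonneg (fun y _ => gaussianPDFReal_nonneg 0 v y) x
  have hprod : Integrable (fun x : Fin m → ℝ => ∏ i, (s i).indicator (gaussianPDFReal 0 v) (x i)) :=
    Integrable.fintype_prod hInt
  rw [e, ← ofReal_integral_eq_lintegral_ofReal hprod
    (Eventually.of_forall fun x => Finset.prod_nonneg fun i _ => hnn i _),
    integral_fintype_prod_volume_eq_prod, ENNReal.ofReal_prod_of_nonneg
      (fun i _ => integral_nonneg (hnn i))]
  refine Finset.prod_congr rfl fun i _ => ?_
  rw [gaussianReal_apply_eq_integral _ hv, integral_indicator (hs i)]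

open ProbabilityTheory in
lemma G_eq_prod {m : ℕ} {t : ℝ} (ht : 0 < t) (y : Euc m) :
    G t y = ∏ i, gaussianPDFReal 0 (2 * t).toNNReal (y i) := by
  have h2 : ((2 * t).toNNReal : ℝ) = 2 * t := Real.coe_toNNReal _ (by positivity)
  simp only [gaussianPDFReal, h2, sub_zero]
  rw [Finset.prod_mul_distrib, ← Real.exp_sum, Finset.prod_const, Finset.card_univ, Fintype.card_fin]
  unfold G
  congr 1
  · rw [show 2 * Real.pi * (2 * t) = 4 * Real.pi * t by ring, Real.sqrt_eq_rpow,
      ← Real.rpow_neg (by positivity), ← Real.rpow_natCast, ← Real.rpow_mul (by positivity)]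
    congr 1
    ring
  · rw [EuclideanSpace.norm_sq_eq]
    congr 1
    rw [Finset.sum_div, ← Finset.sum_neg_distrib]
    refine Finset.sum_congr rfl fun i _ => ?_
    rw [Real.norm_eq_abs, sq_abs]
    ring

/-- The sharp Gaussian Poincaré inequality. -/
lemma poincare {n : ℕ} {f : Euc n → ℝ} (hf : ContDiff ℝ 1 f) (h2 : GI (fun y => f y ^ 2))
    (hp : ∀ i, GI (fun y => pd i f y ^ 2)) {t : ℝ} (ht : 0 < t) :
    P t (fun y => f y ^ 2) - P t f ^ 2 ≤ 2 * t * P t (fun y => ∑ i, pd i f y ^ 2) := by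
  have hv : (2 * t).toNNReal ≠ 0 := by simpa using ht
  set v := (2 * t).toNNReal with hvd
  have hv2 : (v : ℝ) = 2 * t := Real.coe_toNNReal _ (by positivity)
  have hmp := PiLp.volume_preserving_toLp (Fin n)
  have hemb : MeasurableEmbedding (WithLp.toLp 2 : (Fin n → ℝ) → Euc n) :=
    (MeasurableEquiv.toLp 2 (Fin n → ℝ)).measurableEmbedding
  have hconv : ∀ g : Euc n → ℝ, P t g
      = ∫ x, g (WithLp.toLp 2 x) ∂(Measure.pi fun _ : Fin n => ProbabilityTheory.gaussianReal 0 v) := by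
    intro g
    unfold P
    rw [pi_gaussian_eq hv, integral_withDensity_eq_integral_toReal_smul (by fun_prop) (by simp),
      ← hmp.integral_comp hemb]
    refine integral_congr_ae (Eventually.of_forall fun x => ?_)
    simp only
    rw [ENNReal.toReal_ofReal (Finset.prod_nonneg fun i _ =>
      ProbabilityTheory.gaussianPDFReal_nonneg _ _ _), G_eq_prod ht, smul_eq_mul, mul_comm]
  have hinteg : ∀ g : Euc n → ℝ, GI g →
      Integrable (fun x => g (WithLp.toLp 2 x))
        (Measure.pi fun _ : Fin n => ProbabilityTheory.gaussianReal 0 v) := by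
    intro g hg
    rw [pi_gaussian_eq hv, integrable_withDensity_iff_integrable_smul' (by fun_prop) (by simp)]
    refine ((hmp.integrable_comp_emb hemb).2 (hg.integrable ht)).congr
      (Eventually.of_forall fun x => ?_)
    simp only [Function.comp]
    rw [ENNReal.toReal_ofReal (Finset.prod_nonneg fun i _ =>
      ProbabilityTheory.gaussianPDFReal_nonneg _ _ _), G_eq_prod ht, smul_eq_mul, mul_comm]
  have hc : Continuous (WithLp.toLp 2 : (Fin n → ℝ) → Euc n) := PiLp.continuous_toLp 2 _
  have key := poincare_pi hv n (fun x => f (WithLp.toLp 2 x))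
    (fun i x => pd i f (WithLp.toLp 2 x)) (hf.continuous.comp hc)
    (fun i => (pd_cont hf i).comp hc) (fun i x => ?_) (hinteg _ h2) (fun i => hinteg _ (hp i))
  · rw [hconv, hconv, hconv, ← hv2]
    exact key
  · have hl : HasDerivAt (fun s : ℝ => (WithLp.toLp 2 (Function.update x i s) : Euc n))
        (EuclideanSpace.single i 1) (x i) := by
      have e : (fun s : ℝ => (WithLp.toLp 2 (Function.update x i s) : Euc n))
          = fun s => (WithLp.toLp 2 x : Euc n) + (s - x i) • EuclideanSpace.single i (1 : ℝ) := by
        funext s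
        ext j
        by_cases hj : j = i
        · subst hj; simp
        · simp [hj]
      rw [e]
      have := (((hasDerivAt_id (x i)).sub_const (x i)).smul_const
        (EuclideanSpace.single i (1 : ℝ) : Euc n)).const_add (WithLp.toLp 2 x : Euc n)
      simpa using this
    have hx : (WithLp.toLp 2 (Function.update x i (x i)) : Euc n) = WithLp.toLp 2 x := by simp
    have hfd : HasFDerivAt f (fderiv ℝ f (WithLp.toLp 2 x))
        (WithLp.toLp 2 (Function.update x i (x i)) : Euc n) := by
      rw [hx]
      exact (hf.differentiable (by norm_num) _).hasFDerivAt
    exact hfd.comp_hasDerivAt (x i) hl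

end poincare_pi

/-! ### Caccioppoli: Gaussian integrability of the gradient -/

/-- The squared norm of the gradient. -/
noncomputable def gr2 {n : ℕ} (f : Euc n → ℝ) (y : Euc n) : ℝ := ∑ i, pd i f y ^ 2

section caccioppoli
variable {n : ℕ}

lemma gr2_nonneg (f : Euc n → ℝ) (y : Euc n) : 0 ≤ gr2 f y :=
  Finset.sum_nonneg fun _ _ => sq_nonneg _

lemma gr2_cont {f : Euc n → ℝ} (hf : ContDiff ℝ 1 f) : Continuous (gr2 f) := by
  unfold gr2
  exact continuous_finsetSum _ fun i _ => (pd_cont hf i).pow 2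

lemma exists_cutoff (n : ℕ) : ∃ M : ℝ, ∀ k : ℕ, ∃ X : Euc n → ℝ, ContDiff ℝ 1 X ∧
    HasCompactSupport X ∧ (∀ x, 0 ≤ X x ∧ X x ≤ 1) ∧ (∀ x, ‖x‖ ≤ k → X x = 1) ∧
    ∀ i x, |pd i X x| ≤ M := by
  let χ : ContDiffBump (0 : Euc n) := ⟨1, 2, one_pos, one_lt_two⟩
  have hχ : ContDiff ℝ 1 (χ : Euc n → ℝ) := χ.contDiff
  have hM : ∃ M, ∀ i x, |pd i (χ : Euc n → ℝ) x| ≤ M := by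
    have : ∀ i, ∃ M, ∀ x, |pd i (χ : Euc n → ℝ) x| ≤ M := by
      intro i
      have hc : HasCompactSupport (pd i (χ : Euc n → ℝ)) := χ.hasCompactSupport.fderiv_apply ℝ _
      obtain ⟨M, hM⟩ := hc.exists_bound_of_continuous (pd_cont hχ i)
      exact ⟨M, hM⟩
    choose M hM using this
    refine ⟨∑ i, |M i|, fun i x => (hM i x).trans ((le_abs_self _).trans ?_)⟩
    exact Finset.single_le_sum (f := fun i => |M i|) (fun _ _ => abs_nonneg _) (Finset.mem_univ i)
  obtain ⟨M, hM⟩ := hM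
  refine ⟨M, fun k => ⟨fun x => χ ((k + 1 : ℝ)⁻¹ • x), hχ.comp (by fun_prop),
    χ.hasCompactSupport.comp_smul (by positivity), fun x => ⟨χ.nonneg, χ.le_one⟩, fun x hx => ?_,
    fun i x => ?_⟩⟩
  · refine χ.one_of_mem_closedBall ?_
    rw [mem_closedBall_zero_iff, norm_smul, norm_inv, Real.norm_of_nonneg (by positivity)]
    change _ ≤ (1 : ℝ)
    rw [inv_mul_le_iff₀ (by positivity)]
    linarith
  · have : pd i (fun x => χ ((k + 1 : ℝ)⁻¹ • x)) x = (k + 1 : ℝ)⁻¹ * pd i χ ((k + 1 : ℝ)⁻¹ • x) := by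
      unfold pd
      rw [fderiv_comp_smul]
      simp
    rw [this, abs_mul, abs_of_pos (by positivity)]
    have h1 : (k + 1 : ℝ)⁻¹ ≤ 1 := inv_le_one_of_one_le₀ (by linarith [k.cast_nonneg (α := ℝ)])
    calc _ ≤ 1 * |pd i (χ : Euc n → ℝ) ((k + 1 : ℝ)⁻¹ • x)| := by gcongr
      _ ≤ M := by rw [one_mul]; exact hM _ _

/-- Caccioppoli with a compactly supported test function. -/
lemma cacc_test {f ψ : Euc n → ℝ} (hf : ContDiff ℝ 2 f) (hsub : ∀ y, 0 ≤ f y * lap f y)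
    (hψ : ContDiff ℝ 1 ψ) (hs : HasCompactSupport ψ) :
    ∫ y, ψ y ^ 2 * gr2 f y ≤ 4 * ∫ y, f y ^ 2 * gr2 ψ y := by
  have h1f : ContDiff ℝ 1 f := hf.of_le (by norm_num)
  have hpc : ∀ i, ContDiff ℝ 1 (pd i f) := fun i => pd_contDiff (m := 1) (by simpa using hf) i
  have hlc : Continuous (lap f) := by
    have : lap f = fun x => ∑ i, pd i (pd i f) x := rfl
    rw [this]
    exact continuous_finsetSum _ fun i _ => pd_cont (hpc i) i
  have hg := gr2_cont h1f
  have hs2 : HasCompactSupport (fun y => ψ y ^ 2) := by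
    have : (fun y => ψ y ^ 2) = fun y => ψ y * ψ y := by funext y; ring
    rw [this]
    exact hs.mul_right
  let W : Fin n → Euc n → ℝ := fun i y => ψ y ^ 2 * (f y * pd i f y)
  have hWc : ∀ i, ContDiff ℝ 1 (W i) := fun i => (hψ.pow 2).mul (h1f.mul (hpc i))
  have hpW : ∀ i y, pd i (W i) y = 2 * ψ y * pd i ψ y * (f y * pd i f y)
      + ψ y ^ 2 * (pd i f y ^ 2 + f y * pd i (pd i f) y) := by
    intro i y
    have d1 := hψ.differentiable (by norm_num) y
    have d2 := h1f.differentiable (by norm_num) y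
    have d3 := (hpc i).differentiable (by norm_num) y
    simp only [W]
    rw [pd_mul (d1.fun_pow 2) (d2.fun_mul d3), pd_sq d1, pd_mul d2 d3]
    ring
  have hdiv : ∀ y, ∑ i, pd i (W i) y
      = ψ y * (∑ i, 2 * pd i ψ y * (f y * pd i f y)) + ψ y ^ 2 * (gr2 f y + f y * lap f y) := by
    intro y
    simp only [hpW, gr2, lap_eq, Finset.mul_sum, mul_add, Finset.sum_add_distrib]
    congr 1
    exact Finset.sum_congr rfl fun i _ => by ring
  have hdc : Continuous (fun y => ∑ i, pd i (W i) y) :=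
    continuous_finsetSum _ fun i _ => pd_cont (hWc i) i
  have hds : HasCompactSupport (fun y => ∑ i, pd i (W i) y) := by
    simp only [hdiv]
    exact hs.mul_right.add hs2.mul_right
  have hdi := Continuous.integrable_of_hasCompactSupport (μ := volume) hdc hds
  have h0 := integral_div_eq_zero hWc
    (fun i => (hWc i).continuous.integrable_of_hasCompactSupport hs2.mul_right) hdi
  have hgψs : HasCompactSupport (gr2 ψ) := by
    refine hs.mono' ?_
    intro y hy
    have : ∃ i, pd i ψ y ≠ 0 := by
      by_contra hcon
      push Not at hcon
      exact hy (by simp [gr2, hcon])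
    obtain ⟨i, hi⟩ := this
    refine support_fderiv_subset ℝ (f := ψ) fun h => hi ?_
    simp [pd, h]
  have i1 : Integrable (fun y => ψ y ^ 2 * gr2 f y) :=
    ((hψ.continuous.pow 2).mul hg).integrable_of_hasCompactSupport hs2.mul_right
  have i2 : Integrable (fun y => f y ^ 2 * gr2 ψ y) :=
    ((hf.continuous.pow 2).mul (gr2_cont hψ)).integrable_of_hasCompactSupport hgψs.mul_left
  have hpt : ∀ y, 1 / 2 * (ψ y ^ 2 * gr2 f y) - 2 * (f y ^ 2 * gr2 ψ y) ≤ ∑ i, pd i (W i) y := by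
    intro y
    rw [hdiv]
    have a1 : - (1 / 2 * (ψ y ^ 2 * gr2 f y) + 2 * (f y ^ 2 * gr2 ψ y))
        ≤ ψ y * (∑ i, 2 * pd i ψ y * (f y * pd i f y)) := by
      simp only [gr2, Finset.mul_sum, ← Finset.sum_add_distrib]
      rw [← Finset.sum_neg_distrib]
      refine Finset.sum_le_sum fun i _ => ?_
      nlinarith [sq_nonneg (ψ y * pd i f y + 2 * (f y * pd i ψ y))]
    have a2 := mul_nonneg (sq_nonneg (ψ y)) (hsub y)
    nlinarith
  have := integral_mono ((i1.const_mul (1 / 2)).sub (i2.const_mul 2)) hdi hpt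
  rw [h0] at this
  simp only [Pi.sub_apply] at this
  rw [integral_sub (i1.const_mul (1 / 2)) (i2.const_mul 2), integral_const_mul,
    integral_const_mul] at this
  linarith

lemma GI.grad {f : Euc n → ℝ} (hf : ContDiff ℝ 2 f) (hsub : ∀ y, 0 ≤ f y * lap f y)
    (hf2 : GI (fun y => f y ^ 2)) : GI (gr2 f) := by
  have h1f : ContDiff ℝ 1 f := hf.of_le (by norm_num)
  have hgc := gr2_cont h1f
  refine ⟨hgc, fun a ha => ?_⟩
  obtain ⟨M, hM⟩ := exists_cutoff n
  choose X hX hXs hX01 hX1 hXp using hM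
  set t := 1 / (2 * a) with htd
  have ht : 0 < t := by positivity
  set c : ℝ := ((4 * Real.pi * t) ^ (-(n / 2 : ℝ))) ^ 2 with hc
  have hcp : 0 < c := by positivity
  have hG2 : ∀ y : Euc n, G t y ^ 2 = c * Real.exp (-(a * ‖y‖ ^ 2)) := by
    intro y
    rw [G_eq ht, mul_pow, ← hc, ← Real.exp_nat_mul]
    congr 2
    rw [htd]
    field_simp
    norm_num
  have hH : Integrable (fun y => f y ^ 2 * (2 * n * M ^ 2 + ‖y‖ ^ 2 / (2 * t ^ 2)) * G t y ^ 2) := by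
    have g1 : GI (fun y => f y ^ 2 * (2 * n * M ^ 2 + ‖y‖ ^ 2 / (2 * t ^ 2))) :=
      ((hf2.const_mul (2 * n * M ^ 2)).add (hf2.mul_normsq.const_mul (1 / (2 * t ^ 2)))).congr
        fun y => by ring
    refine ((g1.2 a ha).const_mul c).congr (Eventually.of_forall fun y => ?_)
    simp only [hG2]
    ring
  have key : ∀ k : ℕ, ∫ y in closedBall 0 (k : ℝ), gr2 f y * Real.exp (-(a * ‖y‖ ^ 2))
      ≤ c⁻¹ * (4 * ∫ y, f y ^ 2 * (2 * n * M ^ 2 + ‖y‖ ^ 2 / (2 * t ^ 2)) * G t y ^ 2) := by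
    intro k
    have hψ : ContDiff ℝ 1 (fun y => X k y * G t y) := (hX k).mul (G_contDiff t)
    have hψs : HasCompactSupport (fun y => X k y * G t y) := (hXs k).mul_right
    have h := cacc_test hf hsub hψ hψs
    have hpt : ∀ y, gr2 (fun y => X k y * G t y) y
        ≤ (2 * n * M ^ 2 + ‖y‖ ^ 2 / (2 * t ^ 2)) * G t y ^ 2 := by
      intro y
      have hnorm : ‖y‖ ^ 2 = ∑ i, y i ^ 2 := by simp [EuclideanSpace.norm_sq_eq]
      have e : (2 * n * M ^ 2 + ‖y‖ ^ 2 / (2 * t ^ 2)) * G t y ^ 2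
          = ∑ i : Fin n, (2 * M ^ 2 + y i ^ 2 / (2 * t ^ 2)) * G t y ^ 2 := by
        rw [← Finset.sum_mul, Finset.sum_add_distrib, hnorm, Finset.sum_div, Finset.sum_const,
          Finset.card_univ, Fintype.card_fin, nsmul_eq_mul]
        ring
      rw [e]
      refine Finset.sum_le_sum fun i _ => ?_
      rw [pd_mul ((hX k).differentiable (by norm_num) y)
        ((G_contDiff t).differentiable (by norm_num) y), pd_G]
      have b1 : pd i (X k) y ^ 2 ≤ M ^ 2 := sq_le_sq' (by linarith [abs_le.1 (hXp k i y)])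
        (abs_le.1 (hXp k i y)).2
      have b2 : X k y ^ 2 ≤ 1 := by nlinarith [hX01 k y]
      have b3 : (pd i (X k) y - X k y * (y i / (2 * t))) ^ 2 ≤ 2 * M ^ 2 + y i ^ 2 / (2 * t ^ 2) := by
        have q : y i ^ 2 / (2 * t ^ 2) = 2 * (y i / (2 * t)) ^ 2 := by field_simp
        rw [q]
        have := mul_le_mul_of_nonneg_right b2 (sq_nonneg (y i / (2 * t)))
        nlinarith [sq_nonneg (pd i (X k) y + X k y * (y i / (2 * t)))]
      calc _ = (pd i (X k) y - X k y * (y i / (2 * t))) ^ 2 * G t y ^ 2 := by ring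
        _ ≤ _ := by gcongr
    have hlhs : ∫ y in closedBall 0 (k : ℝ), c * (gr2 f y * Real.exp (-(a * ‖y‖ ^ 2)))
        ≤ ∫ y, (X k y * G t y) ^ 2 * gr2 f y := by
      rw [← integral_indicator isClosed_closedBall.measurableSet]
      refine integral_mono_of_nonneg (Eventually.of_forall fun y =>
        indicator_nonneg (fun z _ => by have := gr2_nonneg f z; positivity) y) ?_
        (Eventually.of_forall fun y => ?_)
      · have : HasCompactSupport (fun y => (X k y * G t y) ^ 2 * gr2 f y) := by
          have : (fun y => (X k y * G t y) ^ 2 * gr2 f y)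
              = fun y => X k y * (X k y * G t y ^ 2 * gr2 f y) := by funext y; ring
          rw [this]
          exact (hXs k).mul_right
        exact ((hψ.continuous.pow 2).mul hgc).integrable_of_hasCompactSupport this
      · simp only
        by_cases hy : y ∈ closedBall (0 : Euc n) (k : ℝ)
        · rw [indicator_of_mem hy, hX1 k y (by simpa using hy), one_mul, hG2]
          exact le_of_eq (by ring)
        · rw [indicator_of_notMem hy]
          have := gr2_nonneg f y
          positivity
    rw [integral_const_mul] at hlhs
    have hr : ∫ y, f y ^ 2 * gr2 (fun y => X k y * G t y) y
        ≤ ∫ y, f y ^ 2 * (2 * n * M ^ 2 + ‖y‖ ^ 2 / (2 * t ^ 2)) * G t y ^ 2 := by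
      refine integral_mono_of_nonneg (Eventually.of_forall fun y =>
        mul_nonneg (sq_nonneg _) (gr2_nonneg _ y)) hH (Eventually.of_forall fun y => ?_)
      simp only [mul_assoc]
      exact mul_le_mul_of_nonneg_left (by simpa only [mul_assoc] using hpt y) (sq_nonneg _)
    rw [inv_mul_eq_div, le_div_iff₀ hcp, mul_comm]
    linarith
  exact (aecover_closedBall (x := (0 : Euc n)) tendsto_natCast_atTop_atTop
    ).integrable_of_integral_bounded_of_nonneg_ae _
    (fun k => (ContinuousOn.integrableOn_compact (isCompact_closedBall _ _)
      (by fun_prop : Continuous fun y => gr2 f y * Real.exp (-(a * ‖y‖ ^ 2))).continuousOn))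
    (Eventually.of_forall fun y => mul_nonneg (gr2_nonneg f y) (Real.exp_pos _).le)
    (Eventually.of_forall key)

end caccioppoli

/-! ### Solutions, and the Gaussian monotonicity formula -/

/-- Positive smooth solutions of `Δu = u v²`, `Δv = v u²` with at most linear growth. -/
structure Sol {n : ℕ} (u v : Euc n → ℝ) : Prop where
  hu : ContDiff ℝ (⊤ : ℕ∞) u
  hv : ContDiff ℝ (⊤ : ℕ∞) v
  up : ∀ x, 0 < u x
  vp : ∀ x, 0 < v x
  eu : ∀ x, lap u x = u x * v x ^ 2
  ev : ∀ x, lap v x = v x * u x ^ 2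
  gr : ∃ C, ∀ x, u x + v x ≤ C * (1 + ‖x‖)

/-- The translate `y ↦ f (x + y)`. -/
def tr {n : ℕ} (x : Euc n) (f : Euc n → ℝ) : Euc n → ℝ := fun y => f (x + y)

/-- The radial derivative `y · ∇f`. -/
noncomputable def yd {n : ℕ} (f : Euc n → ℝ) (y : Euc n) : ℝ := ∑ j, pd j f y * y j

/-- The Gaussian height `P_t (u² + v²)`. -/
noncomputable def SS {n : ℕ} (u v : Euc n → ℝ) (t : ℝ) : ℝ := P t (fun y => u y ^ 2 + v y ^ 2)

/-- The Gaussian interaction energy `P_t (u² v²)`. -/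
noncomputable def KK {n : ℕ} (u v : Euc n → ℝ) (t : ℝ) : ℝ := P t (fun y => u y ^ 2 * v y ^ 2)

/-- The Gaussian energy `P_t (|∇u|² + |∇v|² + u² v²)`. -/
noncomputable def EE {n : ℕ} (u v : Euc n → ℝ) (t : ℝ) : ℝ :=
  P t (fun y => gr2 u y + gr2 v y + u y ^ 2 * v y ^ 2)

/-- The parabolic frequency `2 t E / S`. -/
noncomputable def NN {n : ℕ} (u v : Euc n → ℝ) (t : ℝ) : ℝ := 2 * t * EE u v t / SS u v t

section general
variable {n : ℕ}

lemma lap_sq {f : Euc n → ℝ} (hf : ContDiff ℝ 2 f) (y : Euc n) :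
    lap (fun y => f y ^ 2) y = 2 * gr2 f y + 2 * f y * lap f y := by
  have h1f : ContDiff ℝ 1 f := hf.of_le (by norm_num)
  have hpc : ∀ i, ContDiff ℝ 1 (pd i f) := fun i => pd_contDiff (m := 1) (by simpa using hf) i
  have e : ∀ i, pd i (fun y => f y ^ 2) = fun y => (2 * f y) * pd i f y := fun i => by
    funext z
    rw [pd_sq (h1f.differentiable (by norm_num) z)]
  rw [lap_eq, lap_eq, gr2, Finset.mul_sum, Finset.mul_sum, ← Finset.sum_add_distrib]
  refine Finset.sum_congr rfl fun i _ => ?_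
  have d2 := h1f.differentiable (by norm_num) y
  have d3 := (hpc i).differentiable (by norm_num) y
  rw [e, pd_mul (d2.const_mul 2) d3, pd_const_mul 2 d2]
  ring

lemma lap_cont {f : Euc n → ℝ} (hf : ContDiff ℝ 2 f) : Continuous (lap f) := by
  have hpc : ∀ i, ContDiff ℝ 1 (pd i f) := fun i => pd_contDiff (m := 1) (by simpa using hf) i
  have : lap f = fun x => ∑ i, pd i (pd i f) x := rfl
  rw [this]
  exact continuous_finsetSum _ fun i _ => pd_cont (hpc i) i

lemma pd_sq_le_gr2 (f : Euc n → ℝ) (i : Fin n) (y : Euc n) : pd i f y ^ 2 ≤ gr2 f y :=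
  Finset.single_le_sum (f := fun i => pd i f y ^ 2) (fun _ _ => sq_nonneg _) (Finset.mem_univ i)

lemma GI.pd_sq {f : Euc n → ℝ} (hf : ContDiff ℝ 1 f) (hg : GI (gr2 f)) (i : Fin n) :
    GI (fun y => pd i f y ^ 2) := by
  refine hg.mono ((pd_cont hf i).pow 2) fun y => ?_
  rw [abs_of_nonneg (sq_nonneg _), abs_of_nonneg (gr2_nonneg f y)]
  exact pd_sq_le_gr2 f i y

lemma heat_sq {f : Euc n → ℝ} (hf : ContDiff ℝ 2 f) (h2 : GI (fun y => f y ^ 2)) (hg : GI (gr2 f))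
    (hl : GI (fun y => f y * lap f y)) {t : ℝ} (ht : 0 < t) :
    HasDerivAt (fun s => P s (fun y => f y ^ 2)) (2 * P t (fun y => gr2 f y + f y * lap f y)) t := by
  have h1f : ContDiff ℝ 1 f := hf.of_le (by norm_num)
  have e : ∀ i, pd i (fun y => f y ^ 2) = fun y => 2 * (f y * pd i f y) := fun i => by
    funext z
    rw [_root_.pd_sq (h1f.differentiable (by norm_num) z)]
    ring
  have el : lap (fun y => f y ^ 2) = fun y => 2 * (gr2 f y + f y * lap f y) := by
    funext y
    rw [lap_sq hf]
    ring
  rw [← P_const_mul, ← el]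
  refine P_heat (hf.pow 2) h2 (fun i => ?_) ?_ ht
  · rw [e]
    exact (GI.mul_of_sq hf.continuous (pd_cont h1f i) h2 (hg.pd_sq h1f i)).const_mul 2
  · rw [el]
    exact (hg.add hl).const_mul 2

lemma norm_sq_eq' (y : Euc n) : ‖y‖ ^ 2 = ∑ i, y i ^ 2 := by simp [EuclideanSpace.norm_sq_eq]

lemma yd_sq_le (f : Euc n → ℝ) (y : Euc n) : yd f y ^ 2 ≤ gr2 f y * ‖y‖ ^ 2 := by
  rw [norm_sq_eq']
  exact Finset.sum_mul_sq_le_sq_mul_sq _ _ _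

lemma yd_cont {f : Euc n → ℝ} (hf : ContDiff ℝ 1 f) : Continuous (yd f) := by
  unfold yd
  refine continuous_finsetSum _ fun i _ => (pd_cont hf i).mul (by fun_prop)

lemma GI.yd_sq {f : Euc n → ℝ} (hf : ContDiff ℝ 1 f) (hg : GI (gr2 f)) :
    GI (fun y => yd f y ^ 2) := by
  refine hg.mul_normsq.mono ((yd_cont hf).pow 2) fun y => ?_
  rw [abs_of_nonneg (sq_nonneg _), abs_of_nonneg (mul_nonneg (gr2_nonneg f y) (sq_nonneg _))]
  exact yd_sq_le f y

/-- Integration by parts for `f ∇f`. -/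
lemma P_ibp {f : Euc n → ℝ} (hf : ContDiff ℝ 2 f) (h2 : GI (fun y => f y ^ 2)) (hg : GI (gr2 f))
    (hl : GI (fun y => f y * lap f y)) {t : ℝ} (ht : 0 < t) :
    P t (fun y => gr2 f y + f y * lap f y) = P t (fun y => f y * yd f y) / (2 * t) := by
  have h1f : ContDiff ℝ 1 f := hf.of_le (by norm_num)
  have hpc : ∀ i, ContDiff ℝ 1 (pd i f) := fun i => pd_contDiff (m := 1) (by simpa using hf) i
  rw [P_div (X := fun i y => f y * pd i f y) (fun i => h1f.mul (hpc i))
    (fun i => GI.mul_of_sq hf.continuous (pd_cont h1f i) h2 (hg.pd_sq h1f i)) ?_ (hg.add hl) ht]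
  · congr 2
    funext y
    rw [yd, Finset.mul_sum]
    exact Finset.sum_congr rfl fun i _ => by ring
  · intro y
    rw [lap_eq, gr2, Finset.mul_sum, ← Finset.sum_add_distrib]
    refine Finset.sum_congr rfl fun i _ => ?_
    rw [pd_mul (h1f.differentiable (by norm_num) y) ((hpc i).differentiable (by norm_num) y)]
    ring

/-- The divergence of the part of the Pohozaev field carried by one function. -/
lemma pohozaev_div {f : Euc n → ℝ} (hf : ContDiff ℝ 2 f) (y : Euc n) :
    ∑ i, pd i (fun z => gr2 f z * z i - 2 * (yd f z * pd i f z)) y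
      = n * gr2 f y - 2 * gr2 f y - 2 * (yd f y * lap f y) := by
  have h1f : ContDiff ℝ 1 f := hf.of_le (by norm_num)
  have hpc : ∀ i, ContDiff ℝ 1 (pd i f) := fun i => pd_contDiff (m := 1) (by simpa using hf) i
  have dp : ∀ i, DifferentiableAt ℝ (pd i f) y := fun i => (hpc i).differentiable (by norm_num) y
  have dc : ∀ i, DifferentiableAt ℝ (fun z : Euc n => z i) y :=
    fun i => (coord_hasFDerivAt i y).differentiableAt
  have dg : DifferentiableAt ℝ (gr2 f) y := by
    unfold gr2
    exact DifferentiableAt.fun_sum fun i _ => (dp i).fun_pow 2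
  have dy : DifferentiableAt ℝ (yd f) y := by
    unfold yd
    exact DifferentiableAt.fun_sum fun i _ => (dp i).fun_mul (dc i)
  have pg : ∀ i, pd i (gr2 f) y = ∑ j, 2 * pd j f y * pd i (pd j f) y := by
    intro i
    unfold gr2
    rw [pd_sum _ (fun j _ => (dp j).fun_pow 2)]
    exact Finset.sum_congr rfl fun j _ => pd_sq (dp j) i
  have py : ∀ i, pd i (yd f) y = (∑ j, pd i (pd j f) y * y j) + pd i f y := by
    intro i
    unfold yd
    rw [pd_sum _ (fun j _ => (dp j).fun_mul (dc j))]
    have : ∀ j, pd i (fun z => pd j f z * z j) y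
        = pd i (pd j f) y * y j + (if i = j then pd j f y else 0) := fun j => by
      rw [pd_mul (dp j) (dc j), pd_coord]
      split_ifs <;> ring
    simp only [this, Finset.sum_add_distrib]
    simp
  have hterm : ∀ i, pd i (fun z => gr2 f z * z i - 2 * (yd f z * pd i f z)) y
      = pd i (gr2 f) y * y i + gr2 f y
        - 2 * ((∑ j, pd i (pd j f) y * y j) * pd i f y + pd i f y ^ 2 + yd f y * pd i (pd i f) y) := by
    intro i
    rw [pd_sub (dg.fun_mul (dc i)) ((dy.fun_mul (dp i)).const_mul 2), pd_mul dg (dc i), pd_coord,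
      pd_const_mul 2 (dy.fun_mul (dp i)), pd_mul dy (dp i), py]
    simp
    ring
  have hsym : ∑ i, pd i (gr2 f) y * y i = ∑ i, 2 * ((∑ j, pd i (pd j f) y * y j) * pd i f y) := by
    simp only [pg, Finset.sum_mul, Finset.mul_sum]
    rw [Finset.sum_comm]
    refine Finset.sum_congr rfl fun i _ => Finset.sum_congr rfl fun j _ => ?_
    rw [pd_comm hf i j]
    ring
  have hgr : gr2 f y = ∑ i, pd i f y ^ 2 := rfl
  have hl : yd f y * lap f y = ∑ i, yd f y * pd i (pd i f) y := by
    rw [lap_eq, Finset.mul_sum]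
  simp only [hterm, mul_add, Finset.sum_sub_distrib, Finset.sum_add_distrib, hsym,
    Finset.sum_const, Finset.card_univ, Fintype.card_fin, nsmul_eq_mul]
  rw [← Finset.mul_sum, ← Finset.mul_sum, ← Finset.mul_sum, ← hgr, ← hl]
  ring

end general

lemma le_of_deriv_nonneg {f f' : ℝ → ℝ} {a b : ℝ} (hab : a ≤ b)
    (hd : ∀ x ∈ Icc a b, HasDerivAt f (f' x) x) (hn : ∀ x ∈ Icc a b, 0 ≤ f' x) : f a ≤ f b := by
  have : MonotoneOn f (Icc a b) := by
    refine monotoneOn_of_deriv_nonneg (convex_Icc a b)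
      (fun x hx => (hd x hx).continuousAt.continuousWithinAt)
      (fun x hx => (hd x (interior_subset hx)).differentiableAt.differentiableWithinAt) ?_
    intro x hx
    rw [(hd x (interior_subset hx)).deriv]
    exact hn x (interior_subset hx)
  exact this (left_mem_Icc.2 hab) (right_mem_Icc.2 hab) hab

namespace Sol
variable {n : ℕ} {u v : Euc n → ℝ}

lemma swap (h : Sol u v) : Sol v u :=
  ⟨h.hv, h.hu, h.vp, h.up, h.ev, h.eu, by simpa only [add_comm] using h.gr⟩

lemma tr (h : Sol u v) (x : Euc n) : Sol (tr x u) (tr x v) := by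
  have hl : ∀ (f : Euc n → ℝ) y, lap (_root_.tr x f) y = lap f (x + y) := by
    intro f y
    rw [lap_eq, lap_eq]
    refine Finset.sum_congr rfl fun i _ => ?_
    have : pd i (_root_.tr x f) = fun z => pd i f (x + z) := by
      funext z
      exact pd_tr x z i
    rw [this, pd_tr]
  refine ⟨h.hu.comp (by fun_prop), h.hv.comp (by fun_prop), fun y => h.up _, fun y => h.vp _,
    fun y => ?_, fun y => ?_, ?_⟩
  · rw [hl, h.eu]; rfl
  · rw [hl, h.ev]; rfl
  · obtain ⟨C, hC⟩ := h.gr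
    have hC0 : 0 ≤ C := by
      have := hC 0
      have := h.up 0
      have := h.vp 0
      simp at *
      linarith
    refine ⟨C * (1 + ‖x‖), fun y => (hC (x + y)).trans ?_⟩
    rw [mul_assoc]
    gcongr
    nlinarith [norm_add_le x y, norm_nonneg x, norm_nonneg y]

lemma c2u (h : Sol u v) : ContDiff ℝ 2 u := h.hu.of_le (by norm_cast)
lemma c2v (h : Sol u v) : ContDiff ℝ 2 v := h.hv.of_le (by norm_cast)
lemma c1u (h : Sol u v) : ContDiff ℝ 1 u := h.c2u.of_le (by norm_num)
lemma c1v (h : Sol u v) : ContDiff ℝ 1 v := h.c2v.of_le (by norm_num)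
lemma cu (h : Sol u v) : Continuous u := h.hu.continuous
lemma cv (h : Sol u v) : Continuous v := h.hv.continuous

/-- Continuous functions dominated by a power of `u + v` are Gaussian integrable. -/
lemma gi (h : Sol u v) {q : Euc n → ℝ} (hq : Continuous q) {A : ℝ} {k : ℕ}
    (hb : ∀ y, |q y| ≤ A * (u y + v y) ^ k) : GI q := by
  obtain ⟨C, hC⟩ := h.gr
  refine GI.of_growth (C := |A| * C ^ k) (k := k) hq fun y => (hb y).trans ?_
  have h1 := h.up y
  have h2 := h.vp y
  rw [mul_assoc, ← mul_pow]
  gcongr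
  · exact le_abs_self A
  · exact hC y

lemma gi_s (h : Sol u v) (k : ℕ) : GI (fun y => (u y + v y) ^ k) := by
  have := h.cu
  have := h.cv
  refine h.gi (A := 1) (k := k) (by fun_prop) fun y => ?_
  have h1 := h.up y
  have h2 := h.vp y
  rw [one_mul, abs_of_nonneg (by positivity)]

lemma gi_u (h : Sol u v) : GI u := h.gi (A := 1) (k := 1) h.cu fun y => by
  have h1 := h.up y
  have h2 := h.vp y
  rw [abs_of_pos h1]; linarith

lemma gi_v (h : Sol u v) : GI v := h.swap.gi_u

lemma gi_u2 (h : Sol u v) : GI (fun y => u y ^ 2) := by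
  have := h.cu
  refine h.gi (A := 1) (k := 2) (by fun_prop) fun y => ?_
  have h1 := h.up y
  have h2 := h.vp y
  rw [abs_of_nonneg (by positivity)]; nlinarith

lemma gi_v2 (h : Sol u v) : GI (fun y => v y ^ 2) := h.swap.gi_u2

lemma gi_w (h : Sol u v) : GI (fun y => u y ^ 2 * v y ^ 2) := by
  have := h.cu
  have := h.cv
  refine h.gi (A := 1) (k := 4) (by fun_prop) fun y => ?_
  have h1 := h.up y
  have h2 := h.vp y
  rw [abs_of_nonneg (by positivity), ← mul_pow, one_mul]
  calc (u y * v y) ^ 2 ≤ ((u y + v y) ^ 2) ^ 2 := by gcongr; nlinarith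
    _ = _ := by ring

lemma ulap (h : Sol u v) (y : Euc n) : u y * lap u y = u y ^ 2 * v y ^ 2 := by
  rw [h.eu]; ring

lemma vlap (h : Sol u v) (y : Euc n) : v y * lap v y = u y ^ 2 * v y ^ 2 := by
  rw [h.ev]; ring

lemma gi_gu (h : Sol u v) : GI (gr2 u) :=
  GI.grad h.c2u (fun y => by rw [h.ulap]; positivity) h.gi_u2

lemma gi_gv (h : Sol u v) : GI (gr2 v) := h.swap.gi_gu

lemma gi_rho (h : Sol u v) : GI (fun y => u y ^ 2 + v y ^ 2) := h.gi_u2.add h.gi_v2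

lemma gi_e (h : Sol u v) : GI (fun y => gr2 u y + gr2 v y + u y ^ 2 * v y ^ 2) :=
  (h.gi_gu.add h.gi_gv).add h.gi_w

lemma SS_pos (h : Sol u v) {t : ℝ} (ht : 0 < t) : 0 < SS u v t :=
  P_pos h.gi_rho ht fun y => by have := h.up y; positivity

lemma KK_pos (h : Sol u v) {t : ℝ} (ht : 0 < t) : 0 < KK u v t :=
  P_pos h.gi_w ht fun y => by have := h.up y; have := h.vp y; positivity

lemma KK_le_EE (h : Sol u v) {t : ℝ} (ht : 0 < t) : KK u v t ≤ EE u v t :=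
  P_mono h.gi_w h.gi_e ht fun y => by
    have := gr2_nonneg u y
    have := gr2_nonneg v y
    linarith

lemma EE_pos (h : Sol u v) {t : ℝ} (ht : 0 < t) : 0 < EE u v t :=
  (h.KK_pos ht).trans_le (h.KK_le_EE ht)

lemma NN_pos (h : Sol u v) {t : ℝ} (ht : 0 < t) : 0 < NN u v t := by
  have := h.EE_pos ht
  have := h.SS_pos ht
  unfold NN
  positivity

lemma hasDerivAt_u2 (h : Sol u v) {t : ℝ} (ht : 0 < t) :
    HasDerivAt (fun s => P s (fun y => u y ^ 2)) (2 * P t (fun y => gr2 u y + u y ^ 2 * v y ^ 2)) t := by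
  have := heat_sq h.c2u h.gi_u2 h.gi_gu (h.gi_w.congr fun y => (h.ulap y).symm) ht
  simpa only [h.ulap] using this

lemma hasDerivAt_v2 (h : Sol u v) {t : ℝ} (ht : 0 < t) :
    HasDerivAt (fun s => P s (fun y => v y ^ 2)) (2 * P t (fun y => gr2 v y + u y ^ 2 * v y ^ 2)) t := by
  have := heat_sq h.c2v h.gi_v2 h.gi_gv (h.gi_w.congr fun y => (h.vlap y).symm) ht
  simpa only [h.vlap] using this

lemma EE_split (h : Sol u v) {t : ℝ} (ht : 0 < t) :
    P t (fun y => gr2 u y + u y ^ 2 * v y ^ 2) + P t (fun y => gr2 v y + u y ^ 2 * v y ^ 2)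
      = EE u v t + KK u v t := by
  rw [P_add h.gi_gu h.gi_w ht, P_add h.gi_gv h.gi_w ht, EE, KK, P_add (h.gi_gu.add h.gi_gv) h.gi_w ht,
    P_add h.gi_gu h.gi_gv ht]
  ring

lemma SS_eq (h : Sol u v) {t : ℝ} (ht : 0 < t) :
    SS u v t = P t (fun y => u y ^ 2) + P t (fun y => v y ^ 2) := P_add h.gi_u2 h.gi_v2 ht

lemma hasDerivAt_SS (h : Sol u v) {t : ℝ} (ht : 0 < t) :
    HasDerivAt (SS u v) (2 * EE u v t + 2 * KK u v t) t := by
  have h1 := (h.hasDerivAt_u2 ht).add (h.hasDerivAt_v2 ht)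
  rw [← mul_add, h.EE_split ht, mul_add] at h1
  refine h1.congr_of_eventuallyEq ?_
  filter_upwards [lt_mem_nhds ht] with s hs
  exact h.SS_eq hs

lemma gi_R (h : Sol u v) : GI (fun y => yd u y ^ 2 + yd v y ^ 2) :=
  (h.gi_gu.yd_sq h.c1u).add (h.gi_gv.yd_sq h.c1v)

/-- The Cauchy–Schwarz step behind the monotonicity of the frequency. -/
lemma cs_R (h : Sol u v) {t : ℝ} (ht : 0 < t) :
    4 * t ^ 2 * (EE u v t + KK u v t) ^ 2
      ≤ SS u v t * P t (fun y => yd u y ^ 2 + yd v y ^ 2) := by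
  have iu := P_ibp h.c2u h.gi_u2 h.gi_gu (h.gi_w.congr fun y => (h.ulap y).symm) ht
  have iv := P_ibp h.c2v h.gi_v2 h.gi_gv (h.gi_w.congr fun y => (h.vlap y).symm) ht
  simp only [h.ulap] at iu
  simp only [h.vlap] at iv
  have hs := h.EE_split ht
  rw [iu, iv] at hs
  have cu := P_cs h.cu (yd_cont h.c1u) h.gi_u2 (h.gi_gu.yd_sq h.c1u) ht
  have cv := P_cs h.cv (yd_cont h.c1v) h.gi_v2 (h.gi_gv.yd_sq h.c1v) ht
  rw [h.SS_eq ht, P_add (h.gi_gu.yd_sq h.c1u) (h.gi_gv.yd_sq h.c1v) ht]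
  have hA1 : 0 ≤ P t (fun y => u y ^ 2) := P_nonneg ht fun y => sq_nonneg _
  have hA2 : 0 ≤ P t (fun y => v y ^ 2) := P_nonneg ht fun y => sq_nonneg _
  have hB1 : 0 ≤ P t (fun y => yd u y ^ 2) := P_nonneg ht fun y => sq_nonneg _
  have hB2 : 0 ≤ P t (fun y => yd v y ^ 2) := P_nonneg ht fun y => sq_nonneg _
  rw [← hs]
  generalize P t (fun y => u y * yd u y) = a at *
  generalize P t (fun y => v y * yd v y) = b at *
  generalize P t (fun y => u y ^ 2) = A1 at *
  generalize P t (fun y => v y ^ 2) = A2 at *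
  generalize P t (fun y => yd u y ^ 2) = B1 at *
  generalize P t (fun y => yd v y ^ 2) = B2 at *
  have e : 4 * t ^ 2 * (a / (2 * t) + b / (2 * t)) ^ 2 = (a + b) ^ 2 := by field_simp; norm_num
  rw [e]
  have h2 : (2 * (a * b)) ^ 2 ≤ (A1 * B2 + A2 * B1) ^ 2 := by
    have := mul_le_mul cu cv (sq_nonneg b) (mul_nonneg hA1 hB1)
    nlinarith [sq_nonneg (A1 * B2 - A2 * B1)]
  have h3 : 2 * (a * b) ≤ A1 * B2 + A2 * B1 := abs_le_of_sq_le_sq' h2 (by positivity) |>.2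
  nlinarith

/-- The Pohozaev identity, as a formula for the derivative of the Gaussian energy. -/
lemma hasDerivAt_EE (h : Sol u v) {t : ℝ} (ht : 0 < t) :
    HasDerivAt (EE u v) (-(EE u v t - KK u v t) / t
      + P t (fun y => yd u y ^ 2 + yd v y ^ 2) / (2 * t ^ 2)) t := by
  have hw := P_hasDerivAt_weight h.gi_e ht
  refine hw.congr_deriv ?_
  set e : Euc n → ℝ := fun y => gr2 u y + gr2 v y + u y ^ 2 * v y ^ 2 with he
  have gyu : ∀ {f : Euc n → ℝ}, ContDiff ℝ 1 f → GI (gr2 f) → ∀ i, GI (fun y => yd f y * pd i f y) :=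
    fun hf hg i => GI.mul_of_sq (yd_cont hf) (pd_cont hf i) (hg.yd_sq hf) (hg.pd_sq hf i)
  have hyc : ∀ {f : Euc n → ℝ}, ContDiff ℝ 2 f → ContDiff ℝ 1 (yd f) := fun hf => by
    have hpc := fun i => pd_contDiff (m := 1) (by simpa using hf) i
    unfold yd
    exact ContDiff.sum fun i _ => (hpc i).mul (by fun_prop)
  have hgc : ∀ {f : Euc n → ℝ}, ContDiff ℝ 2 f → ContDiff ℝ 1 (gr2 f) := fun hf => by
    have hpc := fun i => pd_contDiff (m := 1) (by simpa using hf) i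
    unfold gr2
    exact ContDiff.sum fun i _ => (hpc i).pow 2
  let XF : (Euc n → ℝ) → Fin n → Euc n → ℝ :=
    fun f i z => gr2 f z * z i - 2 * (yd f z * pd i f z)
  have hXF : ∀ {f : Euc n → ℝ}, ContDiff ℝ 2 f → ∀ i, ContDiff ℝ 1 (XF f i) := fun hf i => by
    have hpc := fun i => pd_contDiff (m := 1) (by simpa using hf) i
    exact ((hgc hf).mul (by fun_prop)).sub (contDiff_const.mul ((hyc hf).mul (hpc i)))
  have hwc : ContDiff ℝ 1 (fun y => u y ^ 2 * v y ^ 2) := (h.c1u.pow 2).mul (h.c1v.pow 2)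
  have hX : ∀ i, ContDiff ℝ 1 (fun z : Euc n => XF u i z + XF v i z + u z ^ 2 * v z ^ 2 * z i) :=
    fun i => ((hXF h.c2u i).add (hXF h.c2v i)).add (hwc.mul (by fun_prop))
  have gXF : ∀ {f : Euc n → ℝ}, ContDiff ℝ 1 f → GI (gr2 f) → ∀ i, GI (XF f i) := fun hf hg i =>
    (hg.mul_coord i).sub ((gyu hf hg i).const_mul 2)
  have gX : ∀ i, GI (fun z : Euc n => XF u i z + XF v i z + u z ^ 2 * v z ^ 2 * z i) := fun i =>
    ((gXF h.c1u h.gi_gu i).add (gXF h.c1v h.gi_gv i)).add (h.gi_w.mul_coord i)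
  have gD : GI (fun y => (n - 2) * e y + 2 * (u y ^ 2 * v y ^ 2)) :=
    (h.gi_e.const_mul _).add (h.gi_w.const_mul 2)
  have hdiv : ∀ y, ∑ i, pd i (fun z : Euc n => XF u i z + XF v i z + u z ^ 2 * v z ^ 2 * z i) y
      = (n - 2) * e y + 2 * (u y ^ 2 * v y ^ 2) := by
    intro y
    have du := h.c1u.differentiable (by norm_num) y
    have dv := h.c1v.differentiable (by norm_num) y
    have dc : ∀ i, DifferentiableAt ℝ (fun z : Euc n => z i) y :=
      fun i => (coord_hasFDerivAt i y).differentiableAt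
    have dw := hwc.differentiable (by norm_num) y
    have dX : ∀ {f : Euc n → ℝ}, ContDiff ℝ 2 f → ∀ i, DifferentiableAt ℝ (XF f i) y :=
      fun hf i => (hXF hf i).differentiable (by norm_num) y
    have t1 : ∀ i, pd i (fun z : Euc n => XF u i z + XF v i z + u z ^ 2 * v z ^ 2 * z i) y
        = pd i (XF u i) y + pd i (XF v i) y
          + ((2 * u y * v y ^ 2 * (pd i u y * y i) + 2 * u y ^ 2 * v y * (pd i v y * y i))
            + u y ^ 2 * v y ^ 2) := by
      intro i
      rw [pd_add ((dX h.c2u i).fun_add (dX h.c2v i)) (dw.fun_mul (dc i)),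
        pd_add (dX h.c2u i) (dX h.c2v i), pd_mul dw (dc i), pd_coord,
        pd_mul (du.fun_pow 2) (dv.fun_pow 2), pd_sq du, pd_sq dv]
      simp
      ring
    simp only [t1, Finset.sum_add_distrib, ← Finset.mul_sum, Finset.sum_const, Finset.card_univ,
      Fintype.card_fin, nsmul_eq_mul]
    rw [pohozaev_div h.c2u, pohozaev_div h.c2v, h.eu, h.ev, he]
    simp only [← yd.eq_1]
    ring
  have hpd := P_div hX gX hdiv gD ht
  have hrad : (fun y => ∑ i, (XF u i y + XF v i y + u y ^ 2 * v y ^ 2 * y i) * y i)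
      = fun y => e y * ‖y‖ ^ 2 - 2 * (yd u y ^ 2 + yd v y ^ 2) := by
    funext y
    have : ∀ i, (XF u i y + XF v i y + u y ^ 2 * v y ^ 2 * y i) * y i
        = e y * y i ^ 2 - 2 * (yd u y * (pd i u y * y i) + yd v y * (pd i v y * y i)) := by
      intro i
      simp only [XF, he]
      ring
    simp only [this, Finset.sum_sub_distrib, ← Finset.mul_sum, Finset.sum_add_distrib]
    rw [norm_sq_eq']
    simp only [← yd.eq_1]
    ring
  rw [hrad, P_sub h.gi_e.mul_normsq (h.gi_R.const_mul 2) ht, P_const_mul,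
    P_add (h.gi_e.const_mul _) (h.gi_w.const_mul 2) ht, P_const_mul, P_const_mul] at hpd
  have hw2 : P t (fun y => e y * (‖y‖ ^ 2 / (4 * t ^ 2) - n / (2 * t)))
      = 1 / (4 * t ^ 2) * P t (fun y => e y * ‖y‖ ^ 2) - n / (2 * t) * P t e := by
    rw [← P_const_mul, ← P_const_mul, ← P_sub (h.gi_e.mul_normsq.const_mul _) (h.gi_e.const_mul _) ht]
    congr 1
    funext y
    ring
  rw [hw2]
  have hE : EE u v t = P t e := rfl
  have hK : KK u v t = P t (fun y => u y ^ 2 * v y ^ 2) := rfl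
  rw [hE, hK]
  have hq : P t (fun y => e y * ‖y‖ ^ 2) = 2 * t * ((n - 2) * P t e
      + 2 * P t (fun y => u y ^ 2 * v y ^ 2)) + 2 * P t (fun y => yd u y ^ 2 + yd v y ^ 2) := by
    rw [eq_div_iff (by positivity)] at hpd
    linarith
  rw [hq]
  field_simp
  ring

end Sol

lemma P_normsq {n : ℕ} {t : ℝ} (ht : 0 < t) : P t (fun y : Euc n => ‖y‖ ^ 2) = 2 * n * t := by
  have h := P_div (n := n) (X := fun i y => y i) (fun i => by fun_prop)
    (fun i => by simpa using (GI.const (n := n) 1).mul_coord i) (D := fun _ => (n : ℝ))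
    (fun y => by simp [pd_coord]) (GI.const _) ht
  rw [P_const ht, eq_div_iff (by positivity)] at h
  have e : (fun y : Euc n => ‖y‖ ^ 2) = fun y => ∑ i, y i * y i := by
    funext y
    rw [norm_sq_eq']
    exact Finset.sum_congr rfl fun i _ => by ring
  rw [e, ← h]
  ring

namespace Sol
variable {n : ℕ} {u v : Euc n → ℝ}

/-- The frequency is nondecreasing, with derivative at least `2 K / S`. -/
lemma hasDerivAt_NN (h : Sol u v) {t : ℝ} (ht : 0 < t) :
    ∃ D, HasDerivAt (NN u v) D t ∧ 2 * KK u v t / SS u v t ≤ D := by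
  have hS := h.SS_pos ht
  have hK := h.KK_pos ht
  have hE := h.EE_pos ht
  have hd := (((hasDerivAt_id t).const_mul 2).mul (h.hasDerivAt_EE ht)).div (h.hasDerivAt_SS ht) hS.ne'
  refine ⟨_, hd, ?_⟩
  have hcs := h.cs_R ht
  simp only [Pi.mul_apply, id]
  rw [div_le_div_iff₀ hS (by positivity)]
  generalize P t (fun y => yd u y ^ 2 + yd v y ^ 2) = R at *
  generalize SS u v t = S at *
  generalize EE u v t = E at *
  generalize KK u v t = K at *
  have e : ((2 * 1 * E + 2 * t * (-(E - K) / t + R / (2 * t ^ 2))) * S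
      - 2 * t * E * (2 * E + 2 * K)) * S
      = (2 * K * S + (S * R) / t - 2 * t * E * (2 * E + 2 * K)) * S := by
    field_simp
    ring
  rw [e, show 2 * K * S ^ 2 = (2 * K * S) * S by ring]
  refine mul_le_mul_of_nonneg_right ?_ hS.le
  have h2 : 4 * t * (E + K) ^ 2 ≤ (S * R) / t := by
    rw [le_div_iff₀ ht]
    nlinarith
  nlinarith [mul_pos ht hK, mul_pos (mul_pos ht hK) hE, mul_pos (mul_pos ht hK) hK]

lemma NN_mono (h : Sol u v) {s t : ℝ} (hs : 0 < s) (hst : s ≤ t) : NN u v s ≤ NN u v t := by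
  have hp : ∀ x ∈ Icc s t, 0 < x := fun x hx => hs.trans_le hx.1
  choose! D hD using fun (x : ℝ) (hx : 0 < x) => h.hasDerivAt_NN hx
  refine le_of_deriv_nonneg (f' := D) hst (fun x hx => (hD x (hp x hx)).1) fun x hx => ?_
  have := h.KK_pos (hp x hx)
  have := h.SS_pos (hp x hx)
  exact le_trans (by positivity) (hD x (hp x hx)).2

lemma hasDerivAt_logSS (h : Sol u v) {t : ℝ} (ht : 0 < t) :
    HasDerivAt (fun s => Real.log (SS u v s)) (NN u v t / t + 2 * KK u v t / SS u v t) t := by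
  have hS := h.SS_pos ht
  refine ((h.hasDerivAt_SS ht).log hS.ne').congr_deriv ?_
  unfold NN
  field_simp

lemma logSS_ge (h : Sol u v) {s t : ℝ} (hs : 0 < s) (hst : s ≤ t) :
    Real.log (SS u v s) + NN u v s * (Real.log t - Real.log s) ≤ Real.log (SS u v t) := by
  have hp : ∀ x ∈ Icc s t, 0 < x := fun x hx => hs.trans_le hx.1
  have := le_of_deriv_nonneg (f := fun x => Real.log (SS u v x) - NN u v s * Real.log x) hst
    (fun x hx => (h.hasDerivAt_logSS (hp x hx)).sub
      ((Real.hasDerivAt_log (hp x hx).ne').const_mul (NN u v s))) (fun x hx => ?_)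
  · linarith
  · have h1 := h.NN_mono hs hx.1
    have hx0 := hp x hx
    have h2 := h.KK_pos hx0
    have h3 := h.SS_pos hx0
    have e : NN u v x / x + 2 * KK u v x / SS u v x - NN u v s * x⁻¹
        = (NN u v x - NN u v s) / x + 2 * KK u v x / SS u v x := by
      field_simp
      ring
    rw [e]
    have : 0 ≤ NN u v x - NN u v s := by linarith
    positivity

lemma logSS_le (h : Sol u v) {s t : ℝ} (hs : 0 < s) (hst : s ≤ t) :
    Real.log (SS u v t)
      ≤ Real.log (SS u v s) + NN u v t * (Real.log t - Real.log s) + (NN u v t - NN u v s) := by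
  have hp : ∀ x ∈ Icc s t, 0 < x := fun x hx => hs.trans_le hx.1
  choose! D hD using fun (x : ℝ) (hx : 0 < x) => h.hasDerivAt_NN hx
  have := le_of_deriv_nonneg
    (f := fun x => NN u v t * Real.log x + NN u v x - Real.log (SS u v x)) hst
    (fun x hx => (((Real.hasDerivAt_log (hp x hx).ne').const_mul (NN u v t)).add
      (hD x (hp x hx)).1).sub (h.hasDerivAt_logSS (hp x hx))) (fun x hx => ?_)
  · linarith
  · have hx0 := hp x hx
    have h1 := h.NN_mono hx0 hx.2
    have h2 := (hD x hx0).2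
    have e : NN u v t * x⁻¹ + D x - (NN u v x / x + 2 * KK u v x / SS u v x)
        = (NN u v t - NN u v x) / x + (D x - 2 * KK u v x / SS u v x) := by
      field_simp
      ring
    rw [e]
    have h3 : 0 ≤ NN u v t - NN u v x := by linarith
    have h4 : 0 ≤ D x - 2 * KK u v x / SS u v x := by linarith
    positivity

/-- Linear growth of the solution gives linear growth of the Gaussian height. -/
lemma SS_growth (h : Sol u v) : ∃ C, 0 < C ∧ ∀ t, 0 < t → SS u v t ≤ C * (1 + t) := by
  obtain ⟨C, hC⟩ := h.gr
  refine ⟨2 * C ^ 2 * (1 + 2 * n) + 1, by positivity, fun t ht => ?_⟩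
  have h1 : SS u v t ≤ P t (fun y : Euc n => 2 * C ^ 2 * (1 + ‖y‖ ^ 2)) := by
    refine P_mono h.gi_rho ?_ ht fun y => ?_
    · have : GI (fun y : Euc n => ‖y‖ ^ 2) := by simpa using (GI.const (n := n) 1).mul_normsq
      exact ((GI.const 1).add this).const_mul _
    · have h1 := h.up y
      have h2 := h.vp y
      have h3 := hC y
      calc u y ^ 2 + v y ^ 2 ≤ (u y + v y) ^ 2 := by nlinarith
        _ ≤ (C * (1 + ‖y‖)) ^ 2 := by gcongr
        _ = C ^ 2 * (1 + ‖y‖) ^ 2 := by ring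
        _ ≤ C ^ 2 * (2 * (1 + ‖y‖ ^ 2)) := by gcongr; nlinarith [sq_nonneg (1 - ‖y‖)]
        _ = _ := by ring
  have gn : GI (fun y : Euc n => ‖y‖ ^ 2) := by simpa using (GI.const (n := n) 1).mul_normsq
  rw [P_const_mul, P_add (GI.const 1) gn ht, P_const ht, P_normsq ht] at h1
  refine h1.trans ?_
  have : 0 ≤ C ^ 2 := sq_nonneg C
  have hn : 0 ≤ (n : ℝ) := n.cast_nonneg
  have := mul_nonneg this hn
  have := mul_nonneg this ht.le
  have := mul_nonneg (sq_nonneg C) ht.le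
  nlinarith

/-- Since the frequency is nondecreasing, a value above `1` would make the height grow faster than `t`,
which linear growth of `u + v` excludes. -/
lemma NN_le_one (h : Sol u v) {t : ℝ} (ht : 0 < t) : NN u v t ≤ 1 := by
  by_contra hN
  push Not at hN
  obtain ⟨C, hC0, hC⟩ := h.SS_growth
  -- `log S(τ) ≥ N(t) log τ - const` contradicts `S(τ) ≤ C(1 + τ)` as `τ → ∞`
  have key : ∀ τ, max t 1 ≤ τ → (NN u v t - 1) * Real.log τ
      ≤ Real.log (2 * C) - Real.log (SS u v t) + NN u v t * Real.log t := by
    intro τ hτ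
    have h1 : t ≤ τ := (le_max_left _ _).trans hτ
    have h2 : 1 ≤ τ := (le_max_right _ _).trans hτ
    have a := h.logSS_ge ht h1
    have hτ0 : 0 < τ := by linarith
    have b : Real.log (SS u v τ) ≤ Real.log (2 * C * τ) := by
      refine Real.log_le_log (h.SS_pos hτ0) ((hC τ hτ0).trans ?_)
      nlinarith
    rw [Real.log_mul (by positivity) (by positivity)] at b
    linarith
  have hlim : Tendsto (fun τ => (NN u v t - 1) * Real.log τ) atTop atTop :=
    Real.tendsto_log_atTop.const_mul_atTop (by linarith)
  obtain ⟨τ, h1, h2⟩ := ((hlim.eventually_gt_atTop _).and (eventually_ge_atTop (max t 1))).exists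
  exact absurd (key τ h2) (not_le.2 h1)

lemma SS_mono (h : Sol u v) {s t : ℝ} (hs : 0 < s) (hst : s ≤ t) : SS u v s ≤ SS u v t := by
  refine le_of_deriv_nonneg hst (fun x hx => h.hasDerivAt_SS (hs.trans_le hx.1)) fun x hx => ?_
  have := h.EE_pos (hs.trans_le hx.1)
  have := h.KK_pos (hs.trans_le hx.1)
  positivity

/-- `S` grows at most linearly, with the defect measured by the frequency. -/
lemma SS_le' (h : Sol u v) {s t : ℝ} (hs : 0 < s) (hst : s ≤ t) :
    SS u v t ≤ (t / s) * Real.exp (NN u v t - NN u v s) * SS u v s := by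
  have ht : 0 < t := hs.trans_le hst
  have h1 := h.logSS_le hs hst
  have h2 := h.NN_le_one ht
  have h3 : 0 ≤ Real.log t - Real.log s := sub_nonneg.2 (Real.log_le_log hs hst)
  have hS := h.SS_pos hs
  rw [← Real.log_le_log_iff (h.SS_pos ht) (by positivity), Real.log_mul (by positivity) hS.ne',
    Real.log_mul (by positivity) (Real.exp_pos _).ne', Real.log_exp,
    Real.log_div ht.ne' hs.ne']
  nlinarith [mul_le_mul_of_nonneg_right h2 h3]

lemma SS_le (h : Sol u v) {s t : ℝ} (hs : 0 < s) (hst : s ≤ t) :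
    SS u v t ≤ Real.exp 1 * (t / s) * SS u v s := by
  have ht : 0 < t := hs.trans_le hst
  refine (h.SS_le' hs hst).trans ?_
  have := h.SS_pos hs
  have h1 := h.NN_le_one ht
  have h2 := h.NN_pos hs
  rw [mul_comm (Real.exp 1)]
  gcongr
  linarith

/-- The Gaussian height dominates the pointwise height. -/
lemma rho_le_SS (h : Sol u v) {t : ℝ} (ht : 0 < t) : u 0 ^ 2 + v 0 ^ 2 ≤ SS u v t := by
  refine le_of_tendsto (P_tendsto h.gi_rho) ?_
  filter_upwards [Ioc_mem_nhdsGT ht] with s hs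
  exact h.SS_mono hs.1 hs.2

end Sol

/-! ### Comparison of heat kernels with different centres and times -/

section kernel
variable {n : ℕ}

lemma G_comp {t l : ℝ} (ht : 0 < t) (hl : 1 < l) (z w : Euc n) :
    G t (z + w) ≤ l ^ (n / 2 : ℝ) * Real.exp (‖w‖ ^ 2 / (4 * t * (l - 1))) * G (l * t) z := by
  have hl0 : 0 < l := by linarith
  have hl1 : 0 < l - 1 := by linarith
  unfold G
  have e : (4 * Real.pi * t) ^ (-(n / 2 : ℝ))
      = l ^ (n / 2 : ℝ) * (4 * Real.pi * (l * t)) ^ (-(n / 2 : ℝ)) := by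
    rw [show 4 * Real.pi * (l * t) = l * (4 * Real.pi * t) by ring,
      Real.mul_rpow hl0.le (by positivity), ← mul_assoc, ← Real.rpow_add hl0]
    simp
  rw [e]
  have e2 : l ^ (n / 2 : ℝ) * Real.exp (‖w‖ ^ 2 / (4 * t * (l - 1)))
      * ((4 * Real.pi * (l * t)) ^ (-(n / 2 : ℝ)) * Real.exp (-(‖z‖ ^ 2 / (4 * (l * t)))))
      = l ^ (n / 2 : ℝ) * (4 * Real.pi * (l * t)) ^ (-(n / 2 : ℝ))
        * Real.exp (‖w‖ ^ 2 / (4 * t * (l - 1)) + -(‖z‖ ^ 2 / (4 * (l * t)))) := by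
    rw [Real.exp_add]
    ring
  rw [e2]
  gcongr
  have h1 : ‖z‖ ≤ ‖z + w‖ + ‖w‖ := by
    have := norm_sub_le (z + w) w
    simpa using this
  have h2 : ‖z‖ ^ 2 ≤ l * ‖z + w‖ ^ 2 + l / (l - 1) * ‖w‖ ^ 2 := by
    have h3 : ‖z‖ ^ 2 ≤ (‖z + w‖ + ‖w‖) ^ 2 := by gcongr
    have h4 : l * ‖z + w‖ ^ 2 + l / (l - 1) * ‖w‖ ^ 2 - (‖z + w‖ + ‖w‖) ^ 2
        = ((l - 1) * ‖z + w‖ - ‖w‖) ^ 2 / (l - 1) := by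
      field_simp
      ring
    have h5 : 0 ≤ ((l - 1) * ‖z + w‖ - ‖w‖) ^ 2 / (l - 1) := by positivity
    linarith
  have h6 : ‖z‖ ^ 2 / (4 * (l * t)) ≤ ‖z + w‖ ^ 2 / (4 * t) + ‖w‖ ^ 2 / (4 * t * (l - 1)) := by
    rw [div_le_iff₀ (by positivity)]
    refine h2.trans (le_of_eq ?_)
    field_simp
  linarith

lemma G_comp0 {t l : ℝ} (ht : 0 < t) (hl : 1 ≤ l) (z : Euc n) :
    G t z ≤ l ^ (n / 2 : ℝ) * G (l * t) z := by
  rcases hl.eq_or_lt with rfl | hl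
  · simp
  · simpa using G_comp ht hl z 0

lemma P_tr_eq (f : Euc n → ℝ) (x x' : Euc n) (t : ℝ) :
    P t (tr x f) = ∫ z, f (x' + z) * G t (z + (x' - x)) := by
  unfold P tr
  rw [← integral_add_right_eq_self (fun y => f (x + y) * G t y) (x' - x)]
  refine integral_congr_ae (Eventually.of_forall fun z => ?_)
  simp only
  congr 2
  abel

/-- Gaussian averages of a nonnegative function at nearby centres are comparable, at the cost of
an increase of the time. -/
lemma P_comp {f : Euc n → ℝ} (hf : GI f) (h0 : ∀ y, 0 ≤ f y) {t l : ℝ} (ht : 0 < t) (hl : 1 < l)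
    (x x' : Euc n) :
    P t (tr x f) ≤ l ^ (n / 2 : ℝ) * Real.exp (‖x' - x‖ ^ 2 / (4 * t * (l - 1)))
      * P (l * t) (tr x' f) := by
  have hl0 : 0 < l := by linarith
  rw [P_tr_eq f x x', P, ← integral_const_mul]
  refine integral_mono_of_nonneg (Eventually.of_forall fun z =>
    mul_nonneg (h0 _) (G_pos ht _).le) (((hf.tr x').integrable (by positivity)).const_mul _)
    (Eventually.of_forall fun z => ?_)
  have := mul_le_mul_of_nonneg_left (G_comp ht hl z (x' - x)) (h0 (x' + z))
  refine this.trans (le_of_eq ?_)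
  unfold tr
  ring

lemma P_comp0 {f : Euc n → ℝ} (hf : GI f) (h0 : ∀ y, 0 ≤ f y) {t l : ℝ} (ht : 0 < t) (hl : 1 ≤ l) :
    P t f ≤ l ^ (n / 2 : ℝ) * P (l * t) f := by
  have hl0 : 0 < l := by linarith
  rw [P, P, ← integral_const_mul]
  refine integral_mono_of_nonneg (Eventually.of_forall fun z =>
    mul_nonneg (h0 _) (G_pos ht _).le) ((hf.integrable (by positivity)).const_mul _)
    (Eventually.of_forall fun z => ?_)
  have := mul_le_mul_of_nonneg_left (G_comp0 ht hl z) (h0 z)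
  refine this.trans (le_of_eq ?_)
  ring

lemma exp_mul_G {t : ℝ} (ht : 0 < t) (y : Euc n) :
    Real.exp (‖y‖ ^ 2 / (8 * t)) * G t y = 2 ^ (n / 2 : ℝ) * G (2 * t) y := by
  unfold G
  have e : (4 * Real.pi * t) ^ (-(n / 2 : ℝ))
      = 2 ^ (n / 2 : ℝ) * (4 * Real.pi * (2 * t)) ^ (-(n / 2 : ℝ)) := by
    rw [show 4 * Real.pi * (2 * t) = 2 * (4 * Real.pi * t) by ring,
      Real.mul_rpow (x := 2) (y := 4 * Real.pi * t) (by norm_num) (by positivity), ← mul_assoc,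
      ← Real.rpow_add (by norm_num : (0 : ℝ) < 2)]
    simp
  have e2 : Real.exp (‖y‖ ^ 2 / (8 * t)) * Real.exp (-(‖y‖ ^ 2 / (4 * t)))
      = Real.exp (-(‖y‖ ^ 2 / (4 * (2 * t)))) := by
    rw [← Real.exp_add]
    congr 1
    field_simp
    ring
  rw [e, ← e2]
  ring

lemma integral_exp_G {t : ℝ} (ht : 0 < t) :
    ∫ y : Euc n, Real.exp (‖y‖ ^ 2 / (8 * t)) * G t y = 2 ^ (n / 2 : ℝ) := by
  simp only [exp_mul_G ht]
  rw [integral_const_mul, integral_G (by positivity), mul_one]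

lemma integrable_exp_G {t : ℝ} (ht : 0 < t) :
    Integrable (fun y : Euc n => Real.exp (‖y‖ ^ 2 / (8 * t)) * G t y) := by
  simp only [exp_mul_G ht]
  have := ((GI.const (n := n) 1).integrable (t := 2 * t) (by positivity)).const_mul (2 ^ (n / 2 : ℝ))
  simpa using this

/-- Averages of functions dominated by `A exp(|y|²/(8t))`. -/
lemma P_le_of_exp {f : Euc n → ℝ} {t A : ℝ} (ht : 0 < t)
    (hb : ∀ y, |f y| ≤ A * Real.exp (‖y‖ ^ 2 / (8 * t))) : |P t f| ≤ A * 2 ^ (n / 2 : ℝ) := by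
  rw [← integral_exp_G ht, ← integral_const_mul, ← Real.norm_eq_abs]
  refine norm_integral_le_of_norm_le ((integrable_exp_G ht).const_mul A)
    (Eventually.of_forall fun y => ?_)
  rw [norm_mul, Real.norm_eq_abs, Real.norm_of_nonneg (G_pos ht y).le, ← mul_assoc]
  exact mul_le_mul_of_nonneg_right (hb y) (G_pos ht y).le

end kernel

/-- Constant in the pointwise bound `rho_le`. -/
noncomputable def cA (n : ℕ) : ℝ := 7 ^ (n / 2 : ℝ) * (Real.exp 1 * 7)

/-- Constant in the pointwise bound `s_le`. -/
noncomputable def cB (n : ℕ) : ℝ := √(2 * cA n)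

/-- Constant in the moment bounds. -/
noncomputable def cM (n : ℕ) : ℝ := cB n ^ 3 * 2 ^ (n / 2 : ℝ)

lemma cA_pos (n : ℕ) : 0 < cA n := by unfold cA; positivity
lemma cB_pos (n : ℕ) : 0 < cB n := Real.sqrt_pos.2 (by have := cA_pos n; positivity)
lemma cM_pos (n : ℕ) : 0 < cM n := by have := cB_pos n; unfold cM; positivity

namespace Sol
variable {n : ℕ} {u v : Euc n → ℝ}

lemma SS_comp (h : Sol u v) {t l : ℝ} (ht : 0 < t) (hl : 1 < l) (x x' : Euc n) :
    SS (_root_.tr x u) (_root_.tr x v) t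
      ≤ l ^ (n / 2 : ℝ) * Real.exp (‖x' - x‖ ^ 2 / (4 * t * (l - 1)))
        * SS (_root_.tr x' u) (_root_.tr x' v) (l * t) :=
  P_comp h.gi_rho (fun y => by positivity) ht hl x x'

lemma KK_comp (h : Sol u v) {t l : ℝ} (ht : 0 < t) (hl : 1 < l) (x x' : Euc n) :
    KK (_root_.tr x u) (_root_.tr x v) t
      ≤ l ^ (n / 2 : ℝ) * Real.exp (‖x' - x‖ ^ 2 / (4 * t * (l - 1)))
        * KK (_root_.tr x' u) (_root_.tr x' v) (l * t) :=
  P_comp h.gi_w (fun y => by positivity) ht hl x x'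

lemma tr_zero (f : Euc n → ℝ) : _root_.tr 0 f = f := by
  funext y
  simp [_root_.tr]

lemma rho_le (h : Sol u v) {t : ℝ} (ht : 0 < t) (y : Euc n) :
    u y ^ 2 + v y ^ 2 ≤ cA n * Real.exp (‖y‖ ^ 2 / (24 * t)) * SS u v t := by
  have h1 := (h.tr y).rho_le_SS ht
  have h2 := h.SS_comp ht (l := 7) (by norm_num) y 0
  have h3 := h.SS_le ht (t := 7 * t) (by linarith)
  have e : (7 : ℝ) * t / t = 7 := by field_simp
  rw [e] at h3
  simp only [tr_zero, zero_sub, norm_neg] at h2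
  simp only [_root_.tr, add_zero] at h1
  refine h1.trans (h2.trans ?_)
  have e2 : 4 * t * (7 - 1) = 24 * t := by ring
  rw [e2]
  calc _ ≤ 7 ^ (n / 2 : ℝ) * Real.exp (‖y‖ ^ 2 / (24 * t)) * (Real.exp 1 * 7 * SS u v t) := by gcongr
    _ = _ := by unfold cA; ring

lemma s_le (h : Sol u v) {t : ℝ} (ht : 0 < t) (y : Euc n) :
    u y + v y ≤ cB n * Real.exp (‖y‖ ^ 2 / (48 * t)) * √(SS u v t) := by
  have hS := h.SS_pos ht
  have hB := cB_pos n
  refine le_of_sq_le_sq ?_ (by positivity)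
  have e : (cB n * Real.exp (‖y‖ ^ 2 / (48 * t)) * √(SS u v t)) ^ 2
      = 2 * (cA n * Real.exp (‖y‖ ^ 2 / (24 * t)) * SS u v t) := by
    have hA := cA_pos n
    rw [mul_pow, mul_pow, Real.sq_sqrt hS.le, cB, Real.sq_sqrt (by positivity), ← Real.exp_nat_mul]
    have : ((2 : ℕ) : ℝ) * (‖y‖ ^ 2 / (48 * t)) = ‖y‖ ^ 2 / (24 * t) := by
      push_cast
      field_simp
      ring
    rw [this]
    ring
  rw [e]
  have := h.rho_le ht y
  nlinarith [sq_nonneg (u y - v y)]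

lemma s3_le (h : Sol u v) {t : ℝ} (ht : 0 < t) (y : Euc n) :
    (u y + v y) ^ 3 ≤ cB n ^ 3 * √(SS u v t) ^ 3 * Real.exp (‖y‖ ^ 2 / (16 * t)) := by
  have h1 := h.up y
  have h2 := h.vp y
  have h3 := pow_le_pow_left₀ (by positivity) (h.s_le ht y) 3
  refine h3.trans (le_of_eq ?_)
  rw [mul_pow, mul_pow, ← Real.exp_nat_mul]
  have : ((3 : ℕ) : ℝ) * (‖y‖ ^ 2 / (48 * t)) = ‖y‖ ^ 2 / (16 * t) := by
    push_cast
    field_simp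
    ring
  rw [this]
  ring

lemma norm_le_exp {t : ℝ} (ht : 0 < t) (y : Euc n) :
    ‖y‖ ≤ 2 * √t * Real.exp (‖y‖ ^ 2 / (16 * t)) := by
  have hs : 0 < √t := Real.sqrt_pos.2 ht
  have h1 : ‖y‖ ^ 2 / (16 * t) + 1 ≤ Real.exp (‖y‖ ^ 2 / (16 * t)) := Real.add_one_le_exp _
  have h2 : ‖y‖ ≤ 2 * √t * (‖y‖ ^ 2 / (16 * t) + 1) := by
    have e : 2 * √t * (‖y‖ ^ 2 / (16 * t) + 1) - ‖y‖ = √t * (‖y‖ / √t - 4) ^ 2 / 8 := by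
      have : t = √t ^ 2 := (Real.sq_sqrt ht.le).symm
      rw [show ‖y‖ ^ 2 / (16 * t) = ‖y‖ ^ 2 / (16 * √t ^ 2) by rw [← this]]
      field_simp
      ring
    have : 0 ≤ √t * (‖y‖ / √t - 4) ^ 2 / 8 := by positivity
    linarith
  exact h2.trans (by gcongr)

lemma P_s3_le (h : Sol u v) {t : ℝ} (ht : 0 < t) :
    P t (fun y => (u y + v y) ^ 3) ≤ cM n * √(SS u v t) ^ 3 := by
  have hB := cB_pos n
  refine (le_abs_self _).trans ((P_le_of_exp (A := cB n ^ 3 * √(SS u v t) ^ 3) ht fun y => ?_).trans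
    (le_of_eq (by unfold cM; ring)))
  have h1 := h.up y
  have h2 := h.vp y
  rw [abs_of_nonneg (by positivity)]
  refine (h.s3_le ht y).trans ?_
  gcongr
  norm_num

lemma P_ys3_le (h : Sol u v) {t : ℝ} (ht : 0 < t) {f : Euc n → ℝ}
    (hf : ∀ y, |f y| ≤ ‖y‖ * (u y + v y) ^ 3) :
    |P t f| ≤ 2 * √t * cM n * √(SS u v t) ^ 3 := by
  have hB := cB_pos n
  refine (P_le_of_exp (A := 2 * √t * (cB n ^ 3 * √(SS u v t) ^ 3)) ht fun y => ?_).trans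
    (le_of_eq (by unfold cM; ring))
  have h1 := h.up y
  have h2 := h.vp y
  refine (hf y).trans ((mul_le_mul (norm_le_exp ht y) (h.s3_le ht y) (by positivity)
    (by positivity)).trans (le_of_eq ?_))
  have e : ‖y‖ ^ 2 / (8 * t) = ‖y‖ ^ 2 / (16 * t) + ‖y‖ ^ 2 / (16 * t) := by
    push_cast
    field_simp
    ring
  rw [e, Real.exp_add]
  ring

lemma P_ys_le (h : Sol u v) {t : ℝ} (ht : 0 < t) {f : Euc n → ℝ}
    (hf : ∀ y, |f y| ≤ ‖y‖ * (u y + v y)) :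
    |P t f| ≤ 2 * √t * cB n * 2 ^ (n / 2 : ℝ) * √(SS u v t) := by
  have hB := cB_pos n
  refine (P_le_of_exp (A := 2 * √t * (cB n * √(SS u v t))) ht fun y => ?_).trans
    (le_of_eq (by ring))
  have h1 := h.up y
  have h2 := h.vp y
  refine (hf y).trans ((mul_le_mul (norm_le_exp ht y) (h.s_le ht y) (by positivity)
    (by positivity)).trans ?_)
  have e : ‖y‖ ^ 2 / (8 * t) = ‖y‖ ^ 2 / (16 * t) + ‖y‖ ^ 2 / (16 * t) := by
    push_cast
    field_simp
    ring
  rw [e, Real.exp_add]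
  calc _ ≤ 2 * √t * Real.exp (‖y‖ ^ 2 / (16 * t))
        * (cB n * Real.exp (‖y‖ ^ 2 / (16 * t)) * √(SS u v t)) := by gcongr; norm_num
    _ = _ := by ring

/-- The Gaussian height is controlled by the first moment. -/
lemma sqrtSS_le (h : Sol u v) {t : ℝ} (ht : 0 < t) :
    √(SS u v t) ≤ cM n * P t (fun y => u y + v y) := by
  have hS := h.SS_pos ht
  have hM := cM_pos n
  set r := √(SS u v t) with hr
  have hr0 : 0 < r := Real.sqrt_pos.2 hS
  have hr2 : r ^ 2 = SS u v t := Real.sq_sqrt hS.le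
  have g1 : GI (fun y => u y + v y) := h.gi_u.add h.gi_v
  have h1 : SS u v t ≤ P t (fun y => (cM n * r / 2) * (u y + v y)
      + (1 / (2 * (cM n * r))) * (u y + v y) ^ 3) := by
    refine P_mono h.gi_rho ((g1.const_mul _).add ((h.gi_s 3).const_mul _)) ht fun y => ?_
    have a := h.up y
    have b := h.vp y
    have e : (cM n * r / 2) * (u y + v y) + (1 / (2 * (cM n * r))) * (u y + v y) ^ 3
        - (u y + v y) ^ 2
        = (u y + v y) * (cM n * r - (u y + v y)) ^ 2 / (2 * (cM n * r)) := by
      field_simp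
      ring
    have : 0 ≤ (u y + v y) * (cM n * r - (u y + v y)) ^ 2 / (2 * (cM n * r)) := by positivity
    nlinarith [mul_pos a b]
  rw [P_add (g1.const_mul _) ((h.gi_s 3).const_mul _) ht, P_const_mul, P_const_mul] at h1
  have h2 := h.P_s3_le ht
  rw [← hr] at h2
  have h3 : 1 / (2 * (cM n * r)) * P t (fun y => (u y + v y) ^ 3) ≤ r ^ 2 / 2 := by
    calc _ ≤ 1 / (2 * (cM n * r)) * (cM n * r ^ 3) := by gcongr
      _ = _ := by field_simp
  rw [← hr2] at h1
  have h4 : r * r ≤ r * (cM n * P t (fun y => u y + v y)) := by nlinarith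
  exact le_of_mul_le_mul_left h4 hr0

end Sol

/-! ### The critical scale and the pointwise gradient bound -/

lemma le_of_tendsto_deriv {g g' : ℝ → ℝ} {t a : ℝ} (ht : 0 < t)
    (hd : ∀ s ∈ Ioc 0 t, HasDerivAt g (g' s) s) (hn : ∀ s ∈ Ioc 0 t, 0 ≤ g' s)
    (hl : Tendsto g (𝓝[>] 0) (𝓝 a)) : a ≤ g t := by
  refine le_of_tendsto hl ?_
  filter_upwards [Ioc_mem_nhdsGT ht] with s hs
  have hm : ∀ x ∈ Icc s t, x ∈ Ioc 0 t := fun x hx => ⟨hs.1.trans_le hx.1, hx.2⟩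
  exact le_of_deriv_nonneg hs.2 (fun x hx => hd x (hm x hx)) fun x hx => hn x (hm x hx)

lemma lap_mul_coord {n : ℕ} {f : Euc n → ℝ} (hf : ContDiff ℝ 2 f) (i : Fin n) (y : Euc n) :
    lap (fun y => f y * y i) y = lap f y * y i + 2 * pd i f y := by
  have h1f : ContDiff ℝ 1 f := hf.of_le (by norm_num)
  have hpc : ∀ i, ContDiff ℝ 1 (pd i f) := fun i => pd_contDiff (m := 1) (by simpa using hf) i
  have e : ∀ j, pd j (fun y => f y * y i)
      = fun y => pd j f y * y i + (if j = i then 1 else 0) * f y := fun j => by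
    funext z
    rw [pd_mul (h1f.differentiable (by norm_num) z) (coord_hasFDerivAt i z).differentiableAt, pd_coord]
    ring
  have e2 : ∀ j, pd j (pd j (fun y => f y * y i)) y
      = pd j (pd j f) y * y i + 2 * ((if j = i then 1 else 0) * pd j f y) := fun j => by
    have d2 := h1f.differentiable (by norm_num) y
    have d3 := (hpc j).differentiable (by norm_num) y
    have d4 := (coord_hasFDerivAt i y).differentiableAt
    rw [e, pd_add (d3.fun_mul d4) (d2.const_mul _), pd_mul d3 d4, pd_const_mul _ d2, pd_coord]
    ring
  rw [lap_eq, lap_eq, Finset.sum_congr rfl fun j _ => e2 j, Finset.sum_add_distrib,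
    Finset.sum_mul, ← Finset.mul_sum]
  simp

namespace Sol
variable {n : ℕ} {u v : Euc n → ℝ}

lemma lap_u (h : Sol u v) : lap u = fun y => u y * v y ^ 2 := funext h.eu

lemma gi_pdu (h : Sol u v) (i : Fin n) : GI (pd i u) :=
  GI.of_sq (pd_cont h.c1u i) (h.gi_gu.pd_sq h.c1u i)

lemma gi_uv2 (h : Sol u v) : GI (fun y => u y * v y ^ 2) := by
  have := h.cu
  have := h.cv
  refine h.gi (A := 1) (k := 3) (by fun_prop) fun y => ?_
  have h1 := h.up y
  have h2 := h.vp y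
  rw [abs_of_nonneg (by positivity)]
  nlinarith [mul_pos h1 h2, mul_pos (mul_pos h1 h2) h2, mul_pos (mul_pos h1 h1) h2, pow_pos h1 3,
    pow_pos h2 3]

lemma hasDerivAt_u (h : Sol u v) {t : ℝ} (ht : 0 < t) :
    HasDerivAt (fun s => P s u) (P t (fun y => u y * v y ^ 2)) t := by
  have := P_heat h.c2u h.gi_u h.gi_pdu (by rw [h.lap_u]; exact h.gi_uv2) ht
  rwa [h.lap_u] at this

lemma P_s_le (h : Sol u v) {t : ℝ} (ht : 0 < t) :
    P t (fun y => u y + v y) ≤ u 0 + v 0 + t * (cM n / 4 * √(SS u v t) ^ 3) := by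
  have g1 : GI (fun y => u y + v y) := h.gi_u.add h.gi_v
  set B := cM n / 4 * √(SS u v t) ^ 3 with hB
  have hM := cM_pos n
  have key := le_of_tendsto_deriv (g := fun s => s * B - (P s u + P s v))
    (g' := fun s => B - (P s (fun y => u y * v y ^ 2) + P s (fun y => v y * u y ^ 2)))
    (a := 0 * B - (u 0 + v 0)) ht
    (fun s hs => by
      exact (((hasDerivAt_id s).mul_const B).sub
        ((h.hasDerivAt_u hs.1).add (h.swap.hasDerivAt_u hs.1))).congr_deriv (by simp))
    (fun s hs => by
      rw [sub_nonneg, ← P_add h.gi_uv2 h.swap.gi_uv2 hs.1]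
      calc _ ≤ P s (fun y => 1 / 4 * (u y + v y) ^ 3) := by
            refine P_mono (h.gi_uv2.add h.swap.gi_uv2) ((h.gi_s 3).const_mul _) hs.1 fun y => ?_
            have h1 := h.up y
            have h2 := h.vp y
            have : 0 ≤ (u y + v y) * (u y - v y) ^ 2 := by positivity
            nlinarith
        _ ≤ 1 / 4 * (cM n * √(SS u v s) ^ 3) := by
            rw [P_const_mul]
            gcongr
            exact h.P_s3_le hs.1
        _ ≤ 1 / 4 * (cM n * √(SS u v t) ^ 3) := by
            gcongr
            exact h.SS_mono hs.1 hs.2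
        _ = B := by rw [hB]; ring)
    (((continuous_id.mul continuous_const).tendsto' 0 _ rfl).mono_left nhdsWithin_le_nhds |>.sub
      ((P_tendsto h.gi_u).add (P_tendsto h.gi_v)))
  rw [P_add h.gi_u h.gi_v ht]
  simp only [zero_mul, zero_sub] at key
  linarith

/-- Below the critical scale the Gaussian height is controlled by the value at the centre. -/
lemma sqrtSS_le_of_crit (h : Sol u v) {t : ℝ} (ht : 0 < t) (hq : t * SS u v t ≤ 2 / cM n ^ 2) :
    √(SS u v t) ≤ 2 * cM n * (u 0 + v 0) := by
  have hM := cM_pos n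
  have hS := h.SS_pos ht
  have h1 := h.sqrtSS_le ht
  have h2 := h.P_s_le ht
  set r := √(SS u v t) with hr
  have hr0 : 0 < r := Real.sqrt_pos.2 hS
  have hr2 : r ^ 2 = SS u v t := Real.sq_sqrt hS.le
  have h3 : t * (cM n / 4 * r ^ 3) ≤ r / (2 * cM n) := by
    calc t * (cM n / 4 * r ^ 3) = (t * SS u v t) * (cM n / 4 * r) := by rw [← hr2]; ring
      _ ≤ 2 / cM n ^ 2 * (cM n / 4 * r) := by gcongr
      _ = _ := by field_simp; norm_num
  have h4 : r ≤ cM n * (u 0 + v 0 + r / (2 * cM n)) :=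
    h1.trans (mul_le_mul_of_nonneg_left (by linarith) hM.le)
  have h5 : cM n * (u 0 + v 0 + r / (2 * cM n)) = cM n * (u 0 + v 0) + r / 2 := by
    field_simp
  linarith

lemma continuousOn_SS (h : Sol u v) {a b : ℝ} (ha : 0 < a) : ContinuousOn (SS u v) (Icc a b) :=
  fun _ hx => (h.hasDerivAt_SS (ha.trans_le hx.1)).continuousAt.continuousWithinAt

/-- Below any scale at which `t S(t)` exceeds the critical value there is a critical scale. -/
lemma exists_crit_le (h : Sol u v) {t q : ℝ} (hq0 : 0 < q) (ht : 0 < t)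
    (hq : q ≤ t * SS u v t) : ∃ s, 0 < s ∧ s ≤ t ∧ s * SS u v s = q := by
  have hS := h.SS_pos ht
  set a := min t (q / SS u v t) with ha
  have ha0 : 0 < a := lt_min ht (by positivity)
  have hat : a ≤ t := min_le_left _ _
  have h1 : a * SS u v a ≤ q := by
    calc a * SS u v a ≤ (q / SS u v t) * SS u v t := by
          have := h.SS_pos ha0
          exact mul_le_mul (min_le_right _ _) (h.SS_mono ha0 hat) this.le (by positivity)
      _ = q := by field_simp
  obtain ⟨s, hs, hs2⟩ := intermediate_value_Icc hat (f := fun s => s * SS u v s)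
    (continuousOn_id.mul (h.continuousOn_SS ha0)) ⟨h1, hq⟩
  exact ⟨s, ha0.trans_le hs.1, hs.2, hs2⟩

lemma exists_crit (h : Sol u v) {q : ℝ} (hq0 : 0 < q) : ∃ s, 0 < s ∧ s * SS u v s = q := by
  have hS := h.SS_pos one_pos
  set b := max 1 (q / SS u v 1) with hb
  have hb1 : 1 ≤ b := le_max_left _ _
  have hb0 : 0 < b := by linarith
  obtain ⟨s, h1, -, h2⟩ := h.exists_crit_le hq0 hb0 (by
    calc q = (q / SS u v 1) * SS u v 1 := by field_simp
      _ ≤ b * SS u v b := mul_le_mul (le_max_right _ _) (h.SS_mono one_pos hb1) hS.le hb0.le)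
  exact ⟨s, h1, h2⟩

lemma P_pd_eq (h : Sol u v) (i : Fin n) {t : ℝ} (ht : 0 < t) :
    P t (pd i u) = P t (fun y => u y * y i) / (2 * t) := by
  have := P_div (X := fun j y => (if j = i then 1 else 0) * u y) (D := pd i u)
    (fun j => contDiff_const.mul h.c1u) (fun j => h.gi_u.const_mul _)
    (fun y => by
      rw [Finset.sum_congr rfl fun j _ => pd_const_mul _ (h.c1u.differentiable (by norm_num) y) j]
      simp) (h.gi_pdu i) ht
  simpa using this

lemma hasDerivAt_pdu (h : Sol u v) (i : Fin n) {t : ℝ} (ht : 0 < t) :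
    HasDerivAt (fun s => P s (pd i u)) (P t (fun y => u y * v y ^ 2 * y i) / (2 * t)) t := by
  have hl : lap (fun y => u y * y i) = fun y => u y * v y ^ 2 * y i + 2 * pd i u y := by
    funext y
    rw [lap_mul_coord h.c2u, h.eu]
  have hp : ∀ j, pd j (fun y => u y * y i)
      = fun y => pd j u y * y i + (if j = i then 1 else 0) * u y := fun j => by
    funext z
    rw [pd_mul (h.c1u.differentiable (by norm_num) z) (coord_hasFDerivAt i z).differentiableAt,
      pd_coord]
    ring
  have h1 := P_heat (f := fun y => u y * y i) (h.c2u.mul (by fun_prop)) (h.gi_u.mul_coord i)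
    (fun j => by rw [hp]; exact ((h.gi_pdu j).mul_coord i).add (h.gi_u.const_mul _))
    (by rw [hl]; exact (h.gi_uv2.mul_coord i).add ((h.gi_pdu i).const_mul 2)) ht
  rw [hl, P_add (h.gi_uv2.mul_coord i) ((h.gi_pdu i).const_mul 2) ht, P_const_mul] at h1
  have h2 := h1.div ((hasDerivAt_id t).const_mul 2) (by simpa using ht.ne')
  have h3 := h.P_pd_eq i ht
  refine (h2.congr_of_eventuallyEq ?_).congr_deriv ?_
  · filter_upwards [lt_mem_nhds ht] with s hs
    exact h.P_pd_eq i hs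
  · rw [h3]
    simp only [id]
    field_simp
    ring

lemma abs_pdu_le (h : Sol u v) (i : Fin n) {t : ℝ} (ht : 0 < t) :
    |pd i u 0| ≤ |P t (pd i u)| + 2 * √t * (cM n * √(SS u v t) ^ 3) := by
  have hM := cM_pos n
  set B := cM n * √(SS u v t) ^ 3 with hB
  have hb : ∀ s ∈ Ioc 0 t, |P s (fun y => u y * v y ^ 2 * y i) / (2 * s)| ≤ 2 * (1 / (2 * √s)) * B := by
    intro s hs
    have h1 := h.P_ys3_le hs.1 (f := fun y => u y * v y ^ 2 * y i) fun y => by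
      have h1 := h.up y
      have h2 := h.vp y
      rw [abs_mul, abs_of_nonneg (by positivity), mul_comm]
      have := PiLp.norm_apply_le y i
      simp only [Real.norm_eq_abs] at this
      gcongr
      nlinarith [mul_pos h1 h2, mul_pos (mul_pos h1 h2) h2, mul_pos (mul_pos h1 h1) h2, pow_pos h1 3,
        pow_pos h2 3]
    have hs0 : 0 < √s := Real.sqrt_pos.2 hs.1
    have hss : √s ^ 2 = s := Real.sq_sqrt hs.1.le
    rw [abs_div, abs_of_pos (by have := hs.1; positivity : 0 < 2 * s), div_le_iff₀ (by have := hs.1; positivity)]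
    refine h1.trans ?_
    have h2 : 2 * √s * cM n * √(SS u v s) ^ 3 ≤ 2 * √s * cM n * √(SS u v t) ^ 3 := by
      gcongr
      exact h.SS_mono hs.1 hs.2
    refine h2.trans (le_of_eq ?_)
    rw [hB]
    nth_rewrite 3 [← hss]
    field_simp
  have hl : Tendsto (fun s => 2 * √s * B) (𝓝[>] 0) (𝓝 0) :=
    ((by fun_prop : Continuous fun s => 2 * √s * B).tendsto' 0 0 (by simp)).mono_left
      nhdsWithin_le_nhds
  have hd : ∀ s ∈ Ioc 0 t, HasDerivAt (fun s => 2 * √s * B) (2 * (1 / (2 * √s)) * B) s := fun s hs =>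
    ((Real.hasDerivAt_sqrt hs.1.ne').const_mul 2).mul_const B
  have k1 := le_of_tendsto_deriv ht
    (fun s hs => (hd s hs).add (h.hasDerivAt_pdu i hs.1))
    (fun s hs => by have := (abs_le.1 (hb s hs)).1; linarith) (hl.add (P_tendsto (h.gi_pdu i)))
  have k2 := le_of_tendsto_deriv ht
    (fun s hs => (hd s hs).sub (h.hasDerivAt_pdu i hs.1))
    (fun s hs => by have := (abs_le.1 (hb s hs)).2; linarith) (hl.sub (P_tendsto (h.gi_pdu i)))
  simp only [Pi.add_apply, Pi.sub_apply] at k1 k2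
  have := le_abs_self (P t (pd i u))
  have := neg_abs_le (P t (pd i u))
  rw [abs_le]
  constructor <;> linarith

/-- Constant of the pointwise gradient bound. -/
noncomputable def cG (n : ℕ) : ℝ :=
  (cB n * 2 ^ (n / 2 : ℝ) / √(2 / cM n ^ 2) + 2 * cM n * √(2 / cM n ^ 2)) * (2 * cM n) ^ 2

lemma cG_pos (n : ℕ) : 0 < cG n := by
  have := cM_pos n
  have := cB_pos n
  unfold cG
  positivity

lemma abs_pdu_zero_le (h : Sol u v) (i : Fin n) : |pd i u 0| ≤ cG n * (u 0 + v 0) ^ 2 := by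
  have hM := cM_pos n
  have hB := cB_pos n
  obtain ⟨t, ht, hq⟩ := h.exists_crit (q := 2 / cM n ^ 2) (by positivity)
  have hS := h.SS_pos ht
  have h1 := h.abs_pdu_le i ht
  have h2 := h.P_ys_le ht (f := fun y => u y * y i) fun y => by
    have h1 := h.up y
    have h2 := h.vp y
    rw [abs_mul, abs_of_pos h1, mul_comm]
    have := PiLp.norm_apply_le y i
    simp only [Real.norm_eq_abs] at this
    gcongr
    linarith
  have h3 : |P t (pd i u)| ≤ cB n * 2 ^ (n / 2 : ℝ) * (√(SS u v t) / √t) := by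
    have hts : √t ^ 2 = t := Real.sq_sqrt ht.le
    have ht0 : 0 < √t := Real.sqrt_pos.2 ht
    rw [h.P_pd_eq i ht, abs_div, abs_of_pos (by positivity : 0 < 2 * t), div_le_iff₀ (by positivity)]
    refine h2.trans (le_of_eq ?_)
    have e : √t = t / √t := by field_simp; exact hts
    rw [e]
    field_simp
    exact hts.symm
  have h4 := h.sqrtSS_le_of_crit ht hq.le
  set w := √(2 / cM n ^ 2) with hw
  have hw0 : 0 < w := Real.sqrt_pos.2 (by positivity)
  have hwe : w = √t * √(SS u v t) := by rw [hw, ← hq, Real.sqrt_mul ht.le]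
  set r := √(SS u v t) with hr
  have hr0 : 0 < r := Real.sqrt_pos.2 hS
  have ht0 : 0 < √t := Real.sqrt_pos.2 ht
  have e1 : r / √t = r ^ 2 / w := by rw [hwe]; field_simp
  have e2 : 2 * √t * (cM n * r ^ 3) = 2 * cM n * w * r ^ 2 := by rw [hwe]; ring
  rw [e1] at h3
  rw [e2] at h1
  have h5 : r ^ 2 ≤ (2 * cM n) ^ 2 * (u 0 + v 0) ^ 2 := by
    rw [← mul_pow]
    gcongr
  calc |pd i u 0| ≤ cB n * 2 ^ (n / 2 : ℝ) * (r ^ 2 / w) + 2 * cM n * w * r ^ 2 := by linarith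
    _ = (cB n * 2 ^ (n / 2 : ℝ) / w + 2 * cM n * w) * r ^ 2 := by ring
    _ ≤ (cB n * 2 ^ (n / 2 : ℝ) / w + 2 * cM n * w) * ((2 * cM n) ^ 2 * (u 0 + v 0) ^ 2) := by gcongr
    _ = _ := by unfold cG; ring

lemma gr2_le (h : Sol u v) (x : Euc n) : gr2 u x ≤ n * (cG n ^ 2 * (u x + v x) ^ 4) := by
  have h1 : ∀ i, pd i u x ^ 2 ≤ cG n ^ 2 * (u x + v x) ^ 4 := fun i => by
    have h2 := (h.tr x).abs_pdu_zero_le i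
    have e : pd i (_root_.tr x u) 0 = pd i u x := by
      have := pd_tr (f := u) x 0 i
      rw [add_zero] at this
      exact this
    rw [e] at h2
    simp only [_root_.tr, add_zero] at h2
    calc pd i u x ^ 2 = |pd i u x| ^ 2 := (sq_abs _).symm
      _ ≤ (cG n * (u x + v x) ^ 2) ^ 2 := by gcongr
      _ = _ := by ring
  unfold gr2
  refine (Finset.sum_le_sum fun i _ => h1 i).trans ?_
  simp

/-- The scale-invariant gradient bound `|∇u|² + |∇v|² ≤ C (u² + v²)²`, with `C` depending only on `n`. -/
lemma gr2_add_le (h : Sol u v) (x : Euc n) :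
    gr2 u x + gr2 v x ≤ 8 * n * cG n ^ 2 * (u x ^ 2 + v x ^ 2) ^ 2 := by
  have h1 := h.gr2_le x
  have h2 := h.swap.gr2_le x
  have e : (u x + v x) ^ 4 ≤ 4 * (u x ^ 2 + v x ^ 2) ^ 2 := by
    have h3 : (u x + v x) ^ 2 ≤ 2 * (u x ^ 2 + v x ^ 2) := by nlinarith [sq_nonneg (u x - v x)]
    calc (u x + v x) ^ 4 = ((u x + v x) ^ 2) ^ 2 := by ring
      _ ≤ (2 * (u x ^ 2 + v x ^ 2)) ^ 2 := by gcongr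
      _ = _ := by ring
  rw [add_comm (v x)] at h2
  have h3 : (n : ℝ) * (cG n ^ 2 * (u x + v x) ^ 4)
      ≤ n * (cG n ^ 2 * (4 * (u x ^ 2 + v x ^ 2) ^ 2)) := by gcongr
  linarith

end Sol

/-! ### The signed height and the frequency gap at balanced centres -/

/-- The signed height `(u² - v²)/√(u² + v²)`. -/
noncomputable def FF {n : ℕ} (u v : Euc n → ℝ) (y : Euc n) : ℝ :=
  (u y ^ 2 - v y ^ 2) / √(u y ^ 2 + v y ^ 2)

lemma pd_line {n : ℕ} {f : Euc n → ℝ} {x : Euc n} (hf : DifferentiableAt ℝ f x) (i : Fin n) :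
    HasDerivAt (fun s : ℝ => f (x + s • EuclideanSpace.single i (1 : ℝ))) (pd i f x) 0 :=
  hf.hasFDerivAt.hasLineDerivAt _

/-- Constant in the energy bound of the signed height. -/
noncomputable def cF (n : ℕ) : ℝ := 96 * n * Sol.cG n ^ 2

/-- Constant in `Sol.kk_le`. -/
noncomputable def ck (n : ℕ) : ℝ := Real.exp 1 * 2 ^ (n / 2 : ℝ)

lemma cF_nonneg (n : ℕ) : 0 ≤ cF n := by unfold cF; positivity
lemma ck_pos (n : ℕ) : 0 < ck n := by unfold ck; positivity

namespace Sol
variable {n : ℕ} {u v : Euc n → ℝ}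

lemma rho_pos (h : Sol u v) (y : Euc n) : 0 < u y ^ 2 + v y ^ 2 := by
  have := h.up y
  positivity

lemma FF_swap (y : Euc n) : FF v u y = - FF u v y := by
  unfold FF
  rw [add_comm (v y ^ 2)]
  ring

lemma FF_sq (h : Sol u v) (y : Euc n) :
    FF u v y ^ 2 = (u y ^ 2 - v y ^ 2) ^ 2 / (u y ^ 2 + v y ^ 2) := by
  unfold FF
  rw [div_pow, Real.sq_sqrt (h.rho_pos y).le]

lemma FF_sq_le (h : Sol u v) (y : Euc n) : FF u v y ^ 2 ≤ u y ^ 2 + v y ^ 2 := by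
  rw [h.FF_sq, div_le_iff₀ (h.rho_pos y)]
  nlinarith [mul_nonneg (sq_nonneg (u y)) (sq_nonneg (v y))]

lemma FF_sq_ge (h : Sol u v) (y : Euc n) :
    u y ^ 2 + v y ^ 2 - 2 * u y * v y ≤ FF u v y ^ 2 := by
  rw [h.FF_sq, le_div_iff₀ (h.rho_pos y)]
  have h1 := h.up y
  have h2 := h.vp y
  have : (u y ^ 2 - v y ^ 2) ^ 2 - (u y ^ 2 + v y ^ 2 - 2 * u y * v y) * (u y ^ 2 + v y ^ 2)
      = 2 * (u y * v y) * (u y - v y) ^ 2 := by ring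
  have : 0 ≤ 2 * (u y * v y) * (u y - v y) ^ 2 := by positivity
  linarith

lemma FF_contDiff (h : Sol u v) : ContDiff ℝ 1 (FF u v) := by
  unfold FF
  have h1 := h.c1u
  have h2 := h.c1v
  refine ContDiff.div (by fun_prop) (ContDiff.sqrt (by fun_prop) fun y => (h.rho_pos y).ne')
    fun y => (Real.sqrt_pos.2 (h.rho_pos y)).ne'

lemma gi_FF2 (h : Sol u v) : GI (fun y => FF u v y ^ 2) :=
  h.gi_rho.mono (h.FF_contDiff.continuous.pow 2) fun y => by
    rw [abs_of_nonneg (sq_nonneg _), abs_of_nonneg (h.rho_pos y).le]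
    exact h.FF_sq_le y

lemma gi_FF (h : Sol u v) : GI (FF u v) := GI.of_sq h.FF_contDiff.continuous h.gi_FF2

lemma pd_FF_sq_le (h : Sol u v) (i : Fin n) (y : Euc n) :
    pd i (FF u v) y ^ 2 ≤ (1 + 12 * (u y ^ 2 * v y ^ 2) / (u y ^ 2 + v y ^ 2) ^ 2)
      * (pd i u y ^ 2 + pd i v y ^ 2) := by
  have hr := h.rho_pos y
  set r := √(u y ^ 2 + v y ^ 2) with hrd
  have hr0 : 0 < r := Real.sqrt_pos.2 hr
  have hr2 : r ^ 2 = u y ^ 2 + v y ^ 2 := Real.sq_sqrt hr.le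
  have du := pd_line (h.c1u.differentiable (by norm_num) y) i
  have dv := pd_line (h.c1v.differentiable (by norm_num) y) i
  have dF := pd_line (h.FF_contDiff.differentiable (by norm_num) y) i
  have e0 : y + (0 : ℝ) • EuclideanSpace.single i (1 : ℝ) = y := by simp
  have d := ((du.fun_pow 2).fun_sub (dv.fun_pow 2)).fun_div
    (((du.fun_pow 2).fun_add (dv.fun_pow 2)).sqrt (by rw [e0]; exact hr.ne'))
    (by rw [e0]; exact hr0.ne')
  have e := dF.unique d
  simp only [e0, ← hrd] at e
  have e2 : pd i (FF u v) y
      = (u y * (u y ^ 2 + 3 * v y ^ 2) * pd i u y - v y * (3 * u y ^ 2 + v y ^ 2) * pd i v y) / r ^ 3 := by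
    rw [e]
    field_simp
    rw [hr2]
    push_cast
    ring
  rw [e2, div_pow, div_le_iff₀ (by positivity)]
  have e3 : (r ^ 3) ^ 2 = (u y ^ 2 + v y ^ 2) ^ 3 := by rw [← hr2]; ring
  rw [e3]
  have e4 : (1 + 12 * (u y ^ 2 * v y ^ 2) / (u y ^ 2 + v y ^ 2) ^ 2)
      * (pd i u y ^ 2 + pd i v y ^ 2) * (u y ^ 2 + v y ^ 2) ^ 3
      = ((u y * (u y ^ 2 + 3 * v y ^ 2)) ^ 2 + (v y * (3 * u y ^ 2 + v y ^ 2)) ^ 2)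
        * (pd i u y ^ 2 + pd i v y ^ 2) := by
    field_simp
    ring
  rw [e4]
  nlinarith [sq_nonneg (u y * (u y ^ 2 + 3 * v y ^ 2) * pd i v y
    + v y * (3 * u y ^ 2 + v y ^ 2) * pd i u y)]

lemma gr2_FF_le' (h : Sol u v) (y : Euc n) :
    gr2 (FF u v) y ≤ (1 + 12 * (u y ^ 2 * v y ^ 2) / (u y ^ 2 + v y ^ 2) ^ 2)
      * (gr2 u y + gr2 v y) := by
  unfold gr2
  rw [← Finset.sum_add_distrib, Finset.mul_sum]
  exact Finset.sum_le_sum fun i _ => h.pd_FF_sq_le i y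

lemma gr2_FF_le4 (h : Sol u v) (y : Euc n) :
    gr2 (FF u v) y ≤ 4 * (gr2 u y + gr2 v y) := by
  refine (h.gr2_FF_le' y).trans ?_
  have := gr2_nonneg u y
  have := gr2_nonneg v y
  have hr := h.rho_pos y
  gcongr
  have : 12 * (u y ^ 2 * v y ^ 2) / (u y ^ 2 + v y ^ 2) ^ 2 ≤ 3 := by
    rw [div_le_iff₀ (by positivity)]
    nlinarith [sq_nonneg (u y ^ 2 - v y ^ 2)]
  linarith

lemma gr2_FF_le (h : Sol u v) (y : Euc n) :
    gr2 (FF u v) y ≤ gr2 u y + gr2 v y + cF n * (u y ^ 2 * v y ^ 2) := by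
  refine (h.gr2_FF_le' y).trans ?_
  have hr := h.rho_pos y
  rw [add_mul, one_mul, add_le_add_iff_left]
  calc _ ≤ 12 * (u y ^ 2 * v y ^ 2) / (u y ^ 2 + v y ^ 2) ^ 2
        * (8 * n * cG n ^ 2 * (u y ^ 2 + v y ^ 2) ^ 2) := by
        gcongr
        exact h.gr2_add_le y
    _ = _ := by
        unfold cF
        field_simp
        ring

lemma gi_gF (h : Sol u v) : GI (gr2 (FF u v)) :=
  ((h.gi_gu.add h.gi_gv).const_mul 4).mono (gr2_cont h.FF_contDiff) fun y => by
    have := gr2_nonneg u y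
    have := gr2_nonneg v y
    rw [abs_of_nonneg (gr2_nonneg _ y), abs_of_nonneg (by positivity)]
    exact h.gr2_FF_le4 y

lemma gi_uv (h : Sol u v) : GI (fun y => u y * v y) :=
  GI.mul_of_sq h.cu h.cv h.gi_u2 h.gi_v2

/-- `∫ 2uv` is controlled by the interaction energy. -/
lemma P_uv_le (h : Sol u v) {t a : ℝ} (ht : 0 < t) (ha : 0 < a) :
    P t (fun y => 2 * u y * v y) ≤ a * KK u v t + 1 / a := by
  have : P t (fun y => 2 * u y * v y) ≤ P t (fun y => a * (u y ^ 2 * v y ^ 2) + 1 / a) := by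
    refine P_mono ((h.gi_uv.const_mul 2).congr fun y => by ring)
      ((h.gi_w.const_mul _).add (GI.const _)) ht fun y => ?_
    have e : a * (u y ^ 2 * v y ^ 2) + 1 / a - 2 * u y * v y = (a * (u y * v y) - 1) ^ 2 / a := by
      field_simp
      ring
    have : 0 ≤ (a * (u y * v y) - 1) ^ 2 / a := by positivity
    linarith
  rwa [P_add (h.gi_w.const_mul _) (GI.const _) ht, P_const_mul, P_const ht] at this

/-- At a centre where the signed height has zero average the frequency is almost one. -/
lemma gap_le (h : Sol u v) {t : ℝ} (ht : 0 < t) (hF : P t (FF u v) = 0) :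
    1 - NN u v t ≤ (1 + 2 * cF n) * (t * KK u v t / SS u v t) + 1 / (t * SS u v t) := by
  have hS := h.SS_pos ht
  have hp := poincare h.FF_contDiff h.gi_FF2 (fun i => h.gi_gF.pd_sq h.FF_contDiff i) ht
  rw [hF] at hp
  have h1 : P t (gr2 (FF u v)) ≤ EE u v t - KK u v t + cF n * KK u v t := by
    have : P t (gr2 (FF u v)) ≤ P t (fun y => gr2 u y + gr2 v y + cF n * (u y ^ 2 * v y ^ 2)) :=
      P_mono h.gi_gF ((h.gi_gu.add h.gi_gv).add (h.gi_w.const_mul _)) ht h.gr2_FF_le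
    rw [P_add (h.gi_gu.add h.gi_gv) (h.gi_w.const_mul _) ht, P_const_mul] at this
    have e : EE u v t = P t (fun y => gr2 u y + gr2 v y) + KK u v t :=
      P_add (h.gi_gu.add h.gi_gv) h.gi_w ht
    rw [e]
    unfold KK at *
    linarith
  have h2 : SS u v t - P t (fun y => 2 * u y * v y) ≤ P t (fun y => FF u v y ^ 2) := by
    have g : GI (fun y => 2 * u y * v y) := (h.gi_uv.const_mul 2).congr fun y => by ring
    rw [SS, ← P_sub h.gi_rho g ht]
    exact P_mono (h.gi_rho.sub g) h.gi_FF2 ht h.FF_sq_ge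
  have h3 := h.P_uv_le ht ht
  have h4 : 2 * t * P t (gr2 (FF u v)) ≤ 2 * t * (EE u v t - KK u v t + cF n * KK u v t) := by gcongr
  have hp' : P t (fun y => FF u v y ^ 2) ≤ 2 * t * P t (gr2 (FF u v)) := by
    have : P t (fun y => FF u v y ^ 2) - 0 ^ 2 ≤ 2 * t * P t (gr2 (FF u v)) := hp
    linarith
  have hK := h.KK_pos ht
  have e : (1 + 2 * cF n) * (t * KK u v t / SS u v t) + 1 / (t * SS u v t) - (1 - NN u v t)
      = ((1 + 2 * cF n) * (t * KK u v t) + 1 / t - SS u v t + 2 * t * EE u v t) / SS u v t := by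
    unfold NN
    field_simp
    ring
  have : 0 ≤ ((1 + 2 * cF n) * (t * KK u v t) + 1 / t - SS u v t + 2 * t * EE u v t) / SS u v t := by
    have : 0 < t * KK u v t := by positivity
    apply div_nonneg _ hS.le
    nlinarith
  linarith

/-- The interaction energy is controlled by the increment of the frequency. -/
lemma kk_le (h : Sol u v) {t : ℝ} (ht : 0 < t) :
    t * KK u v t / SS u v t ≤ ck n * (NN u v (2 * t) - NN u v t) := by
  have hS := h.SS_pos ht
  have hK := h.KK_pos ht
  have hp : ∀ x ∈ Icc t (2 * t), 0 < x := fun x hx => ht.trans_le hx.1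
  choose! D hD using fun (x : ℝ) (hx : 0 < x) => h.hasDerivAt_NN hx
  set c := KK u v t / (ck n * SS u v t) with hc
  have hk := ck_pos n
  have := le_of_deriv_nonneg (f := fun x => NN u v x - c * x) (f' := fun x => D x - c)
    (by linarith : t ≤ 2 * t)
    (fun x hx => ((hD x (hp x hx)).1.sub ((hasDerivAt_id x).const_mul c)).congr_deriv (by simp))
    fun x hx => by
      have hx0 := hp x hx
      have hSx := h.SS_pos hx0
      have h1 := (hD x hx0).2
      have h2 := P_comp0 h.gi_w (fun y => by positivity) ht (l := x / t) ((one_le_div ht).2 hx.1)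
      have h3 := h.SS_le ht hx.1
      have e : x / t * t = x := by field_simp
      have hxt : x / t ≤ 2 := (div_le_iff₀ ht).2 hx.2
      rw [e] at h2
      have hKx := h.KK_pos hx0
      have h4 : KK u v t ≤ 2 ^ (n / 2 : ℝ) * KK u v x := by
        refine h2.trans ?_
        have : (x / t) ^ (n / 2 : ℝ) ≤ 2 ^ (n / 2 : ℝ) := by gcongr
        exact mul_le_mul_of_nonneg_right this hKx.le
      have h5 : SS u v x ≤ Real.exp 1 * 2 * SS u v t := h3.trans (by gcongr)
      have h6 : c ≤ 2 * KK u v x / SS u v x := by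
        rw [hc, div_le_div_iff₀ (by positivity) hSx]
        calc KK u v t * SS u v x ≤ (2 ^ (n / 2 : ℝ) * KK u v x) * (Real.exp 1 * 2 * SS u v t) := by
              gcongr
          _ = _ := by unfold ck; ring
      linarith
  have e : t * KK u v t / SS u v t = ck n * (c * t) := by rw [hc]; field_simp
  rw [e]
  gcongr
  linarith

lemma kk_le_ck (h : Sol u v) {t : ℝ} (ht : 0 < t) : t * KK u v t / SS u v t ≤ ck n := by
  refine (h.kk_le ht).trans ?_
  have := h.NN_pos ht
  have := h.NN_le_one (t := 2 * t) (by positivity)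
  have := ck_pos n
  nlinarith

/-- Heights at nearby centres are comparable. -/
lemma SS_comp_center (h : Sol u v) {t L : ℝ} (ht : 0 < t) (x x' : Euc n)
    (hL : ‖x' - x‖ ^ 2 ≤ L * t) :
    SS (_root_.tr x u) (_root_.tr x v) t ≤ ck n * 2 * Real.exp (L / 4)
      * SS (_root_.tr x' u) (_root_.tr x' v) t := by
  have h1 := h.SS_comp ht (l := 2) (by norm_num) x x'
  have h2 := (h.tr x').SS_le ht (t := 2 * t) (by linarith)
  have e : 2 * t / t = 2 := by field_simp
  rw [e] at h2
  have h3 : ‖x' - x‖ ^ 2 / (4 * t * (2 - 1)) ≤ L / 4 := by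
    rw [div_le_div_iff₀ (by nlinarith) (by norm_num)]
    nlinarith
  have hS := (h.tr x').SS_pos (t := 2 * t) (by positivity)
  calc _ ≤ 2 ^ (n / 2 : ℝ) * Real.exp (L / 4) * (Real.exp 1 * 2 * SS (_root_.tr x' u) (_root_.tr x' v) t) := by
        refine h1.trans ?_
        gcongr
    _ = _ := by unfold ck; ring

/-- The normalized interaction energies at nearby centres are comparable. -/
lemma kk_comp (h : Sol u v) {t L : ℝ} (ht : 0 < t) (x x' : Euc n)
    (hL : ‖x' - x‖ ^ 2 ≤ L * t) :
    t * KK (_root_.tr x u) (_root_.tr x v) t / SS (_root_.tr x u) (_root_.tr x v) t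
      ≤ (2 * ck n ^ 2 * Real.exp (L / 2)) *
        (2 * t * KK (_root_.tr x' u) (_root_.tr x' v) (2 * t)
          / SS (_root_.tr x' u) (_root_.tr x' v) (2 * t)) := by
  have h1 := h.KK_comp ht (l := 2) (by norm_num) x x'
  have h2 := h.SS_comp_center ht x' x (L := L) (by rwa [norm_sub_rev])
  have h4 := (h.tr x').SS_le ht (t := 2 * t) (by linarith)
  have e : 2 * t / t = 2 := by field_simp
  rw [e] at h4
  have h3 : ‖x' - x‖ ^ 2 / (4 * t * (2 - 1)) ≤ L / 4 := by
    rw [div_le_div_iff₀ (by nlinarith) (by norm_num)]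
    nlinarith
  have hS := (h.tr x').SS_pos (t := 2 * t) (by positivity)
  have hS2 := (h.tr x).SS_pos ht
  have hK := (h.tr x').KK_pos (t := 2 * t) (by positivity)
  have hK2 := (h.tr x).KK_pos ht
  have hk := ck_pos n
  set Sx := SS (_root_.tr x u) (_root_.tr x v) t
  set S2 := SS (_root_.tr x' u) (_root_.tr x' v) (2 * t)
  set Kx := KK (_root_.tr x u) (_root_.tr x v) t
  set K2 := KK (_root_.tr x' u) (_root_.tr x' v) (2 * t)
  have a1 : Kx ≤ 2 ^ (n / 2 : ℝ) * Real.exp (L / 4) * K2 := h1.trans (by gcongr)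
  have a2 : S2 ≤ Real.exp 1 * 2 * (ck n * 2 * Real.exp (L / 4) * Sx) := h4.trans (by gcongr)
  have ee : Real.exp (L / 2) = Real.exp (L / 4) * Real.exp (L / 4) := by
    rw [← Real.exp_add]; ring_nf
  rw [← mul_div_assoc, div_le_div_iff₀ hS2 hS]
  calc t * Kx * S2 ≤ t * (2 ^ (n / 2 : ℝ) * Real.exp (L / 4) * K2)
        * (Real.exp 1 * 2 * (ck n * 2 * Real.exp (L / 4) * Sx)) := by gcongr
    _ = _ := by
        rw [ee]
        unfold ck
        ring

end Sol

/-! ### Gaussian averages of shifts and increments -/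

section shift
variable {n : ℕ}

lemma fderiv_sq_le (f : Euc n → ℝ) (x h : Euc n) : (fderiv ℝ f x h) ^ 2 ≤ ‖h‖ ^ 2 * gr2 f x := by
  have e : fderiv ℝ f x h = ∑ i, pd i f x * h i := by
    have h1 : h = ∑ i, h i • EuclideanSpace.single i (1 : ℝ) := by
      have := (EuclideanSpace.basisFun (Fin n) ℝ).sum_repr h
      simpa using this.symm
    conv_lhs => rw [h1]
    rw [map_sum]
    refine Finset.sum_congr rfl fun i _ => ?_
    rw [map_smul, smul_eq_mul, mul_comm]
    rfl
  rw [e, norm_sq_eq', mul_comm]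
  exact Finset.sum_mul_sq_le_sq_mul_sq _ _ _

lemma sq_intervalIntegral_le {g : ℝ → ℝ} (hg : Continuous g) :
    (∫ θ in (0 : ℝ)..1, g θ) ^ 2 ≤ ∫ θ in (0 : ℝ)..1, g θ ^ 2 := by
  set m := ∫ θ in (0 : ℝ)..1, g θ with hm
  have h1 : 0 ≤ ∫ θ in (0 : ℝ)..1, (g θ - m) ^ 2 :=
    intervalIntegral.integral_nonneg (by norm_num) fun _ _ => sq_nonneg _
  have h2 : ∫ θ in (0 : ℝ)..1, (g θ - m) ^ 2
      = (∫ θ in (0 : ℝ)..1, g θ ^ 2) - 2 * m * m + m ^ 2 := by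
    have e : ∀ θ, (g θ - m) ^ 2 = g θ ^ 2 - 2 * m * g θ + m ^ 2 := fun θ => by ring
    simp only [e]
    rw [intervalIntegral.integral_add ((by fun_prop : Continuous _).intervalIntegrable _ _)
      ((by fun_prop : Continuous _).intervalIntegrable _ _),
      intervalIntegral.integral_sub ((by fun_prop : Continuous _).intervalIntegrable _ _)
      ((by fun_prop : Continuous _).intervalIntegrable _ _), intervalIntegral.integral_const_mul, ← hm]
    simp
  nlinarith

lemma incr_sq_le {f : Euc n → ℝ} (hf : ContDiff ℝ 1 f) (z h : Euc n) :
    (f (z + h) - f z) ^ 2 ≤ ∫ θ in (0 : ℝ)..1, ‖h‖ ^ 2 * gr2 f (z + θ • h) := by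
  have hc : Continuous (fun θ : ℝ => fderiv ℝ f (z + θ • h) h) := by
    have : Continuous (fderiv ℝ f) := hf.continuous_fderiv (by norm_num)
    exact (this.comp (by fun_prop)).clm_apply continuous_const
  have hg := gr2_cont hf
  have hd : ∀ θ : ℝ, HasDerivAt (fun θ : ℝ => f (z + θ • h)) (fderiv ℝ f (z + θ • h) h) θ := by
    intro θ
    have h1 : HasDerivAt (fun θ : ℝ => z + θ • h) h θ := by
      simpa using ((hasDerivAt_id θ).smul_const h).const_add z
    exact (hf.differentiable (by norm_num) _).hasFDerivAt.comp_hasDerivAt θ h1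
  have e : f (z + h) - f z = ∫ θ in (0 : ℝ)..1, fderiv ℝ f (z + θ • h) h := by
    rw [intervalIntegral.integral_eq_sub_of_hasDerivAt (fun θ _ => hd θ) (hc.intervalIntegrable _ _)]
    simp
  rw [e]
  refine (sq_intervalIntegral_le hc).trans ?_
  refine intervalIntegral.integral_mono_on (by norm_num) ((hc.pow 2).intervalIntegrable _ _)
    ((by fun_prop : Continuous _).intervalIntegrable _ _) fun θ _ => fderiv_sq_le f _ h

lemma lint_shift {f : Euc n → ℝ} (hf : GI f) (h0 : ∀ y, 0 ≤ f y) {t : ℝ} (ht : 0 < t) (w : Euc n) :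
    ∫⁻ z, ENNReal.ofReal (f (z + w) * G t z)
      ≤ ENNReal.ofReal (2 ^ (n / 2 : ℝ) * Real.exp (‖w‖ ^ 2 / (4 * t)) * P (2 * t) f) := by
  have hi := (hf.tr w).integrable ht
  simp only [add_comm w] at hi
  rw [← ofReal_integral_eq_lintegral_ofReal hi
    (Eventually.of_forall fun z => mul_nonneg (h0 _) (G_pos ht z).le)]
  refine ENNReal.ofReal_le_ofReal ?_
  have := P_comp hf h0 ht (l := 2) (by norm_num) w 0
  simp only [Sol.tr_zero, zero_sub, norm_neg] at this
  rw [show 4 * t * (2 - 1) = 4 * t by ring] at this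
  simpa only [P, tr, add_comm w] using this

lemma lint_incr {f : Euc n → ℝ} (hf : ContDiff ℝ 1 f) (hg : GI (gr2 f)) {t : ℝ} (ht : 0 < t)
    (h : Euc n) :
    ∫⁻ z, ENNReal.ofReal ((f (z + h) - f z) ^ 2 * G t z)
      ≤ ENNReal.ofReal (2 ^ (n / 2 : ℝ) * Real.exp (‖h‖ ^ 2 / (4 * t)) * ‖h‖ ^ 2
        * P (2 * t) (gr2 f)) := by
  have hgc := gr2_cont hf
  have hGc := G_cont (n := n) t
  have hQ : 0 ≤ P (2 * t) (gr2 f) := P_nonneg (by positivity) (gr2_nonneg f)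
  calc ∫⁻ z, ENNReal.ofReal ((f (z + h) - f z) ^ 2 * G t z)
      ≤ ∫⁻ z, ∫⁻ θ in Ioc (0 : ℝ) 1, ENNReal.ofReal (‖h‖ ^ 2 * gr2 f (z + θ • h) * G t z) := by
        refine lintegral_mono fun z => ?_
        have hi : IntegrableOn (fun θ : ℝ => ‖h‖ ^ 2 * gr2 f (z + θ • h) * G t z) (Ioc 0 1) :=
          (by fun_prop : Continuous _).integrableOn_Ioc
        rw [← ofReal_integral_eq_lintegral_ofReal hi (Eventually.of_forall fun θ =>
          mul_nonneg (mul_nonneg (sq_nonneg _) (gr2_nonneg f _)) (G_pos ht z).le)]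
        refine ENNReal.ofReal_le_ofReal ?_
        rw [integral_mul_const]
        have := incr_sq_le hf z h
        rw [intervalIntegral.integral_of_le (by norm_num)] at this
        exact mul_le_mul_of_nonneg_right this (G_pos ht z).le
    _ = ∫⁻ θ in Ioc (0 : ℝ) 1, ∫⁻ z, ENNReal.ofReal (‖h‖ ^ 2 * gr2 f (z + θ • h) * G t z) := by
        refine lintegral_lintegral_swap ?_
        refine (Continuous.measurable ?_).ennreal_ofReal.aemeasurable
        fun_prop
    _ ≤ ∫⁻ θ in Ioc (0 : ℝ) 1, ENNReal.ofReal (2 ^ (n / 2 : ℝ) * Real.exp (‖h‖ ^ 2 / (4 * t))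
          * ‖h‖ ^ 2 * P (2 * t) (gr2 f)) := by
        refine setLIntegral_mono measurable_const fun θ hθ => ?_
        have h1 := lint_shift hg (gr2_nonneg f) ht (θ • h)
        simp only [mul_assoc (‖h‖ ^ 2), ENNReal.ofReal_mul (sq_nonneg ‖h‖)]
        rw [lintegral_const_mul' _ _ ENNReal.ofReal_ne_top]
        refine (mul_le_mul_right h1 _).trans ?_
        rw [← ENNReal.ofReal_mul (sq_nonneg _)]
        refine ENNReal.ofReal_le_ofReal ?_
        have h2 : ‖θ • h‖ ≤ ‖h‖ := by
          rw [norm_smul, Real.norm_eq_abs, abs_of_pos hθ.1]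
          exact mul_le_of_le_one_left (norm_nonneg _) hθ.2
        calc _ ≤ ‖h‖ ^ 2 * (2 ^ (n / 2 : ℝ) * Real.exp (‖h‖ ^ 2 / (4 * t)) * P (2 * t) (gr2 f)) := by
              gcongr
          _ = _ := by ring
    _ = _ := by simp

lemma sq_norm_le_exp {s : ℝ} (hs : 0 < s) (h : Euc n) :
    ‖h‖ ^ 2 ≤ 24 * s * Real.exp (‖h‖ ^ 2 / (24 * s)) := by
  have := Real.add_one_le_exp (‖h‖ ^ 2 / (24 * s))
  calc ‖h‖ ^ 2 = 24 * s * (‖h‖ ^ 2 / (24 * s)) := by field_simp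
    _ ≤ _ := by gcongr; linarith

/-- Average over two Gaussians of a shifted nonnegative function. -/
lemma dint_shift {f : Euc n → ℝ} (hf : GI f) (h0 : ∀ y, 0 ≤ f y) {t s : ℝ} (hs : 0 < s)
    (hst : 6 * s ≤ t) :
    ∫⁻ z, ∫⁻ h, ENNReal.ofReal (f (z + h) * G s h * G t z)
      ≤ ENNReal.ofReal ((2 ^ (n / 2 : ℝ)) ^ 2 * P (2 * t) f) := by
  have ht : 0 < t := by linarith
  have hfc := hf.1
  have hGc := G_cont (n := n) t
  have hGc' := G_cont (n := n) s
  have hQ : 0 ≤ P (2 * t) f := P_nonneg (by positivity) h0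
  calc _ = ∫⁻ h, ∫⁻ z, ENNReal.ofReal (f (z + h) * G s h * G t z) := by
        refine lintegral_lintegral_swap ?_
        refine (Continuous.measurable ?_).ennreal_ofReal.aemeasurable
        fun_prop
    _ ≤ ∫⁻ h, ENNReal.ofReal ((2 ^ (n / 2 : ℝ) * P (2 * t) f)
          * (Real.exp (‖h‖ ^ 2 / (8 * s)) * G s h)) := by
        refine lintegral_mono fun h => ?_
        have h1 := lint_shift hf h0 ht h
        have e : ∀ z, f (z + h) * G s h * G t z = G s h * (f (z + h) * G t z) := fun z => by ring
        simp only [e, ENNReal.ofReal_mul (G_pos hs h).le]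
        rw [lintegral_const_mul' _ _ ENNReal.ofReal_ne_top]
        refine (mul_le_mul_right h1 _).trans ?_
        rw [← ENNReal.ofReal_mul (G_pos hs h).le]
        refine ENNReal.ofReal_le_ofReal ?_
        have := (G_pos hs h).le
        have h8 : 8 * s ≤ 4 * t := by linarith
        calc _ ≤ G s h * (2 ^ (n / 2 : ℝ) * Real.exp (‖h‖ ^ 2 / (8 * s)) * P (2 * t) f) := by
              refine mul_le_mul_of_nonneg_left (mul_le_mul_of_nonneg_right
                (mul_le_mul_of_nonneg_left (Real.exp_le_exp.2 ?_) (by positivity)) hQ) this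
              exact div_le_div_of_nonneg_left (sq_nonneg _) (by positivity) h8
          _ = _ := by ring
    _ = _ := by
        rw [← ofReal_integral_eq_lintegral_ofReal ((integrable_exp_G hs).const_mul _)
          (Eventually.of_forall fun h => by have := (G_pos hs h).le; positivity), integral_const_mul,
          integral_exp_G hs]
        congr 1
        ring

/-- Average over two Gaussians of the square of an increment. -/
lemma dint_incr {f : Euc n → ℝ} (hf : ContDiff ℝ 1 f) (hg : GI (gr2 f)) {t s : ℝ} (hs : 0 < s)
    (hst : 6 * s ≤ t) :
    ∫⁻ z, ∫⁻ h, ENNReal.ofReal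
        ((f (z + h) - f z) ^ 2 * Real.exp (‖h‖ ^ 2 / (24 * s)) * G s h * G t z)
      ≤ ENNReal.ofReal (24 * s * (2 ^ (n / 2 : ℝ)) ^ 2 * P (2 * t) (gr2 f)) := by
  have ht : 0 < t := by linarith
  have hfc := hf.continuous
  have hGc := G_cont (n := n) t
  have hGc' := G_cont (n := n) s
  have hQ : 0 ≤ P (2 * t) (gr2 f) := P_nonneg (by positivity) (gr2_nonneg f)
  calc _ = ∫⁻ h, ∫⁻ z, ENNReal.ofReal
        ((f (z + h) - f z) ^ 2 * Real.exp (‖h‖ ^ 2 / (24 * s)) * G s h * G t z) := by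
        refine lintegral_lintegral_swap ?_
        refine (Continuous.measurable ?_).ennreal_ofReal.aemeasurable
        fun_prop
    _ ≤ ∫⁻ h, ENNReal.ofReal ((24 * s * 2 ^ (n / 2 : ℝ) * P (2 * t) (gr2 f))
          * (Real.exp (‖h‖ ^ 2 / (8 * s)) * G s h)) := by
        refine lintegral_mono fun h => ?_
        have h1 := lint_incr hf hg ht h
        have hp : 0 ≤ Real.exp (‖h‖ ^ 2 / (24 * s)) * G s h := by have := (G_pos hs h).le; positivity
        have e : ∀ z, (f (z + h) - f z) ^ 2 * Real.exp (‖h‖ ^ 2 / (24 * s)) * G s h * G t z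
            = (Real.exp (‖h‖ ^ 2 / (24 * s)) * G s h) * ((f (z + h) - f z) ^ 2 * G t z) :=
          fun z => by ring
        simp only [e, ENNReal.ofReal_mul hp]
        rw [lintegral_const_mul' _ _ ENNReal.ofReal_ne_top]
        refine (mul_le_mul_right h1 _).trans ?_
        rw [← ENNReal.ofReal_mul hp]
        refine ENNReal.ofReal_le_ofReal ?_
        have := (G_pos hs h).le
        have e3 : Real.exp (‖h‖ ^ 2 / (8 * s)) = Real.exp (‖h‖ ^ 2 / (24 * s))
            * Real.exp (‖h‖ ^ 2 / (24 * s)) * Real.exp (‖h‖ ^ 2 / (24 * s)) := by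
          rw [← Real.exp_add, ← Real.exp_add]
          congr 1
          field_simp
          ring
        rw [e3]
        have h24 : 24 * s ≤ 4 * t := by linarith
        have hn := sq_norm_le_exp hs h
        have hx : Real.exp (‖h‖ ^ 2 / (4 * t)) ≤ Real.exp (‖h‖ ^ 2 / (24 * s)) := by
          rw [Real.exp_le_exp]
          exact div_le_div_of_nonneg_left (sq_nonneg _) (by positivity) h24
        calc _ ≤ (Real.exp (‖h‖ ^ 2 / (24 * s)) * G s h) * (2 ^ (n / 2 : ℝ)
              * Real.exp (‖h‖ ^ 2 / (24 * s)) * (24 * s * Real.exp (‖h‖ ^ 2 / (24 * s)))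
                * P (2 * t) (gr2 f)) := by
              refine mul_le_mul_of_nonneg_left (mul_le_mul_of_nonneg_right (mul_le_mul
                (mul_le_mul_of_nonneg_left hx (by positivity)) hn (by positivity)
                (by positivity)) hQ) hp
          _ = _ := by ring
    _ = _ := by
        rw [← ofReal_integral_eq_lintegral_ofReal ((integrable_exp_G hs).const_mul _)
          (Eventually.of_forall fun h => by have := (G_pos hs h).le; positivity), integral_const_mul,
          integral_exp_G hs]
        congr 1
        ring

/-- Away from a large ball, the kernel at time `s ∈ [t, 2t]` is much smaller than at time `4t`. -/
lemma tail_le {f : Euc n → ℝ} (hf : GI f) (h0 : ∀ y, 0 ≤ f y) {t s L : ℝ} (ht : 0 < t) (h1 : t ≤ s)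
    (h2 : s ≤ 2 * t) :
    ∫ z in {z : Euc n | L * t < ‖z‖ ^ 2}, f z * G s z
      ≤ 4 ^ (n / 2 : ℝ) * Real.exp (-(L / 16)) * P (4 * t) f := by
  have hs : 0 < s := by linarith
  have hm : MeasurableSet {z : Euc n | L * t < ‖z‖ ^ 2} :=
    (isOpen_lt continuous_const (by fun_prop)).measurableSet
  have hi := (hf.integrable (t := 4 * t) (by positivity)).const_mul
    (4 ^ (n / 2 : ℝ) * Real.exp (-(L / 16)))
  rw [P, ← integral_const_mul]
  refine le_trans (setIntegral_mono_on (hf.integrable hs).integrableOn hi.integrableOn hm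
    fun z hz => ?_) (setIntegral_le_integral hi (Eventually.of_forall fun z => ?_))
  · have hz' : L * t < ‖z‖ ^ 2 := hz
    have k : G s z ≤ 4 ^ (n / 2 : ℝ) * Real.exp (-(L / 16)) * G (4 * t) z := by
      unfold G
      have e : (4 * Real.pi * t) ^ (-(n / 2 : ℝ))
          = 4 ^ (n / 2 : ℝ) * (4 * Real.pi * (4 * t)) ^ (-(n / 2 : ℝ)) := by
        rw [show 4 * Real.pi * (4 * t) = 4 * (4 * Real.pi * t) by ring,
          Real.mul_rpow (x := 4) (y := 4 * Real.pi * t) (by norm_num) (by positivity), ← mul_assoc,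
          ← Real.rpow_add (by norm_num : (0 : ℝ) < 4)]
        simp
      have e1 : (4 * Real.pi * s) ^ (-(n / 2 : ℝ)) ≤ (4 * Real.pi * t) ^ (-(n / 2 : ℝ)) :=
        Real.rpow_le_rpow_of_nonpos (by positivity) (by gcongr) (by
          have : (0 : ℝ) ≤ n / 2 := by positivity
          linarith)
      have e2 : Real.exp (-(‖z‖ ^ 2 / (4 * s)))
          ≤ Real.exp (-(L / 16)) * Real.exp (-(‖z‖ ^ 2 / (4 * (4 * t)))) := by
        rw [← Real.exp_add, Real.exp_le_exp]
        have a1 : ‖z‖ ^ 2 / (4 * (2 * t)) ≤ ‖z‖ ^ 2 / (4 * s) := by gcongr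
        have a2 : L / 16 ≤ ‖z‖ ^ 2 / (16 * t) := by
          rw [div_le_div_iff₀ (by norm_num) (by positivity)]
          nlinarith
        have a3 : ‖z‖ ^ 2 / (4 * (2 * t)) = ‖z‖ ^ 2 / (16 * t) + ‖z‖ ^ 2 / (4 * (4 * t)) := by
          field_simp
          ring
        linarith
      calc _ ≤ (4 * Real.pi * t) ^ (-(n / 2 : ℝ))
            * (Real.exp (-(L / 16)) * Real.exp (-(‖z‖ ^ 2 / (4 * (4 * t))))) := by gcongr
        _ = _ := by rw [e]; ring
    calc f z * G s z ≤ f z * (4 ^ (n / 2 : ℝ) * Real.exp (-(L / 16)) * G (4 * t) z) :=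
          mul_le_mul_of_nonneg_left k (h0 z)
      _ = _ := by ring
  · have := h0 z
    have := (G_pos (n := n) (t := 4 * t) (by positivity) z).le
    simp only [Pi.zero_apply]
    positivity

/-- If `q` is bounded on `B` by the integrals `∫ Φ(z, ·)`, then so is its Gaussian average. -/
lemma setIntegral_le_of_dint {q : Euc n → ℝ} (hq : GI q) (h0 : ∀ y, 0 ≤ q y) {B : Set (Euc n)}
    (hB : MeasurableSet B) {t A : ℝ} (ht : 0 < t) (hA : 0 ≤ A) {Φ : Euc n → Euc n → ℝ}
    (hp : ∀ z ∈ B, q z ≤ ∫ h, Φ z h) (hΦ : ∀ z, Integrable (Φ z)) (hΦ0 : ∀ z h, 0 ≤ Φ z h)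
    (hA' : ∫⁻ z, ∫⁻ h, ENNReal.ofReal (Φ z h * G t z) ≤ ENNReal.ofReal A) :
    ∫ z in B, q z * G t z ≤ A := by
  rw [← ENNReal.ofReal_le_ofReal_iff hA, ofReal_integral_eq_lintegral_ofReal
    (hq.integrable ht).integrableOn
    (Eventually.of_forall fun z => mul_nonneg (h0 _) (G_pos ht z).le)]
  refine le_trans ?_ hA'
  refine le_trans (setLIntegral_mono' hB fun z hz => ?_) (setLIntegral_le_lintegral B _)
  rw [← ofReal_integral_eq_lintegral_ofReal ((hΦ z).mul_const _)
    (Eventually.of_forall fun h => mul_nonneg (hΦ0 _ _) (G_pos ht z).le), integral_mul_const]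
  exact ENNReal.ofReal_le_ofReal (mul_le_mul_of_nonneg_right (hp z hz) (G_pos ht z).le)

end shift

/-! ### Nondegeneracy: neither component is negligible at large scales -/

lemma GI.integrable_exp {n : ℕ} {f : Euc n → ℝ} (hf : GI f) {s : ℝ} (hs : 0 < s) :
    Integrable (fun y => f y * Real.exp (‖y‖ ^ 2 / (24 * s)) * G s y) := by
  have := (hf.2 (5 / (24 * s)) (by positivity)).const_mul ((4 * Real.pi * s) ^ (-(n / 2 : ℝ)))
  refine this.congr (Eventually.of_forall fun y => ?_)
  have e : Real.exp (-(5 / (24 * s) * ‖y‖ ^ 2))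
      = Real.exp (‖y‖ ^ 2 / (24 * s)) * Real.exp (-(‖y‖ ^ 2 / (4 * s))) := by
    rw [← Real.exp_add]
    congr 1
    field_simp
    ring
  simp only [e, G]
  ring

/-- Constant in `Sol.nd_in`. -/
noncomputable def cD (n : ℕ) : ℝ := 96 * (cA n + 1) * (2 ^ (n / 2 : ℝ)) ^ 2

lemma cD_pos (n : ℕ) : 0 < cD n := by have := cA_pos n; unfold cD; positivity

namespace Sol
variable {n : ℕ} {u v : Euc n → ℝ}

lemma gi_incr (h : Sol u v) (z : Euc n) : GI (fun y => (v (z + y) - v z) ^ 2) := by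
  have g : GI (fun y => (v (z + y) ^ 2 - 2 * v z * v (z + y)) + v z ^ 2) :=
    ((h.gi_v2.tr z).sub ((h.gi_v.tr z).const_mul (2 * v z))).add (GI.const (v z ^ 2))
  exact g.congr fun y => by ring

/-- Where `u` carries half of the height, `v²` is controlled by the interaction energy and the
increments of `v`. -/
lemma nd_point (h : Sol u v) {s : ℝ} (hs : 0 < s)
    (hv : P s (fun y => v y ^ 2) ≤ SS u v s / 2) (h1 : 1 ≤ s * SS u v s) :
    v 0 ^ 2 ≤ ∫ y, (4 * s * (u y ^ 2 * v y ^ 2 * G s y)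
      + 4 * cA n * ((v y - v 0) ^ 2 * Real.exp (‖y‖ ^ 2 / (24 * s)) * G s y)) := by
  have hS := h.SS_pos hs
  have hA := cA_pos n
  have hu : SS u v s / 2 ≤ P s (fun y => u y ^ 2) := by
    rw [h.SS_eq hs] at *
    linarith
  have gi := h.gi_incr 0
  simp only [zero_add] at gi
  have hI : Integrable (fun y => 4 * s * (u y ^ 2 * v y ^ 2 * G s y)
      + 4 * cA n * ((v y - v 0) ^ 2 * Real.exp (‖y‖ ^ 2 / (24 * s)) * G s y)) :=
    ((h.gi_w.integrable hs).const_mul _).add ((gi.integrable_exp hs).const_mul _)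
  have key : 2 * v 0 ^ 2 * P s (fun y => u y ^ 2)
      ≤ SS u v s * ∫ y, (4 * s * (u y ^ 2 * v y ^ 2 * G s y)
      + 4 * cA n * ((v y - v 0) ^ 2 * Real.exp (‖y‖ ^ 2 / (24 * s)) * G s y)) := by
    rw [P, ← integral_const_mul, ← integral_const_mul]
    refine integral_mono ((h.gi_u2.integrable hs).const_mul _) (hI.const_mul _) fun y => ?_
    have hG := (G_pos hs y).le
    have hr := h.rho_le hs y
    set E := Real.exp (‖y‖ ^ 2 / (24 * s))
    have a1 : 2 * v 0 ^ 2 * u y ^ 2 ≤ 4 * (u y ^ 2 * v y ^ 2) + 4 * u y ^ 2 * (v y - v 0) ^ 2 := by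
      have : 0 ≤ 2 * u y ^ 2 * (2 * v y - v 0) ^ 2 := by positivity
      nlinarith
    have a2 : 4 * u y ^ 2 * (v y - v 0) ^ 2 ≤ 4 * (cA n * E * SS u v s) * (v y - v 0) ^ 2 := by
      gcongr
      nlinarith [sq_nonneg (v y)]
    have a3 : 1 * (4 * (u y ^ 2 * v y ^ 2)) ≤ (s * SS u v s) * (4 * (u y ^ 2 * v y ^ 2)) := by
      gcongr
    have a4 : 2 * v 0 ^ 2 * u y ^ 2
        ≤ SS u v s * (4 * s * (u y ^ 2 * v y ^ 2) + 4 * cA n * ((v y - v 0) ^ 2 * E)) := by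
      linarith
    calc 2 * v 0 ^ 2 * (u y ^ 2 * G s y) = (2 * v 0 ^ 2 * u y ^ 2) * G s y := by ring
      _ ≤ (SS u v s * (4 * s * (u y ^ 2 * v y ^ 2) + 4 * cA n * ((v y - v 0) ^ 2 * E))) * G s y := by
          gcongr
      _ = _ := by ring
  have k2 : SS u v s * v 0 ^ 2 ≤ 2 * v 0 ^ 2 * P s (fun y => u y ^ 2) := by
    nlinarith [sq_nonneg (v 0)]
  exact le_of_mul_le_mul_left (k2.trans key) hS

/-- Integrated form of `nd_point`: if at time `s` the component `u` carries half of the height around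
every point of `B`, and the scale is supercritical there, then the mass of `v²` on `B` is at most `s`
times the energy of `v`. -/
lemma nd_in (h : Sol u v) {s t : ℝ} (hs : 0 < s) (hst : 6 * s ≤ t) {B : Set (Euc n)}
    (hB : MeasurableSet B)
    (hz : ∀ z ∈ B, P s (fun y => _root_.tr z v y ^ 2) ≤ SS (_root_.tr z u) (_root_.tr z v) s / 2
      ∧ 1 ≤ s * SS (_root_.tr z u) (_root_.tr z v) s) :
    ∫ z in B, v z ^ 2 * G t z
      ≤ s * cD n * P (2 * t) (fun y => gr2 v y + u y ^ 2 * v y ^ 2) := by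
  have ht : 0 < t := by linarith
  have hA := cA_pos n
  have hcu := h.cu
  have hcv := h.cv
  have hGc := G_cont (n := n) t
  have hGc' := G_cont (n := n) s
  have Qg : 0 ≤ P (2 * t) (gr2 v) := P_nonneg (by positivity) (gr2_nonneg v)
  have Qw : 0 ≤ P (2 * t) (fun y => u y ^ 2 * v y ^ 2) := P_nonneg (by positivity) fun y => by positivity
  set W : ℝ := (2 ^ (n / 2 : ℝ)) ^ 2 with hW
  have hW0 : 0 < W := by positivity
  have d1 := dint_shift h.gi_w (fun y => by positivity) hs hst
  have d2 := dint_incr h.c1v h.gi_gv hs hst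
  have main := setIntegral_le_of_dint (A := 4 * s * (W * P (2 * t) (fun y => u y ^ 2 * v y ^ 2))
      + 4 * cA n * (24 * s * W * P (2 * t) (gr2 v))) h.gi_v2 (fun y => by positivity) hB ht
    (by positivity)
    (Φ := fun z y => 4 * s * (u (z + y) ^ 2 * v (z + y) ^ 2 * G s y)
      + 4 * cA n * ((v (z + y) - v z) ^ 2 * Real.exp (‖y‖ ^ 2 / (24 * s)) * G s y))
    (fun z hzB => by
      have := (h.tr z).nd_point hs (hz z hzB).1 (hz z hzB).2
      simpa only [_root_.tr, add_zero] using this)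
    (fun z => (((h.gi_w.tr z).integrable hs).const_mul _).add
      (((h.gi_incr z).integrable_exp hs).const_mul _))
    (fun z y => by have := (G_pos hs y).le; positivity)
    (by
      have e : ∀ z y : Euc n, ENNReal.ofReal ((4 * s * (u (z + y) ^ 2 * v (z + y) ^ 2 * G s y)
          + 4 * cA n * ((v (z + y) - v z) ^ 2 * Real.exp (‖y‖ ^ 2 / (24 * s)) * G s y)) * G t z)
          = ENNReal.ofReal (4 * s) * ENNReal.ofReal (u (z + y) ^ 2 * v (z + y) ^ 2 * G s y * G t z)
            + ENNReal.ofReal (4 * cA n) * ENNReal.ofReal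
              ((v (z + y) - v z) ^ 2 * Real.exp (‖y‖ ^ 2 / (24 * s)) * G s y * G t z) := by
        intro z y
        have := (G_pos hs y).le
        have := (G_pos ht z).le
        rw [← ENNReal.ofReal_mul (by positivity), ← ENNReal.ofReal_mul (by positivity),
          ← ENNReal.ofReal_add (by positivity) (by positivity)]
        congr 1
        ring
      simp only [e]
      have m1 : Measurable (fun p : Euc n × Euc n =>
          ENNReal.ofReal (u (p.1 + p.2) ^ 2 * v (p.1 + p.2) ^ 2 * G s p.2 * G t p.1)) :=
        (Continuous.measurable (by fun_prop)).ennreal_ofReal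
      have m2 : ∀ z, Measurable (fun y =>
          ENNReal.ofReal (u (z + y) ^ 2 * v (z + y) ^ 2 * G s y * G t z)) := fun z =>
        (Continuous.measurable (by fun_prop)).ennreal_ofReal
      have e2 : ∀ z : Euc n, ∫⁻ y, (ENNReal.ofReal (4 * s)
            * ENNReal.ofReal (u (z + y) ^ 2 * v (z + y) ^ 2 * G s y * G t z)
            + ENNReal.ofReal (4 * cA n) * ENNReal.ofReal
              ((v (z + y) - v z) ^ 2 * Real.exp (‖y‖ ^ 2 / (24 * s)) * G s y * G t z))
          = ENNReal.ofReal (4 * s)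
            * (∫⁻ y, ENNReal.ofReal (u (z + y) ^ 2 * v (z + y) ^ 2 * G s y * G t z))
            + ENNReal.ofReal (4 * cA n) * ∫⁻ y, ENNReal.ofReal
              ((v (z + y) - v z) ^ 2 * Real.exp (‖y‖ ^ 2 / (24 * s)) * G s y * G t z) := by
        intro z
        rw [lintegral_add_left ((m2 z).const_mul _), lintegral_const_mul' _ _ ENNReal.ofReal_ne_top,
          lintegral_const_mul' _ _ ENNReal.ofReal_ne_top]
      simp only [e2]
      rw [lintegral_add_left (m1.lintegral_prod_right'.const_mul _),
        lintegral_const_mul' _ _ ENNReal.ofReal_ne_top,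
        lintegral_const_mul' _ _ ENNReal.ofReal_ne_top, ENNReal.ofReal_add (by positivity)
        (by positivity), ENNReal.ofReal_mul (p := 4 * s) (by positivity),
        ENNReal.ofReal_mul (p := 4 * cA n) (by positivity)]
      gcongr)
  refine main.trans ?_
  rw [P_add h.gi_gv h.gi_w (by positivity)]
  have e : s * cD n * (P (2 * t) (gr2 v) + P (2 * t) (fun y => u y ^ 2 * v y ^ 2))
      - (4 * s * (W * P (2 * t) (fun y => u y ^ 2 * v y ^ 2))
      + 4 * cA n * (24 * s * W * P (2 * t) (gr2 v)))
      = 96 * s * W * P (2 * t) (gr2 v)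
        + (96 * cA n + 92) * s * W * P (2 * t) (fun y => u y ^ 2 * v y ^ 2) := by
    unfold cD
    rw [← hW]
    ring
  have : 0 ≤ 96 * s * W * P (2 * t) (gr2 v)
        + (96 * cA n + 92) * s * W * P (2 * t) (fun y => u y ^ 2 * v y ^ 2) := by positivity
  linarith

lemma V_mono (h : Sol u v) {s t : ℝ} (hs : 0 < s) (hst : s ≤ t) :
    P s (fun y => v y ^ 2) ≤ P t (fun y => v y ^ 2) := by
  refine le_of_deriv_nonneg hst (fun x hx => h.hasDerivAt_v2 (hs.trans_le hx.1)) fun x hx => ?_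
  have := P_nonneg (hs.trans_le hx.1) (f := fun y => gr2 v y + u y ^ 2 * v y ^ 2)
    fun y => by have := gr2_nonneg v y; positivity
  positivity

end Sol

namespace Sol
variable {n : ℕ} {u v : Euc n → ℝ}

lemma V_pos (h : Sol u v) {t : ℝ} (ht : 0 < t) : 0 < P t (fun y => v y ^ 2) :=
  P_pos h.gi_v2 ht fun y => by have := h.vp y; positivity

/-- If the height of `v` does not grow much from `t` to `4t`, its mass on the ball `‖z‖² ≤ L t` is
dominated by its energy at all times in `[2t, 4t]`; as the energy is half the derivative of the
height of `v`, small `η` then forces a large growth. -/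
lemma nd_step (h : Sol u v) {t η L M : ℝ} (ht : 0 < t) (hη : 0 < η) (hη6 : η ≤ 1 / 6)
    (hM : 4 ^ (n / 2 : ℝ) * Real.exp (-(L / 16)) * M ≤ 1 / 4)
    (hV : P (4 * t) (fun y => v y ^ 2) < M * P t (fun y => v y ^ 2))
    (hz : ∀ z : Euc n, ‖z‖ ^ 2 ≤ L * t →
      P (η * t) (fun y => _root_.tr z v y ^ 2) ≤ SS (_root_.tr z u) (_root_.tr z v) (η * t) / 2
      ∧ 1 ≤ (η * t) * SS (_root_.tr z u) (_root_.tr z v) (η * t)) :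
    3 * P t (fun y => v y ^ 2) ≤ cD n * η * P (4 * t) (fun y => v y ^ 2) := by
  have hD := cD_pos n
  have hσ : 0 < η * t := by positivity
  set V : ℝ → ℝ := fun s => P s (fun y => v y ^ 2) with hVd
  have key : ∀ r ∈ Icc (2 * t) (4 * t),
      3 / 4 * V t ≤ η * t * cD n * P r (fun y => gr2 v y + u y ^ 2 * v y ^ 2) := by
    intro r hr
    set s := r / 2 with hsd
    have hs1 : t ≤ s := by have := hr.1; rw [hsd]; linarith
    have hs2 : s ≤ 2 * t := by have := hr.2; rw [hsd]; linarith
    have hs : 0 < s := by linarith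
    set B : Set (Euc n) := {z | ‖z‖ ^ 2 ≤ L * t} with hBd
    have hB : MeasurableSet B := (isClosed_le (by fun_prop) continuous_const).measurableSet
    have i1 := h.nd_in hσ (t := s) (by nlinarith) hB hz
    have i2 := tail_le (L := L) h.gi_v2 (fun y => by positivity) ht hs1 hs2
    have e : {z : Euc n | L * t < ‖z‖ ^ 2} = Bᶜ := by
      ext z; simp [hBd]
    rw [e] at i2
    have i3 := integral_add_compl hB (h.gi_v2.integrable hs)
    have i4 : V t ≤ V s := h.V_mono ht hs1
    have i5 : 4 ^ (n / 2 : ℝ) * Real.exp (-(L / 16)) * V (4 * t) ≤ 1 / 4 * V t := by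
      calc 4 ^ (n / 2 : ℝ) * Real.exp (-(L / 16)) * V (4 * t)
          ≤ 4 ^ (n / 2 : ℝ) * Real.exp (-(L / 16)) * (M * V t) := by gcongr
        _ = (4 ^ (n / 2 : ℝ) * Real.exp (-(L / 16)) * M) * V t := by ring
        _ ≤ _ := by have := (h.V_pos ht).le; gcongr
    have i6 : V s = (∫ x in B, v x ^ 2 * G s x) + ∫ x in Bᶜ, v x ^ 2 * G s x := i3.symm
    have i7 : P (4 * t) (fun y => v y ^ 2) = V (4 * t) := rfl
    rw [i7] at i2
    have e2 : 2 * s = r := by rw [hsd]; ring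
    rw [e2] at i1
    linarith
  have fin := le_of_deriv_nonneg (a := 2 * t) (b := 4 * t)
    (f := fun r => V r - (3 / 2 * V t / (η * t * cD n)) * r)
    (f' := fun r => 2 * P r (fun y => gr2 v y + u y ^ 2 * v y ^ 2) - (3 / 2 * V t / (η * t * cD n)) * 1)
    (by linarith)
    (fun r hr => (h.hasDerivAt_v2 (by linarith [hr.1])).sub ((hasDerivAt_id r).const_mul _))
    (fun r hr => by
      have := key r hr
      rw [mul_one, sub_nonneg, div_le_iff₀ (by positivity)]
      linarith)
  have p := h.V_pos (t := 2 * t) (by positivity)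
  have : 3 / 2 * V t / (η * t * cD n) * (2 * t) ≤ V (4 * t) := by
    have : 0 < V (2 * t) := p
    linarith
  have e : 3 / 2 * V t / (η * t * cD n) * (2 * t) = 3 * V t / (η * cD n) := by
    field_simp
  rw [e, div_le_iff₀ (by positivity)] at this
  show 3 * V t ≤ cD n * η * V (4 * t)
  linarith

/-- If `v` carries only a small fraction of the height at time `4t`, then around every point `z` with
`‖z‖² ≤ L t` it carries at most half of the height at the smaller time `η t`. -/
lemma nd_cond (h : Sol u v) {t η L c : ℝ} (ht : 0 < t) (hη : 0 < η) (hη6 : η ≤ 1 / 6) (z : Euc n)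
    (hz : ‖z‖ ^ 2 ≤ L * t) {H K : ℝ} (hH : H = Real.exp 1 * (ck n * 2 * Real.exp (L / 4)))
    (hK : K = (4 / η) ^ (n / 2 : ℝ) * Real.exp (L / 8))
    (hA : H / η ^ 2 ≤ t * SS u v t)
    (hc : P (4 * t) (fun y => v y ^ 2) ≤ c * SS u v (4 * t)) (hc' : c = η / (8 * Real.exp 1 * H * K)) :
      P (η * t) (fun y => _root_.tr z v y ^ 2) ≤ SS (_root_.tr z u) (_root_.tr z v) (η * t) / 2
      ∧ 1 ≤ (η * t) * SS (_root_.tr z u) (_root_.tr z v) (η * t) := by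
  have hck := ck_pos n
  have hH0 : 0 < H := by rw [hH]; positivity
  have hK0 : 0 < K := by rw [hK]; positivity
  have hc0 : 0 < c := by rw [hc']; positivity
  have hσ : 0 < η * t := by positivity
  have s1 := h.SS_comp_center ht 0 z (L := L) (by simpa using hz)
  rw [tr_zero, tr_zero] at s1
  have s2 := (h.tr z).SS_le hσ (t := t) (by nlinarith)
  have e1 : t / (η * t) = 1 / η := by field_simp
  rw [e1] at s2
  set a := SS (_root_.tr z u) (_root_.tr z v) (η * t) with ha
  have s3 : SS u v t ≤ H / η * a := by
    calc SS u v t ≤ ck n * 2 * Real.exp (L / 4) * (Real.exp 1 * (1 / η) * a) := s1.trans (by gcongr)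
      _ = _ := by rw [hH]; ring
  constructor
  · have c1 := P_comp h.gi_v2 (fun y => by positivity) hσ (l := 4 / η)
      (by rw [lt_div_iff₀ hη]; linarith) z 0
    rw [tr_zero] at c1
    have e2 : 4 / η * (η * t) = 4 * t := by field_simp
    have e3 : 4 * (η * t) * (4 / η - 1) = 4 * t * (4 - η) := by field_simp
    have e4 : ‖(0 : Euc n) - z‖ ^ 2 / (4 * t * (4 - η)) ≤ L / 8 := by
      rw [div_le_div_iff₀ (by nlinarith) (by norm_num)]
      have : ‖(0 : Euc n) - z‖ ^ 2 = ‖z‖ ^ 2 := by simp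
      rw [this]
      have hL : 0 ≤ L * t := le_trans (by positivity) hz
      nlinarith
    rw [e2, e3] at c1
    have s4 := h.SS_le ht (t := 4 * t) (by linarith)
    have e5 : 4 * t / t = 4 := by field_simp
    rw [e5] at s4
    calc P (η * t) (fun y => _root_.tr z v y ^ 2)
        ≤ (4 / η) ^ (n / 2 : ℝ) * Real.exp (‖(0 : Euc n) - z‖ ^ 2 / (4 * t * (4 - η)))
          * P (4 * t) (fun y => v y ^ 2) := c1
      _ ≤ K * (c * (Real.exp 1 * 4 * (H / η * a))) := by
          rw [hK]
          have := (h.V_pos (t := 4 * t) (by positivity)).le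
          gcongr
          refine hc.trans ?_
          gcongr
          exact s4.trans (by gcongr)
      _ = a / 2 := by rw [hc']; field_simp; ring
  · have : H / η ^ 2 ≤ t * (H / η * a) := hA.trans (by gcongr)
    rw [div_le_iff₀ (by positivity)] at this
    have e : t * (H / η * a) * η ^ 2 = H * (η * t * a) := by field_simp
    rw [e] at this
    exact le_of_mul_le_mul_left (by linarith) hH0

/-- Non-degeneracy alternative: at a large scale either `v` already carries a fixed fraction of the
height, or its height grows by a factor larger than the total height can. -/
theorem nd (n : ℕ) : ∃ c > (0:ℝ), ∃ A > (0:ℝ), ∀ u v : Euc n → ℝ, Sol u v → ∀ t > (0:ℝ),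
    A ≤ t * SS u v t → c * SS u v (4 * t) ≤ P (4 * t) (fun y => v y ^ 2) ∨
      16 * Real.exp 1 * P t (fun y => v y ^ 2) ≤ P (4 * t) (fun y => v y ^ 2) := by
  have hD := cD_pos n
  have hck := ck_pos n
  set M : ℝ := 16 * Real.exp 1 with hM
  have hM0 : 0 < M := by positivity
  set L : ℝ := 16 * (4 * 4 ^ (n / 2 : ℝ) * M) with hL
  have hLM : 4 ^ (n / 2 : ℝ) * Real.exp (-(L / 16)) * M ≤ 1 / 4 := by
    have e : L / 16 = 4 * 4 ^ (n / 2 : ℝ) * M := by rw [hL]; ring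
    rw [Real.exp_neg, e]
    have := Real.add_one_le_exp (4 * 4 ^ (n / 2 : ℝ) * M)
    set X := Real.exp (4 * 4 ^ (n / 2 : ℝ) * M)
    have hX : 0 < X := Real.exp_pos _
    rw [mul_right_comm, ← div_eq_mul_inv, div_le_iff₀ hX]
    linarith
  set η : ℝ := min (1 / 6) (3 / (cD n * M)) with hη
  have hη0 : 0 < η := lt_min (by norm_num) (by positivity)
  have hη6 : η ≤ 1 / 6 := min_le_left _ _
  have hη3 : η * (cD n * M) ≤ 3 := by
    rw [← le_div_iff₀ (by positivity)]; exact min_le_right _ _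
  set H : ℝ := Real.exp 1 * (ck n * 2 * Real.exp (L / 4)) with hH
  set K : ℝ := (4 / η) ^ (n / 2 : ℝ) * Real.exp (L / 8) with hK
  refine ⟨η / (8 * Real.exp 1 * H * K), by positivity, H / η ^ 2, by positivity, ?_⟩
  intro u v h t ht hA
  by_contra hcon
  push Not at hcon
  have := h.nd_step ht hη0 hη6 hLM hcon.2 (fun z hz => h.nd_cond ht hη0 hη6 z hz hH hK hA hcon.1.le rfl)
  have hV := h.V_pos ht
  have h2 : cD n * η * P (4 * t) (fun y => v y ^ 2) < cD n * η * (M * P t (fun y => v y ^ 2)) := by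
    have := hcon.2
    gcongr
  nlinarith

/-- At all large scales (centred at the origin) `v` carries a fixed fraction of the height. -/
theorem nd_large (n : ℕ) : ∃ c > (0:ℝ), ∀ u v : Euc n → ℝ, Sol u v → ∃ t₀ > (0:ℝ), ∀ t ≥ t₀,
    c * SS u v t ≤ P t (fun y => v y ^ 2) := by
  obtain ⟨c, hc, A, hA, hnd⟩ := nd n
  refine ⟨c / (4 * Real.exp 1), by positivity, fun u v h => ?_⟩
  have hS1 := h.SS_pos (t := 1) one_pos
  set τ : ℝ := 1 + A / SS u v 1 with hτ
  have hτ1 : 1 ≤ τ := by rw [hτ]; have : 0 ≤ A / SS u v 1 := by positivity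
                         linarith
  have big : ∀ t ≥ τ, A ≤ t * SS u v t := by
    intro t ht
    have : SS u v 1 ≤ SS u v t := h.SS_mono one_pos (by linarith)
    have h3 : A / SS u v 1 ≤ t := by rw [hτ] at ht; linarith
    rw [div_le_iff₀ hS1] at h3
    nlinarith
  have step : ∀ t ≥ τ, c ≤ P (4 * t) (fun y => v y ^ 2) / SS u v (4 * t) ∨
      4 * (P t (fun y => v y ^ 2) / SS u v t) ≤ P (4 * t) (fun y => v y ^ 2) / SS u v (4 * t) := by
    intro t ht
    have ht0 : 0 < t := by linarith
    have hS := h.SS_pos ht0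
    have hS4 := h.SS_pos (t := 4 * t) (by positivity)
    have s4 := h.SS_le ht0 (t := 4 * t) (by linarith)
    have e5 : 4 * t / t = 4 := by field_simp
    rw [e5] at s4
    rcases hnd u v h t ht0 (big t ht) with h1 | h1
    · left; rwa [le_div_iff₀ hS4]
    · right
      rw [le_div_iff₀ hS4]
      calc 4 * (P t (fun y => v y ^ 2) / SS u v t) * SS u v (4 * t)
          ≤ 4 * (P t (fun y => v y ^ 2) / SS u v t) * (Real.exp 1 * 4 * SS u v t) := by
            have := h.V_pos ht0
            gcongr
        _ = 16 * Real.exp 1 * P t (fun y => v y ^ 2) := by field_simp; ring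
        _ ≤ _ := h1
  set r : ℕ → ℝ := fun k => P (4 ^ k * τ) (fun y => v y ^ 2) / SS u v (4 ^ k * τ) with hr
  have hge : ∀ k : ℕ, τ ≤ 4 ^ k * τ := fun k => by
    have : (1:ℝ) ≤ 4 ^ k := one_le_pow₀ (by norm_num)
    nlinarith
  have rpos : ∀ k, 0 < r k := fun k => by
    have : 0 < 4 ^ k * τ := by positivity
    exact div_pos (h.V_pos this) (h.SS_pos this)
  have rstep : ∀ k, c ≤ r (k + 1) ∨ 4 * r k ≤ r (k + 1) := by
    intro k
    have := step (4 ^ k * τ) (hge k)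
    have e : 4 * (4 ^ k * τ) = 4 ^ (k + 1) * τ := by ring
    rw [e] at this
    exact this
  have ex : ∃ k, c ≤ r k := by
    by_contra hno
    push Not at hno
    have gr : ∀ k, 4 ^ k * r 0 ≤ r k := by
      intro k
      induction k with
      | zero => simp
      | succ k ih =>
        rcases rstep k with h1 | h1
        · exact absurd h1 (not_le.2 (hno _))
        · calc 4 ^ (k + 1) * r 0 = 4 * (4 ^ k * r 0) := by ring
            _ ≤ 4 * r k := by gcongr
            _ ≤ _ := h1
    obtain ⟨k, hk⟩ := pow_unbounded_of_one_lt (c / r 0) (by norm_num : (1:ℝ) < 4)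
    rw [div_lt_iff₀ (rpos 0)] at hk
    linarith [gr k, hno k]
  obtain ⟨k, hk⟩ := ex
  have all : ∀ j, c ≤ r (k + j) := by
    intro j
    induction j with
    | zero => exact hk
    | succ j ih =>
      rcases rstep (k + j) with h1 | h1
      · exact h1
      · have := rpos (k + j)
        rw [← add_assoc]
        linarith
  have hp : 0 < 4 ^ k * τ := by positivity
  refine ⟨4 ^ k * τ, hp, fun t ht => ?_⟩
  have h1 : 1 ≤ t / (4 ^ k * τ) := (one_le_div hp).2 ht
  obtain ⟨j, hj1, hj2⟩ := exists_nat_pow_near h1 (by norm_num : (1:ℝ) < 4)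
  rw [le_div_iff₀ hp] at hj1
  rw [div_lt_iff₀ hp] at hj2
  set s := 4 ^ (k + j) * τ with hs
  have es : 4 ^ j * (4 ^ k * τ) = s := by rw [hs, pow_add]; ring
  have es' : (4:ℝ) ^ (j + 1) * (4 ^ k * τ) = 4 * s := by rw [hs, pow_add, pow_succ]; ring
  rw [es] at hj1
  rw [es'] at hj2
  have hs0 : 0 < s := by rw [hs]; positivity
  have hcs : c * SS u v s ≤ P s (fun y => v y ^ 2) := by
    have := all j
    rwa [hr, le_div_iff₀ (h.SS_pos hs0)] at this
  have hSt : SS u v t ≤ Real.exp 1 * 4 * SS u v s := by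
    refine (h.SS_le hs0 hj1).trans ?_
    have := (h.SS_pos hs0).le
    have : t / s ≤ 4 := by rw [div_le_iff₀ hs0]; linarith
    gcongr
  calc c / (4 * Real.exp 1) * SS u v t ≤ c / (4 * Real.exp 1) * (Real.exp 1 * 4 * SS u v s) := by gcongr
    _ = c * SS u v s := by field_simp
    _ ≤ _ := hcs
    _ ≤ _ := h.V_mono hs0 hj1

end Sol

/-! ### Balanced centres -/

lemma continuous_P_tr {n : ℕ} {f : Euc n → ℝ} (hf : GI f) {t : ℝ} (ht : 0 < t) :
    Continuous fun x => P t (tr x f) := by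
  rw [continuous_iff_continuousAt]
  intro x₀
  have e : (fun x => P t (tr x f)) = fun x => ∫ z, f (x₀ + z) * G t (z + (x₀ - x)) :=
    funext fun x => P_tr_eq f x x₀ t
  rw [e]
  have hG := G_cont (n := n) t
  have hc := hf.1
  refine continuousAt_of_dominated (bound := fun z => (2 ^ (n / 2 : ℝ) * Real.exp (1 / (4 * t)))
    * (|f (x₀ + z)| * G (2 * t) z)) ?_ ?_ ?_ ?_
  · exact Eventually.of_forall fun x => (by fun_prop : Continuous _).aestronglyMeasurable
  · filter_upwards [Metric.ball_mem_nhds x₀ one_pos] with x hx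
    refine Eventually.of_forall fun z => ?_
    have hx' : ‖x₀ - x‖ ≤ 1 := by
      rw [← dist_eq_norm, dist_comm]; exact (mem_ball.1 hx).le
    have g := G_comp ht (l := 2) (by norm_num) z (x₀ - x)
    have hG0 := (G_pos ht (z + (x₀ - x))).le
    have hG2 := (G_pos (t := 2 * t) (by positivity) z).le
    rw [norm_mul, Real.norm_eq_abs, Real.norm_eq_abs, abs_of_nonneg hG0]
    have g2 : G t (z + (x₀ - x)) ≤ 2 ^ (n / 2 : ℝ) * Real.exp (1 / (4 * t)) * G (2 * t) z := by
      refine g.trans ?_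
      have : ‖x₀ - x‖ ^ 2 / (4 * t * (2 - 1)) ≤ 1 / (4 * t) := by
        have e : 4 * t * (2 - 1) = 4 * t := by ring
        rw [e]
        gcongr
        nlinarith [norm_nonneg (x₀ - x)]
      gcongr
    calc |f (x₀ + z)| * G t (z + (x₀ - x))
        ≤ |f (x₀ + z)| * (2 ^ (n / 2 : ℝ) * Real.exp (1 / (4 * t)) * G (2 * t) z) := by gcongr
      _ = _ := by ring
  · exact (((hf.tr x₀).abs).integrable (by positivity)).const_mul _
  · exact Eventually.of_forall fun z => (by fun_prop : Continuous _).continuousAt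

namespace Sol
variable {n : ℕ} {u v : Euc n → ℝ}

/-- If the signed height has nonnegative mean, its negative part at the centre is controlled by its
increments. -/
lemma bal_point (h : Sol u v) {s : ℝ} (hs : 0 < s) (hF : 0 ≤ P s (FF u v)) :
    min (FF u v 0) 0 ^ 2 ≤ ∫ y, (FF u v y - FF u v 0) ^ 2 * Real.exp (‖y‖ ^ 2 / (24 * s)) * G s y := by
  have gd : GI (fun y => FF u v y - FF u v 0) := h.gi_FF.sub (GI.const _)
  have gd2 : GI (fun y => (FF u v y - FF u v 0) ^ 2) :=
    ((h.gi_FF2.sub (h.gi_FF.const_mul (2 * FF u v 0))).add (GI.const (FF u v 0 ^ 2))).congr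
      fun y => by ring
  have hInt := gd2.integrable_exp hs
  have b1 : P s (fun y => (FF u v y - FF u v 0) ^ 2)
      ≤ ∫ y, (FF u v y - FF u v 0) ^ 2 * Real.exp (‖y‖ ^ 2 / (24 * s)) * G s y := by
    refine integral_mono (gd2.integrable hs) hInt fun y => ?_
    have := (G_pos hs y).le
    have h1 : 1 ≤ Real.exp (‖y‖ ^ 2 / (24 * s)) := Real.one_le_exp (by positivity)
    simp only
    gcongr
    exact le_mul_of_one_le_right (by positivity) h1
  refine le_trans ?_ b1
  rcases le_total 0 (FF u v 0) with h0 | h0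
  · rw [min_eq_right h0]
    simpa using P_nonneg hs fun y => sq_nonneg (FF u v y - FF u v 0)
  · rw [min_eq_left h0]
    have c := P_cs (g := fun _ => (1:ℝ)) gd.1 continuous_const gd2 (GI.const _) hs
    simp only [mul_one, one_pow] at c
    rw [P_const hs, mul_one, P_sub h.gi_FF (GI.const _) hs, P_const hs] at c
    refine le_trans ?_ c
    nlinarith

/-- If the signed height has nonnegative mean around every point of a large ball, then `v` carries
only a small fraction of the height. With `nd_large` this forces the mean to change sign. -/
lemma bal_neg (h : Sol u v) {t η L a : ℝ} (ht : 0 < t) (hη : 0 < η) (hη6 : η ≤ 1 / 6) (ha : 0 < a)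
    (hA : 1 / a ^ 2 ≤ t * SS u v t)
    (hz : ∀ z : Euc n, ‖z‖ ^ 2 ≤ L * t → 0 ≤ P (η * t) (FF (_root_.tr z u) (_root_.tr z v))) :
    P t (fun y => v y ^ 2) ≤ (48 * Real.exp 1 * (2 ^ (n / 2 : ℝ)) ^ 2 * η
      + 4 ^ (n / 2 : ℝ) * Real.exp (-(L / 16)) * (4 * Real.exp 1) + a * (ck n + 1)) * SS u v t := by
  have hσ : 0 < η * t := by positivity
  have hS := h.SS_pos ht
  have hFc := h.FF_contDiff.continuous
  set q : Euc n → ℝ := fun y => min (FF u v y) 0 ^ 2 with hq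
  have qle : ∀ y, q y ≤ FF u v y ^ 2 := by
    intro y
    simp only [hq]
    rcases le_total 0 (FF u v y) with h0 | h0
    · rw [min_eq_right h0]; simpa using sq_nonneg (FF u v y)
    · rw [min_eq_left h0]
  have q0 : ∀ y, 0 ≤ q y := fun y => sq_nonneg _
  have gq : GI q := h.gi_FF2.mono (by fun_prop) fun y => by
    rw [abs_of_nonneg (q0 y), abs_of_nonneg (sq_nonneg _)]; exact qle y
  have g2uv : GI (fun y => 2 * u y * v y) := (h.gi_uv.const_mul 2).congr fun y => by ring
  have hW : (0:ℝ) < (2 ^ (n / 2 : ℝ)) ^ 2 := by positivity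
  set B : Set (Euc n) := {z | ‖z‖ ^ 2 ≤ L * t} with hBd
  have hB : MeasurableSet B := (isClosed_le (by fun_prop) continuous_const).measurableSet
  -- contribution of the ball
  have hgF : 0 ≤ P (2 * t) (gr2 (FF u v)) := P_nonneg (by positivity) (gr2_nonneg _)
  have i1 : ∫ z in B, q z * G t z
      ≤ 24 * (η * t) * (2 ^ (n / 2 : ℝ)) ^ 2 * P (2 * t) (gr2 (FF u v)) := by
    refine setIntegral_le_of_dint gq q0 hB ht (by positivity)
      (Φ := fun z y => (FF u v (z + y) - FF u v z) ^ 2 * Real.exp (‖y‖ ^ 2 / (24 * (η * t)))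
        * G (η * t) y) (fun z hzB => ?_) (fun z => ?_) (fun z y => ?_)
      (dint_incr h.FF_contDiff h.gi_gF hσ (by nlinarith))
    · have := (h.tr z).bal_point hσ (hz z hzB)
      have e : FF (_root_.tr z u) (_root_.tr z v) = fun y => FF u v (z + y) := rfl
      rw [e] at this
      simpa only [add_zero] using this
    · refine GI.integrable_exp (f := fun y => (FF u v (z + y) - FF u v z) ^ 2) ?_ hσ
      exact (((h.gi_FF2.tr z).sub ((h.gi_FF.tr z).const_mul (2 * FF u v z))).add
        (GI.const (FF u v z ^ 2))).congr fun y => by ring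
    · have := (G_pos hσ y).le
      positivity
  have i2 := tail_le (L := L) gq q0 ht le_rfl (by linarith)
  have e : {z : Euc n | L * t < ‖z‖ ^ 2} = Bᶜ := by
    ext z; simp [hBd]
  rw [e] at i2
  have i3 : (∫ x in B, q x * G t x) + ∫ x in Bᶜ, q x * G t x = P t q :=
    integral_add_compl hB (gq.integrable ht)
  have s2 := h.SS_le ht (t := 2 * t) (by linarith)
  have s4 := h.SS_le ht (t := 4 * t) (by linarith)
  have e2 : 2 * t / t = 2 := by field_simp
  have e4 : 4 * t / t = 4 := by field_simp
  rw [e2] at s2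
  rw [e4] at s4
  have i4 : P (4 * t) q ≤ 4 * Real.exp 1 * SS u v t := by
    have : P (4 * t) q ≤ SS u v (4 * t) :=
      P_mono gq h.gi_rho (by positivity) fun y => (qle y).trans (h.FF_sq_le y)
    linarith
  have i5 : t * P (2 * t) (gr2 (FF u v)) ≤ 2 * Real.exp 1 * SS u v t := by
    have k1 : P (2 * t) (gr2 (FF u v)) ≤ 4 * EE u v (2 * t) := by
      have : P (2 * t) (gr2 (FF u v))
          ≤ P (2 * t) (fun y => 4 * (gr2 u y + gr2 v y + u y ^ 2 * v y ^ 2)) := by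
        refine P_mono h.gi_gF (h.gi_e.const_mul 4) (by positivity) fun y => ?_
        have := h.gr2_FF_le4 y
        nlinarith [sq_nonneg (u y * v y)]
      rwa [P_const_mul] at this
    have k2 := h.NN_le_one (t := 2 * t) (by positivity)
    unfold NN at k2
    rw [div_le_one (h.SS_pos (by positivity))] at k2
    nlinarith
  have i6 := h.P_uv_le ht (a := a * t) (by positivity)
  have i7 : t * KK u v t ≤ ck n * SS u v t := by
    have := h.kk_le_ck ht
    rwa [div_le_iff₀ hS] at this
  have i8 : 1 / (a * t) ≤ a * SS u v t := by
    rw [div_le_iff₀ (by positivity)] at hA ⊢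
    nlinarith
  have i9 : P t (fun y => v y ^ 2) ≤ P t q + P t (fun y => 2 * u y * v y) := by
    rw [← P_add gq g2uv ht]
    refine P_mono h.gi_v2 (gq.add g2uv) ht fun y => ?_
    have hu := h.up y
    have hv := h.vp y
    rcases le_total (v y) (u y) with h0 | h0
    · have := q0 y
      nlinarith
    · have hF : FF u v y ≤ 0 := by
        unfold FF
        exact div_nonpos_of_nonpos_of_nonneg (by nlinarith) (Real.sqrt_nonneg _)
      have := h.FF_sq_ge y
      simp only [hq, min_eq_left hF]
      nlinarith
  have i10 : 4 ^ (n / 2 : ℝ) * Real.exp (-(L / 16)) * P (4 * t) q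
      ≤ 4 ^ (n / 2 : ℝ) * Real.exp (-(L / 16)) * (4 * Real.exp 1 * SS u v t) := by gcongr
  have i11 : 24 * (η * t) * (2 ^ (n / 2 : ℝ)) ^ 2 * P (2 * t) (gr2 (FF u v))
      ≤ 24 * η * (2 ^ (n / 2 : ℝ)) ^ 2 * (2 * Real.exp 1 * SS u v t) := by
    calc _ = 24 * η * (2 ^ (n / 2 : ℝ)) ^ 2 * (t * P (2 * t) (gr2 (FF u v))) := by ring
      _ ≤ _ := by gcongr
  have i12 : a * t * KK u v t ≤ a * (ck n * SS u v t) := by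
    calc _ = a * (t * KK u v t) := by ring
      _ ≤ _ := by gcongr
  linarith

lemma SS_swap (u v : Euc n → ℝ) (t : ℝ) : SS v u t = SS u v t := by
  unfold SS
  congr 1
  funext y
  ring

/-- Balanced centres: at every large scale `t` there is a point at distance `O(√t)` from the origin
at which the Gaussian average of `FF` at time `η t` vanishes. -/
theorem balanced (n : ℕ) : ∃ η > (0:ℝ), η ≤ 1 / 6 ∧ ∃ L > (0:ℝ), ∀ u v : Euc n → ℝ, Sol u v →
    ∃ t₀ > (0:ℝ), ∀ t ≥ t₀, ∃ x : Euc n, ‖x‖ ^ 2 ≤ L * t ∧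
      P (η * t) (FF (_root_.tr x u) (_root_.tr x v)) = 0 := by
  obtain ⟨c, hc, hnd⟩ := nd_large n
  have hck := ck_pos n
  set a : ℝ := c / (4 * (ck n + 1)) with ha
  have ha0 : 0 < a := by positivity
  set W : ℝ := (2 ^ (n / 2 : ℝ)) ^ 2 with hW
  have hW0 : 0 < W := by positivity
  set η : ℝ := min (1 / 6) (c / (4 * (48 * Real.exp 1 * W))) with hη
  have hη0 : 0 < η := lt_min (by norm_num) (by positivity)
  have hη6 : η ≤ 1 / 6 := min_le_left _ _
  have b1 : 48 * Real.exp 1 * W * η ≤ c / 4 := by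
    have : η ≤ c / (4 * (48 * Real.exp 1 * W)) := min_le_right _ _
    rw [le_div_iff₀ (by positivity)] at this
    linarith
  set Y : ℝ := 4 ^ (n / 2 : ℝ) * (4 * Real.exp 1) / (c / 4) with hY
  have hY0 : 0 < Y := by positivity
  have b2 : 4 ^ (n / 2 : ℝ) * Real.exp (-((16 * Y) / 16)) * (4 * Real.exp 1) ≤ c / 4 := by
    have e : 16 * Y / 16 = Y := by ring
    rw [Real.exp_neg, e, mul_right_comm, ← div_eq_mul_inv, div_le_iff₀ (Real.exp_pos _)]
    have h1 := Real.add_one_le_exp Y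
    have h2 : 4 ^ (n / 2 : ℝ) * (4 * Real.exp 1) = c / 4 * Y := by rw [hY]; field_simp
    rw [h2]
    gcongr
    linarith
  have b3 : a * (ck n + 1) = c / 4 := by rw [ha]; field_simp
  refine ⟨η, hη0, hη6, 16 * Y, by positivity, fun u v h => ?_⟩
  have main : ∀ u v : Euc n → ℝ, Sol u v → ∃ t₀ > (0:ℝ), ∀ t ≥ t₀, ∃ z : Euc n,
      ‖z‖ ^ 2 ≤ 16 * Y * t ∧ P (η * t) (FF (_root_.tr z u) (_root_.tr z v)) < 0 := by
    intro u v h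
    obtain ⟨t₀, ht₀, h0⟩ := hnd u v h
    have hS1 := h.SS_pos (t := 1) one_pos
    refine ⟨max t₀ (max 1 (1 / a ^ 2 / SS u v 1)), lt_max_of_lt_left ht₀, fun t ht => ?_⟩
    have t1 : t₀ ≤ t := (le_max_left _ _).trans ht
    have t2 : 1 ≤ t := ((le_max_left _ _).trans (le_max_right _ _)).trans ht
    have t3 : 1 / a ^ 2 / SS u v 1 ≤ t := ((le_max_right _ _).trans (le_max_right _ _)).trans ht
    have ht0 : 0 < t := by linarith
    by_contra hno
    push Not at hno
    have hA : 1 / a ^ 2 ≤ t * SS u v t := by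
      rw [div_le_iff₀ hS1] at t3
      have := h.SS_mono one_pos t2
      nlinarith
    have := h.bal_neg ht0 hη0 hη6 ha0 hA hno
    have h1 := h0 t t1
    have hS := h.SS_pos ht0
    have : (48 * Real.exp 1 * W * η + 4 ^ (n / 2 : ℝ) * Real.exp (-((16 * Y) / 16)) * (4 * Real.exp 1)
        + a * (ck n + 1)) * SS u v t ≤ (c / 4 + c / 4 + c / 4) * SS u v t := by
      rw [b3]; gcongr
    nlinarith
  obtain ⟨t₁, ht₁, h1⟩ := main u v h
  obtain ⟨t₂, ht₂, h2⟩ := main v u h.swap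
  refine ⟨max t₁ t₂, lt_max_of_lt_left ht₁, fun t ht => ?_⟩
  have ht0 : 0 < t := ht₁.trans_le ((le_max_left _ _).trans ht)
  obtain ⟨z₁, hz₁, hP₁⟩ := h1 t ((le_max_left _ _).trans ht)
  obtain ⟨z₂, hz₂, hP₂⟩ := h2 t ((le_max_right _ _).trans ht)
  have hP₂' : 0 < P (η * t) (FF (_root_.tr z₂ u) (_root_.tr z₂ v)) := by
    have e : FF (_root_.tr z₂ v) (_root_.tr z₂ u)
        = fun y => (-1) * FF (_root_.tr z₂ u) (_root_.tr z₂ v) y := by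
      funext y
      rw [FF_swap]
      ring
    rw [e, P_const_mul] at hP₂
    linarith
  have hcont : Continuous fun x => P (η * t) (FF (_root_.tr x u) (_root_.tr x v)) :=
    continuous_P_tr h.gi_FF (by positivity)
  have eB : {z : Euc n | ‖z‖ ^ 2 ≤ 16 * Y * t} = closedBall 0 (Real.sqrt (16 * Y * t)) := by
    ext z
    simp only [mem_ofPred_eq, mem_closedBall, dist_zero_right]
    rw [Real.le_sqrt (norm_nonneg _) (by positivity)]
  have hpre : IsPreconnected {z : Euc n | ‖z‖ ^ 2 ≤ 16 * Y * t} := by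
    rw [eB]; exact (convex_closedBall _ _).isPreconnected
  obtain ⟨x, hx, hx0⟩ := hpre.intermediate_value hz₁ hz₂ hcont.continuousOn
    (show (0:ℝ) ∈ Icc _ _ from ⟨hP₁.le, hP₂'.le⟩)
  exact ⟨x, hx, hx0⟩

end Sol

/-! ### Linear lower bound for the height -/

namespace Sol
variable {n : ℕ} {u v : Euc n → ℝ}

/-- Quantitative comparison of the logarithmic heights at two centres. -/
lemma log_center (h : Sol u v) {T ε D : ℝ} (hT : 0 < T) (hε : 0 < ε) (x x' : Euc n)
    (hD : ‖x' - x‖ ^ 2 ≤ D) :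
    Real.log (SS (_root_.tr x u) (_root_.tr x v) T)
      ≤ Real.log (SS (_root_.tr x' u) (_root_.tr x' v) T) + (n / 2 + 1) * ε + D / (4 * T * ε)
        + (NN (_root_.tr x' u) (_root_.tr x' v) ((1 + ε) * T)
          - NN (_root_.tr x' u) (_root_.tr x' v) T) := by
  have h1 := h.SS_comp hT (l := 1 + ε) (by linarith) x x'
  have h2 := (h.tr x').SS_le' hT (t := (1 + ε) * T) (by nlinarith)
  have p1 := (h.tr x).SS_pos hT
  have p2 := (h.tr x').SS_pos hT
  set d := NN (_root_.tr x' u) (_root_.tr x' v) ((1 + ε) * T)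
          - NN (_root_.tr x' u) (_root_.tr x' v) T with hd
  set S' := SS (_root_.tr x' u) (_root_.tr x' v) T with hS'
  have e1 : (1 + ε) * T / T = 1 + ε := by field_simp
  have e2 : 4 * T * (1 + ε - 1) = 4 * T * ε := by ring
  rw [e1] at h2
  rw [e2] at h1
  have hl : 1 + ε ≤ Real.exp ε := by linarith [Real.add_one_le_exp ε]
  have hp : (1 + ε) ^ (n / 2 : ℝ) ≤ Real.exp (n / 2 * ε) := by
    have : (1 + ε) ^ (n / 2 : ℝ) ≤ Real.exp ε ^ (n / 2 : ℝ) :=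
      Real.rpow_le_rpow (by positivity) hl (by positivity)
    rw [← Real.exp_mul] at this
    rwa [mul_comm] at this
  have h3 : SS (_root_.tr x u) (_root_.tr x v) T
      ≤ Real.exp (n / 2 * ε) * Real.exp (D / (4 * T * ε)) * (Real.exp ε * Real.exp d * S') := by
    refine h1.trans ?_
    have : ‖x' - x‖ ^ 2 / (4 * T * ε) ≤ D / (4 * T * ε) := by gcongr
    have h0 := ((h.tr x').SS_pos (t := (1 + ε) * T) (by positivity)).le
    have h4 : SS (_root_.tr x' u) (_root_.tr x' v) ((1 + ε) * T) ≤ Real.exp ε * Real.exp d * S' :=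
      h2.trans (by gcongr)
    gcongr
  have h5 := Real.log_le_log p1 h3
  rw [Real.log_mul (by positivity) (by positivity), Real.log_mul (by positivity) (by positivity),
    Real.log_mul (by positivity) (by positivity), Real.log_mul (by positivity) (by positivity),
    Real.log_exp, Real.log_exp, Real.log_exp, Real.log_exp] at h5
  linarith

/-- Summable frequency gap at balanced centres. -/
lemma exists_centers (h : Sol u v) : ∃ L > (0:ℝ), ∃ η > (0:ℝ), ∃ C > (0:ℝ), ∃ i₀ : ℕ, ∃ x : ℕ → Euc n,
    ∀ i ≥ i₀, ‖x i‖ ^ 2 ≤ L * 2 ^ i ∧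
      1 - NN (_root_.tr (x i) u) (_root_.tr (x i) v) (2 ^ i)
        ≤ C * (NN u v (η * 2 ^ (i + 1)) - NN u v (η * 2 ^ i)) + C * (1 / 2) ^ i := by
  obtain ⟨η, hη, hη6, L, hL, hb⟩ := balanced n
  obtain ⟨t₀, ht₀, hb⟩ := hb u v h
  have hck := ck_pos n
  have hcF := cF_nonneg n
  obtain ⟨i₀, hi₀⟩ := pow_unbounded_of_one_lt t₀ (by norm_num : (1:ℝ) < 2)
  have hx : ∀ i : ℕ, ∃ x : Euc n, i₀ ≤ i → (‖x‖ ^ 2 ≤ L * 2 ^ i ∧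
      P (η * 2 ^ i) (FF (_root_.tr x u) (_root_.tr x v)) = 0) := by
    intro i
    by_cases hi : i₀ ≤ i
    · obtain ⟨x, hx⟩ := hb (2 ^ i) (hi₀.le.trans (pow_le_pow_right₀ (by norm_num) hi))
      exact ⟨x, fun _ => hx⟩
    · exact ⟨0, fun h => absurd h hi⟩
  choose x hx using hx
  set K := 2 * ck n ^ 2 * Real.exp (L / η / 2) with hK
  set K' := ck n * 2 * Real.exp (L / η / 4) with hK'
  have hS0 := h.SS_pos hη
  set C := (1 + 2 * cF n) * (K * ck n) + K' / (η * SS u v η) with hC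
  have hK0 : 0 < K := by positivity
  have hK'0 : 0 < K' := by positivity
  have hC0 : 0 < C := by positivity
  refine ⟨L, hL, 2 * η, by positivity, C, hC0, i₀, x, fun i hi => ?_⟩
  obtain ⟨hx1, hx2⟩ := hx i hi
  refine ⟨hx1, ?_⟩
  have h2i : (0:ℝ) < 2 ^ i := by positivity
  have h2i1 : (1:ℝ) ≤ 2 ^ i := one_le_pow₀ (by norm_num)
  set s := η * 2 ^ i with hs
  have hs0 : 0 < s := by positivity
  have hd : ‖(0 : Euc n) - x i‖ ^ 2 ≤ L / η * s := by
    have : L / η * s = L * 2 ^ i := by rw [hs]; field_simp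
    rw [this]; simpa using hx1
  have g1 := (h.tr (x i)).gap_le hs0 hx2
  have g2 := h.kk_comp hs0 (x i) 0 hd
  have g3 := h.kk_le (t := 2 * s) (by positivity)
  have g4 := h.SS_comp_center hs0 0 (x i) (L := L / η) (by rw [norm_sub_rev]; exact hd)
  rw [tr_zero, tr_zero] at g2 g4
  have g5 : SS u v η ≤ SS u v s := h.SS_mono hη (by rw [hs]; nlinarith)
  have g6 : NN (_root_.tr (x i) u) (_root_.tr (x i) v) s
      ≤ NN (_root_.tr (x i) u) (_root_.tr (x i) v) (2 ^ i) := (h.tr (x i)).NN_mono hs0 (by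
        rw [hs]; nlinarith)
  have p1 := (h.tr (x i)).SS_pos hs0
  have g7 : 1 / (s * SS (_root_.tr (x i) u) (_root_.tr (x i) v) s)
      ≤ K' / (η * SS u v η) * (1 / 2) ^ i := by
    have e : K' / (η * SS u v η) * (1 / 2) ^ i = K' / (s * SS u v η) := by
      rw [hs, one_div, inv_pow]; field_simp
    rw [e, div_le_div_iff₀ (by positivity) (by positivity)]
    have : s * SS u v η ≤ s * (K' * SS (_root_.tr (x i) u) (_root_.tr (x i) v) s) := by
      gcongr; exact g5.trans g4
    linarith
  have e1 : 2 * (2 * s) = 2 * η * 2 ^ (i + 1) := by rw [hs]; ring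
  have e2 : 2 * s = 2 * η * 2 ^ i := by rw [hs]; ring
  rw [e1, e2] at g3
  rw [e2] at g2
  set m := NN u v (2 * η * 2 ^ (i + 1)) - NN u v (2 * η * 2 ^ i) with hm
  have hm0 : 0 ≤ m := by
    rw [hm, sub_nonneg]
    refine h.NN_mono (by positivity) ?_
    rw [pow_succ]
    nlinarith
  have g8 : s * KK (_root_.tr (x i) u) (_root_.tr (x i) v) s
      / SS (_root_.tr (x i) u) (_root_.tr (x i) v) s ≤ K * (ck n * m) := g2.trans (by gcongr)
  have g9 : (1 + 2 * cF n) * (s * KK (_root_.tr (x i) u) (_root_.tr (x i) v) s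
      / SS (_root_.tr (x i) u) (_root_.tr (x i) v) s) ≤ (1 + 2 * cF n) * (K * (ck n * m)) := by gcongr
  have g10 : (1 + 2 * cF n) * (K * (ck n * m)) ≤ C * m := by
    have : (1 + 2 * cF n) * (K * (ck n * m)) = (1 + 2 * cF n) * (K * ck n) * m := by ring
    rw [this]
    gcongr
    rw [hC]
    have : 0 ≤ K' / (η * SS u v η) := by positivity
    linarith
  have g11 : K' / (η * SS u v η) * (1 / 2) ^ i ≤ C * (1 / 2) ^ i := by
    gcongr
    rw [hC]
    have : 0 ≤ (1 + 2 * cF n) * (K * ck n) := by positivity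
    linarith
  linarith

/-- One dyadic step of the lower bound: a centre with small frequency gap at time `2 ^ i` gives almost
linear growth of the height between `4 ^ i` and `4 ^ (i + 1)`. At these times the displacement `x`, of
size `O(2 ^ (i / 2))`, costs only a summable error. -/
lemma chain_step (h : Sol u v) {L η C : ℝ} (hC : 0 < C) (i : ℕ) (x : Euc n)
    (hL : ‖x‖ ^ 2 ≤ L * 2 ^ i)
    (hδ : 1 - NN (_root_.tr x u) (_root_.tr x v) (2 ^ i)
        ≤ C * (NN u v (η * 2 ^ (i + 1)) - NN u v (η * 2 ^ i)) + C * (1 / 2) ^ i) :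
    Real.log (SS u v (4 ^ i)) + Real.log 4
      ≤ Real.log (SS u v (4 ^ (i + 1)))
        + (3 * C * (NN u v (η * 2 ^ (i + 1)) - NN u v (η * 2 ^ i))
          + (NN u v (4 ^ (i + 2)) - NN u v (4 ^ (i + 1))))
        + (3 * C + (n + 2) + L) * (3 / 4) ^ i := by
  have hL0 : 0 ≤ L := by
    have : 0 ≤ L * 2 ^ i := le_trans (by positivity) hL
    exact nonneg_of_mul_nonneg_left this (by positivity)
  set δ := 1 - NN (_root_.tr x u) (_root_.tr x v) (2 ^ i) with hδd
  have hT : (0:ℝ) < 4 ^ i := by positivity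
  have hT1 : (0:ℝ) < 4 ^ (i + 1) := by positivity
  have h24 : (2:ℝ) ^ i ≤ 4 ^ i := pow_le_pow_left₀ (by norm_num) (by norm_num) i
  set ε : ℝ := (3 / 4) ^ i with hε
  have hε0 : 0 < ε := by positivity
  have hε1 : ε ≤ 1 := pow_le_one₀ (by norm_num) (by norm_num)
  have hx := h.tr x
  have a1 := h.log_center hT hε0 0 x (D := L * 2 ^ i) (by simpa using hL)
  have a2 := h.log_center hT1 hε0 x 0 (D := L * 2 ^ i) (by simpa using hL)
  rw [tr_zero, tr_zero] at a1 a2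
  have a3 := hx.logSS_ge hT (t := 4 ^ (i + 1)) (by rw [pow_succ]; linarith)
  have e1 : Real.log (4 ^ (i + 1)) - Real.log (4 ^ i) = Real.log 4 := by
    rw [pow_succ, Real.log_mul (by positivity) (by positivity)]; ring
  rw [e1] at a3
  have m1 : 1 - δ ≤ NN (_root_.tr x u) (_root_.tr x v) (4 ^ i) := by
    rw [hδd, sub_sub_cancel]; exact hx.NN_mono (by positivity) h24
  have m2 := hx.NN_le_one (t := (1 + ε) * 4 ^ i) (by positivity)
  have m3 : NN u v ((1 + ε) * 4 ^ (i + 1)) ≤ NN u v (4 ^ (i + 2)) :=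
    h.NN_mono (by positivity) (by rw [pow_succ _ (i + 1)]; nlinarith)
  have hδ0 : 0 ≤ δ := by
    have := hx.NN_le_one (t := 2 ^ i) (by positivity)
    rw [hδd]; linarith
  have l4 : Real.log 4 ≤ 2 := by
    have : Real.log 4 = 2 * Real.log 2 := by
      rw [show (4:ℝ) = 2 ^ 2 by norm_num, Real.log_pow]; norm_num
    have := Real.log_two_lt_d9
    linarith
  have l40 : 0 ≤ Real.log 4 := Real.log_nonneg (by norm_num)
  have m4 : (1 - δ) * Real.log 4 ≤ NN (_root_.tr x u) (_root_.tr x v) (4 ^ i) * Real.log 4 := by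
    gcongr
  have m5 : δ * Real.log 4 ≤ δ * 2 := by gcongr
  have q : (2:ℝ) ^ i / 4 ^ i ≤ ε * ε := by
    have e : (2:ℝ) ^ i / 4 ^ i = (1 / 2) ^ i := by rw [← div_pow]; norm_num
    rw [e, hε, ← mul_pow]
    exact pow_le_pow_left₀ (by norm_num) (by norm_num) i
  have d1 : L * 2 ^ i / (4 * 4 ^ i * ε) ≤ L / 4 * ε := by
    rw [div_le_iff₀ hT] at q
    rw [div_le_iff₀ (by positivity)]
    have : L * 2 ^ i ≤ L * (ε * ε * 4 ^ i) := by gcongr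
    linarith
  have d2 : L * 2 ^ i / (4 * 4 ^ (i + 1) * ε) ≤ L * 2 ^ i / (4 * 4 ^ i * ε) := by
    gcongr <;> norm_num
  have d3 : C * (1 / 2) ^ i ≤ C * ε := by
    have : ((1:ℝ) / 2) ^ i ≤ ε := pow_le_pow_left₀ (by norm_num) (by norm_num) i
    gcongr
  have d4 : 0 ≤ L * ε := by positivity
  linarith

lemma lower_pow (h : Sol u v) : ∃ κ > (0:ℝ), ∃ i₀ : ℕ, ∀ i ≥ i₀, κ * 4 ^ i ≤ SS u v (4 ^ i) := by
  obtain ⟨L, hL, η, hη, C, hC, i₀, x, hx⟩ := h.exists_centers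
  set A := 3 * C + (n + 2) + L with hA
  have hA0 : 0 < A := by positivity
  set M : ℕ → ℝ := fun i => 3 * C * NN u v (η * 2 ^ i) + NN u v (4 ^ (i + 1)) with hM
  set g : ℕ → ℝ := fun i => Real.log (SS u v (4 ^ i)) - i * Real.log 4 + M i - 4 * A * (3 / 4) ^ i
    with hg
  have step : ∀ i ≥ i₀, g i ≤ g (i + 1) := by
    intro i hi
    have := h.chain_step hC i (x i) (hx i hi).1 (hx i hi).2
    simp only [hg, hM]
    push_cast
    rw [pow_succ (3 / 4 : ℝ) i]
    rw [← hA] at this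
    linarith
  have mono : ∀ j, g i₀ ≤ g (i₀ + j) := by
    intro j
    induction j with
    | zero => exact le_rfl
    | succ j ih => exact ih.trans (step _ (by omega))
  refine ⟨Real.exp (g i₀ - (3 * C + 1)), Real.exp_pos _, i₀, fun i hi => ?_⟩
  obtain ⟨j, rfl⟩ := Nat.exists_eq_add_of_le hi
  have h1 := mono j
  set i := i₀ + j
  have h2 : M i ≤ 3 * C + 1 := by
    have b1 := h.NN_le_one (t := η * 2 ^ i) (by positivity)
    have b2 := h.NN_le_one (t := 4 ^ (i + 1)) (by positivity)
    simp only [hM]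
    nlinarith
  have h3 : 0 ≤ 4 * A * (3 / 4 : ℝ) ^ i := by positivity
  have hS := h.SS_pos (t := 4 ^ i) (by positivity)
  have h4 : g i₀ - (3 * C + 1) + i * Real.log 4 ≤ Real.log (SS u v (4 ^ i)) := by
    simp only [hg] at h1 ⊢
    linarith
  have h5 := Real.exp_le_exp.2 h4
  rw [Real.exp_log hS, Real.exp_add, ← Real.log_pow, Real.exp_log (by positivity)] at h5
  exact h5

/-- The height grows at least linearly in `t`, uniformly in the centre. -/
theorem lin_lower (h : Sol u v) : ∃ c > (0:ℝ), ∀ (x : Euc n) (t : ℝ), 0 < t →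
    c * t ≤ SS (_root_.tr x u) (_root_.tr x v) t := by
  obtain ⟨κ, hκ, i₀, hl⟩ := h.lower_pow
  have hck := ck_pos n
  set Q := Real.exp 1 * (ck n * 2 * Real.exp (1 / 4)) with hQ
  have hQ0 : 0 < Q := by positivity
  refine ⟨κ / Q, by positivity, fun x t ht => ?_⟩
  obtain ⟨j, hj⟩ := pow_unbounded_of_one_lt (max t (‖x‖ ^ 2)) (by norm_num : (1:ℝ) < 4)
  set i := max i₀ j
  have hT : (0:ℝ) < 4 ^ i := by positivity
  have hjT : (4:ℝ) ^ j ≤ 4 ^ i := pow_le_pow_right₀ (by norm_num) (le_max_right _ _)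
  have h1 : t ≤ 4 ^ i := ((le_max_left _ _).trans hj.le).trans hjT
  have h2 : ‖x‖ ^ 2 ≤ 4 ^ i := ((le_max_right _ _).trans hj.le).trans hjT
  have h3 := hl i (le_max_left _ _)
  have h4 := h.SS_comp_center hT 0 x (L := 1) (by simpa using h2)
  rw [tr_zero, tr_zero] at h4
  have h5 := (h.tr x).SS_le ht h1
  set S := SS (_root_.tr x u) (_root_.tr x v) t
  have h6 : κ * 4 ^ i ≤ ck n * 2 * Real.exp (1 / 4) * (Real.exp 1 * (4 ^ i / t) * S) :=
    (h3.trans h4).trans (by gcongr)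
  have e : ck n * 2 * Real.exp (1 / 4) * (Real.exp 1 * (4 ^ i / t) * S) = Q * S / t * 4 ^ i := by
    rw [hQ]; ring
  rw [e] at h6
  have h7 := le_of_mul_le_mul_right h6 hT
  rw [le_div_iff₀ ht] at h7
  rw [div_mul_eq_mul_div, div_le_iff₀ hQ0]
  linarith

end Sol

/-! ### Distance to the interface -/

lemma P_le_of_exp_one_sided {n : ℕ} {f : Euc n → ℝ} (hf : GI f) {t s A : ℝ} (hs : 0 < s) (hst : s ≤ t)
    (hA : 0 ≤ A) (hb : ∀ y, f y ≤ A * Real.exp (‖y‖ ^ 2 / (8 * t))) :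
    P s f ≤ A * 2 ^ (n / 2 : ℝ) := by
  rw [← integral_exp_G hs, ← integral_const_mul]
  refine integral_mono (hf.integrable hs) ((integrable_exp_G hs).const_mul A) fun y => ?_
  have := (G_pos hs y).le
  simp only
  rw [← mul_assoc]
  gcongr
  refine (hb y).trans ?_
  gcongr

/-- A nondecreasing solution of `y' ≥ y³ - 1/2` on an interval of length one starts below `1`. -/
lemma le_one_of_cube_ode {y y' : ℝ → ℝ} {a : ℝ} (hd : ∀ s ∈ Icc a (a + 1), HasDerivAt y (y' s) s)
    (h0 : ∀ s ∈ Icc a (a + 1), 0 ≤ y' s) (h1 : ∀ s ∈ Icc a (a + 1), y s ^ 3 - 1 / 2 ≤ y' s) :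
    y a ≤ 1 := by
  by_contra hlt
  push Not at hlt
  have ge : ∀ s ∈ Icc a (a + 1), 1 < y s := by
    intro s hs
    refine hlt.trans_le (le_of_deriv_nonneg (f' := y') hs.1 (fun r hr => hd r ⟨hr.1, hr.2.trans hs.2⟩)
      fun r hr => h0 r ⟨hr.1, hr.2.trans hs.2⟩)
  have key := le_of_deriv_nonneg (a := a) (b := a + 1) (f := fun s => -(y s ^ 2)⁻¹ - s)
    (f' := fun s => -(-(2 * y s ^ (2 - 1) * y' s) / (y s ^ 2) ^ 2) - 1) (by linarith)
    (fun s hs => by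
      have hy : y s ^ 2 ≠ 0 := by have := ge s hs; positivity
      exact ((((hd s hs).pow 2).inv hy).neg).sub (hasDerivAt_id s))
    (fun s hs => by
      have h2 := ge s hs
      have h3 := h1 s hs
      have h4 : 0 < y s := by linarith
      have h5 : 1 ≤ y s ^ 3 := one_le_pow₀ h2.le
      have e : -(-(2 * y s ^ (2 - 1) * y' s) / (y s ^ 2) ^ 2) - 1 = (2 * y' s - y s ^ 3) / y s ^ 3 := by
        field_simp
        ring
      rw [e]
      exact div_nonneg (by linarith) (by positivity))
  have h6 : (y a ^ 2)⁻¹ < 1 := inv_lt_one_of_one_lt₀ (one_lt_pow₀ hlt (by norm_num))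
  have h7 : 0 < (y (a + 1) ^ 2)⁻¹ := by
    have := ge (a + 1) ⟨by linarith, le_rfl⟩
    positivity
  linarith

lemma cube_bound₁ {a b : ℝ} (ha : 0 ≤ a) (hb : 0 ≤ b) :
    a * b ^ 2 - b * a ^ 2 ≤ (a + b) ^ 3 := by
  have : 0 ≤ a ^ 3 + 4 * (b * a ^ 2) + 2 * (a * b ^ 2) + b ^ 3 := by positivity
  linear_combination this

lemma cube_bound₂ {a b : ℝ} (ha : 0 ≤ a) (hb : 0 ≤ b) : b ^ 3 - b * a ^ 2 ≤ (a + b) ^ 3 := by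
  have : 0 ≤ a ^ 3 + 4 * (b * a ^ 2) + 3 * (a * b ^ 2) := by positivity
  linear_combination this

namespace Sol
variable {n : ℕ} {u v : Euc n → ℝ}

/-- A bound for the height at a small time depending only on `T` (and `n`). Otherwise there would be an
earlier critical time, at which the height is controlled by the values at the centre. -/
lemma SS_le_of_center (h : Sol u v) {T : ℝ} (hT : 0 < T) (hu : u 0 ≤ T) (hv : v 0 ≤ T) :
    (2 / cM n ^ 2 / (17 * cM n ^ 2 * T ^ 2)) * SS u v (2 / cM n ^ 2 / (17 * cM n ^ 2 * T ^ 2))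
      ≤ 2 / cM n ^ 2 := by
  have hM := cM_pos n
  set q := 2 / cM n ^ 2 with hq
  have hq0 : 0 < q := by positivity
  set τ := q / (17 * cM n ^ 2 * T ^ 2) with hτ
  have hτ0 : 0 < τ := by positivity
  by_contra hlt
  push Not at hlt
  obtain ⟨s, hs0, hs1, hs2⟩ := h.exists_crit_le hq0 hτ0 hlt.le
  have h1 := h.sqrtSS_le_of_crit hs0 hs2.le
  have h2 : √(SS u v s) ≤ 4 * cM n * T := by
    refine h1.trans ?_
    have : 2 * cM n * (u 0 + v 0) ≤ 2 * cM n * (T + T) := by gcongr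
    linarith
  have h3 : SS u v s ≤ (4 * cM n * T) ^ 2 := by
    rw [← Real.sq_sqrt (h.SS_pos hs0).le]
    exact pow_le_pow_left₀ (Real.sqrt_nonneg _) h2 2
  have h4 : q ≤ τ * (4 * cM n * T) ^ 2 := by
    rw [← hs2]
    have := (h.SS_pos hs0).le
    gcongr
  have h5 : τ * (17 * cM n ^ 2 * T ^ 2) = q := by rw [hτ]; field_simp
  have h6 : 0 < τ * (cM n ^ 2 * T ^ 2) := by positivity
  nlinarith

lemma gi_v3 (h : Sol u v) : GI (fun y => v y ^ 3) := by
  have := h.cv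
  refine h.gi (A := 1) (k := 3) (by fun_prop) fun y => ?_
  have h1 := h.up y
  have h2 := h.vp y
  rw [abs_of_nonneg (by positivity), one_mul]
  gcongr
  linarith

/-- Jensen's inequality for the cube, from the tangent line at the mean. -/
lemma P_cube (h : Sol u v) {t : ℝ} (ht : 0 < t) : P t v ^ 3 ≤ P t (fun y => v y ^ 3) := by
  have h0 : 0 < P t v := P_pos h.gi_v ht h.vp
  set m := P t v with hm
  have : P t (fun y => 3 * m ^ 2 * v y - 2 * m ^ 3) ≤ P t (fun y => v y ^ 3) := by
    refine P_mono ((h.gi_v.const_mul _).sub (GI.const _)) h.gi_v3 ht fun y => ?_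
    have h2 := h.vp y
    have : 0 ≤ (v y - m) ^ 2 * (v y + 2 * m) := by positivity
    nlinarith
  rw [P_sub (h.gi_v.const_mul _) (GI.const _) ht, P_const_mul, P_const ht, ← hm] at this
  nlinarith

set_option maxHeartbeats 800000 in
/-- Near a point where both components are at most `T`, the component `u` cannot dominate `v` on a
very large ball. -/
theorem core (n : ℕ) {c T : ℝ} (hc : 0 < c) (hT : 0 < T) : ∃ R > (0:ℝ), ∀ u v : Euc n → ℝ, Sol u v →
    u 0 ≤ T → v 0 ≤ T → (∀ t > 0, c * t ≤ SS u v t) → (∀ y, ‖y‖ < R → v y ≤ u y) → False := by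
  have hM := cM_pos n
  have hB := cB_pos n
  set q := 2 / cM n ^ 2 with hq
  have hq0 : 0 < q := by positivity
  set τ := q / (17 * cM n ^ 2 * T ^ 2) with hτ
  have hτ0 : 0 < τ := by positivity
  set a := τ + 1 + ((cM n * (T + 3)) ^ 2 + 1) / c with ha
  have hX : 0 < ((cM n * (T + 3)) ^ 2 + 1) / c := by positivity
  have ha1 : 1 ≤ a := by rw [ha]; linarith
  have haτ : τ ≤ a + 1 := by rw [ha]; linarith
  have ha0 : 0 < a := by linarith
  have hac : (cM n * (T + 3)) ^ 2 < c * a := by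
    have : ((cM n * (T + 3)) ^ 2 + 1) / c ≤ a := by rw [ha]; linarith
    rw [div_le_iff₀ hc] at this
    linarith
  set b := a + 1 with hb
  have hb0 : 0 < b := by linarith
  set Λ := cB n ^ 3 * √(Real.exp 1 * (b / τ) * (q / τ)) ^ 3 with hΛ
  have hΛ0 : 0 < Λ := by positivity
  set Z := 2 * a * (Λ * 2 ^ (n / 2 : ℝ)) with hZ
  have hZ0 : 0 < Z := by positivity
  set R := √(16 * b * Z) with hR
  have hR0 : 0 < R := by positivity
  have hR2 : R ^ 2 = 16 * b * Z := Real.sq_sqrt (by positivity)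
  refine ⟨R, hR0, fun u v h hu hv hlow hdom => ?_⟩
  set κ := Λ * Real.exp (-Z) with hκ
  have hκ0 : 0 < κ := by positivity
  have hκ1 : κ * 2 ^ (n / 2 : ℝ) * (2 * a) ≤ 1 := by
    have e : κ * 2 ^ (n / 2 : ℝ) * (2 * a) = Z / Real.exp Z := by
      rw [hκ, hZ, Real.exp_neg]; ring
    rw [e, div_le_one (Real.exp_pos _)]
    linarith [Real.add_one_le_exp Z]
  have hκ2 : κ * 2 ^ (n / 2 : ℝ) ≤ 1 / 2 := by
    have : 0 < κ * 2 ^ (n / 2 : ℝ) := by positivity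
    nlinarith
  have hκ3 : κ * 2 ^ (n / 2 : ℝ) * a ≤ 1 := by
    have : 0 < κ * 2 ^ (n / 2 : ℝ) * a := by positivity
    linarith
  have hSb : SS u v b ≤ Real.exp 1 * (b / τ) * (q / τ) := by
    refine (h.SS_le hτ0 haτ).trans ?_
    have : SS u v τ ≤ q / τ := by
      rw [le_div_iff₀ hτ0, mul_comm]
      exact h.SS_le_of_center hT hu hv
    gcongr
  -- outside the ball the cube of the total density is negligible
  have far : ∀ y, R ≤ ‖y‖ → (u y + v y) ^ 3 ≤ κ * Real.exp (‖y‖ ^ 2 / (8 * b)) := by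
    intro y hy
    have h1 := h.s3_le hb0 y
    have h2 : Z ≤ ‖y‖ ^ 2 / (16 * b) := by
      rw [le_div_iff₀ (by positivity)]
      have : R ^ 2 ≤ ‖y‖ ^ 2 := by gcongr
      linarith
    have e : ‖y‖ ^ 2 / (8 * b) = ‖y‖ ^ 2 / (16 * b) + ‖y‖ ^ 2 / (16 * b) := by field_simp; ring
    calc (u y + v y) ^ 3 ≤ cB n ^ 3 * √(SS u v b) ^ 3 * Real.exp (‖y‖ ^ 2 / (16 * b)) := h1
      _ ≤ Λ * Real.exp (-Z + ‖y‖ ^ 2 / (8 * b)) := by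
          rw [hΛ]
          gcongr
          linarith
      _ = _ := by rw [Real.exp_add, hκ]; ring
  have hkE : ∀ y : Euc n, 0 ≤ κ * Real.exp (‖y‖ ^ 2 / (8 * b)) := fun y => by positivity
  -- the mean of the difference
  have gd : GI (fun y => u y * v y ^ 2 - v y * u y ^ 2) := h.gi_uv2.sub h.swap.gi_uv2
  have A1 : ∀ s ∈ Ioc 0 b, P s (fun y => u y * v y ^ 2 - v y * u y ^ 2) ≤ κ * 2 ^ (n / 2 : ℝ) := by
    intro s hs
    refine P_le_of_exp_one_sided gd hs.1 hs.2 hκ0.le fun y => ?_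
    have h1 := h.up y
    have h2 := h.vp y
    rcases lt_or_ge ‖y‖ R with hy | hy
    · have := hdom y hy
      have h3 : 0 ≤ u y * v y * (u y - v y) := mul_nonneg (by positivity) (by linarith)
      linear_combination h3 + hkE y
    · exact (cube_bound₁ h1.le h2.le).trans (far y hy)
  have A2 : P a u - P a v ≤ T + 1 := by
    have := le_of_tendsto_deriv (t := a) (a := v 0 - u 0)
      (g := fun s => κ * 2 ^ (n / 2 : ℝ) * s - (P s u - P s v))
      (g' := fun s => κ * 2 ^ (n / 2 : ℝ) * 1
        - (P s (fun y => u y * v y ^ 2) - P s (fun y => v y * u y ^ 2))) ha0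
      (fun s hs => ((hasDerivAt_id s).const_mul _).sub
        ((h.hasDerivAt_u hs.1).sub (h.swap.hasDerivAt_u hs.1)))
      (fun s hs => by
        have := A1 s ⟨hs.1, by linarith [hs.2]⟩
        rw [P_sub h.gi_uv2 h.swap.gi_uv2 hs.1] at this
        linarith)
      (by
        have t1 : Tendsto (fun s : ℝ => κ * 2 ^ (n / 2 : ℝ) * s) (𝓝[>] 0) (𝓝 0) := by
          have : Tendsto (fun s : ℝ => κ * 2 ^ (n / 2 : ℝ) * s) (𝓝 0) (𝓝 (κ * 2 ^ (n / 2 : ℝ) * 0)) :=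
            (continuous_const.mul continuous_id).tendsto 0
          rw [mul_zero] at this
          exact this.mono_left nhdsWithin_le_nhds
        have := t1.sub ((P_tendsto h.gi_u).sub (P_tendsto h.gi_v))
        rwa [show (0:ℝ) - (u 0 - v 0) = v 0 - u 0 by ring] at this)
    have := h.vp 0
    linarith
  -- the mean of the smaller component
  have A3 : P a v ≤ 1 := by
    refine le_one_of_cube_ode (y := fun s => P s v) (y' := fun s => P s (fun y => v y * u y ^ 2))
      (fun s hs => h.swap.hasDerivAt_u (by linarith [hs.1])) (fun s hs => ?_) fun s hs => ?_
    · have hs0 : 0 < s := by linarith [hs.1]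
      exact P_nonneg hs0 fun y => by have := h.vp y; positivity
    · have hs0 : 0 < s := by linarith [hs.1]
      have h1 := h.P_cube hs0
      have h2 := P_le_of_exp_one_sided (h.gi_v3.sub h.swap.gi_uv2) hs0 (t := b) hs.2 hκ0.le fun y => by
        have h1 := h.up y
        have h2 := h.vp y
        rcases lt_or_ge ‖y‖ R with hy | hy
        · have := hdom y hy
          have h3 : v y * v y ^ 2 ≤ v y * u y ^ 2 := by gcongr
          linear_combination h3 + hkE y
        · exact (cube_bound₂ h1.le h2.le).trans (far y hy)
      rw [P_sub h.gi_v3 h.swap.gi_uv2 hs0] at h2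
      linarith
  have A4 := h.sqrtSS_le ha0
  rw [P_add h.gi_u h.gi_v ha0] at A4
  have A5 : √(SS u v a) ≤ cM n * (T + 3) :=
    A4.trans (mul_le_mul_of_nonneg_left (by linarith) hM.le)
  have A6 : SS u v a ≤ (cM n * (T + 3)) ^ 2 := by
    rw [← Real.sq_sqrt (h.SS_pos ha0).le]
    exact pow_le_pow_left₀ (Real.sqrt_nonneg _) A5 2
  linarith [hlow a ha0]

/-- Every point at which both components are bounded by `T` lies near the interface. -/
theorem near_interface (h : Sol u v) {T : ℝ} (hT : 0 < T) : ∃ R > (0:ℝ), ∀ x : Euc n,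
    u x ≤ T → v x ≤ T → ∃ y, dist x y ≤ R ∧ u y = v y := by
  obtain ⟨c, hc, hlow⟩ := h.lin_lower
  obtain ⟨R, hR, hcore⟩ := core n hc hT
  refine ⟨R, hR, fun x hux hvx => ?_⟩
  by_contra hno
  push Not at hno
  have hx := h.tr x
  have hux' : _root_.tr x u 0 ≤ T := by simpa [_root_.tr] using hux
  have hvx' : _root_.tr x v 0 ≤ T := by simpa [_root_.tr] using hvx
  -- `u - v` has a sign on the ball
  have hpre : IsPreconnected (ball (0 : Euc n) R) := (convex_ball _ _).isPreconnected
  have hdist : ∀ y : Euc n, ‖y‖ < R → u (x + y) ≠ v (x + y) := fun y hy =>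
    hno (x + y) (by simpa [dist_eq_norm] using hy.le)
  have hcont : ContinuousOn (fun y => u (x + y) - v (x + y)) (ball (0 : Euc n) R) := by
    have := h.cu
    have := h.cv
    exact Continuous.continuousOn (by fun_prop)
  have sign : (∀ y : Euc n, ‖y‖ < R → v (x + y) ≤ u (x + y)) ∨
      (∀ y : Euc n, ‖y‖ < R → u (x + y) ≤ v (x + y)) := by
    by_contra hs
    push Not at hs
    obtain ⟨⟨y₁, hy₁, h₁⟩, ⟨y₂, hy₂, h₂⟩⟩ := hs
    obtain ⟨y, hy, hy0⟩ := hpre.intermediate_value (by simpa using hy₁) (by simpa using hy₂) hcont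
      (show (0:ℝ) ∈ Icc _ _ from ⟨by linarith, by linarith⟩)
    exact hdist y (by simpa using hy) (by simpa [sub_eq_zero] using hy0)
  rcases sign with hs | hs
  · exact hcore _ _ hx hux' hvx' (fun t ht => hlow x t ht) hs
  · exact hcore _ _ hx.swap hvx' hux' (fun t ht => by rw [SS_swap]; exact hlow x t ht) hs

end Sol

theorem bounded_distance_to_interface (n : ℕ) (hn : 2 ≤ n)
    (u v : Euc n → ℝ)
    (hu : ContDiff ℝ (⊤ : ℕ∞) u) (hv : ContDiff ℝ (⊤ : ℕ∞) v)
    (hupos : ∀ x, 0 < u x) (hvpos : ∀ x, 0 < v x)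
    (hequ : ∀ x, lap u x = u x * v x ^ 2)
    (heqv : ∀ x, lap v x = v x * u x ^ 2)
    (C₀ : ℝ) (hC₀ : 0 < C₀)
    (hgrowth : ∀ x, u x + v x ≤ C₀ * (1 + ‖x‖)) :
    ∀ T > (1 : ℝ), ∃ C₁ > (0 : ℝ), ∀ x₀ : Euc n, u x₀ ≤ T → v x₀ ≤ T →
      Metric.infDist x₀ {y | u y = v y} ≤ C₁ := by
  intro T hT
  have h : Sol u v := ⟨hu, hv, hupos, hvpos, hequ, heqv, C₀, hgrowth⟩
  obtain ⟨R, hR, hnear⟩ := h.near_interface (T := T) (by linarith)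
  refine ⟨R, hR, fun x hux hvx => ?_⟩
  obtain ⟨y, hy, huv⟩ := hnear x hux hvx
  exact (Metric.infDist_le_dist_of_mem (s := {y | u y = v y}) huv).trans hy
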